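/- arXiv:2601.15318 — 2 statements merged into one kernel-verified Lean document; each statement's English description precedes it below -/
import Mathlib

section
/- The total number B_n of minimal balanced collections on a set of n elements (excluding the collection {N}) has the same asymptotic growth as B_n^n, namely B_n ∼ 2^{n²−n+1}/n!, i.e., lim_{n→∞} B_n · n! / 2^{n²−n+1} = 1. -/
open Finset

/-- `lam` is a system of balancing weights for the collection `B`:
all weights are positive and `∑_{S∈B, S∋i} λ_S = 1` for every player `i`. -/
def IsBalancingWeights {n : ℕ} (B : Finset (Finset (Fin n)))
    (lam : Finset (Fin n) → ℝ) : Prop :=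
  (∀ S ∈ B, 0 < lam S) ∧ ∀ i : Fin n, ∑ S ∈ B.filter (fun S => i ∈ S), lam S = 1

/-- `B` is a balanced collection: a family of nonempty subsets of `N` admitting a
system of balancing weights. -/
def IsBalancedCollection {n : ℕ} (B : Finset (Finset (Fin n))) : Prop :=
  (∀ S ∈ B, S ≠ ∅) ∧ ∃ lam, IsBalancingWeights B lam

/-- `B` is a minimal balanced collection: balanced and no proper subfamily is balanced. -/
def IsMinimalBalancedCollection {n : ℕ} (B : Finset (Finset (Fin n))) : Prop :=
  IsBalancedCollection B ∧ ∀ B' ⊂ B, ¬ IsBalancedCollection B'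

/-- `B_n`: the total number of minimal balanced collections on `N = {1,…,n}`,
excluding the collection `{N}`. -/
noncomputable def Btot (n : ℕ) : ℕ :=
  Nat.card {B : Finset (Finset (Fin n)) //
    IsMinimalBalancedCollection B ∧ B ≠ {Finset.univ}}


section Fourier

set_option linter.unusedSectionVars false
set_option linter.unusedVariables false
variable {ι : Type*} [Fintype ι] [DecidableEq ι]

/-- Probability that a random sign combination of `x` vanishes. -/
noncomputable def rhoZ (x : ι → ℤ) : ℝ :=
  ((univ.filter (fun w : ι → ℤˣ => ∑ i, ((w i : ℤ)) * x i = 0)).card : ℝ) / 2 ^ Fintype.card ι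

variable {p : ℕ} [Fact p.Prime]

/-- real part of the standard character -/
noncomputable def chc (z : ZMod p) : ℝ := (ZMod.stdAddChar z : ℂ).re
/-- imaginary part of the standard character -/
noncomputable def chs (z : ZMod p) : ℝ := (ZMod.stdAddChar z : ℂ).im

theorem ch_sq (z : ZMod p) : chc z ^ 2 + chs z ^ 2 = 1 := by
  have h : ‖(ZMod.stdAddChar z : ℂ)‖ = 1 := AddChar.norm_apply _ _
  have h2 := Complex.sq_norm (ZMod.stdAddChar z : ℂ)
  rw [h, Complex.normSq_apply] at h2
  unfold chc chs; linarith

theorem chc_add (a b : ZMod p) : chc (a + b) = chc a * chc b - chs a * chs b := by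
  simp [chc, chs, AddChar.map_add_eq_mul]

theorem chs_add (a b : ZMod p) : chs (a + b) = chc a * chs b + chs a * chc b := by
  simp [chc, chs, AddChar.map_add_eq_mul]

theorem ch_neg (z : ZMod p) : chc (-z) = chc z ∧ chs (-z) = - chs z := by
  have h := AddChar.map_neg_eq_conj (ZMod.stdAddChar (N := p)) z
  unfold chc chs
  rw [h]; simp

theorem chc_abs_le (z : ZMod p) : |chc z| ≤ 1 := by
  have := ch_sq z
  exact abs_le_one_iff_mul_self_le_one.2 (by nlinarith [sq_nonneg (chs z)])

theorem chs_abs_le (z : ZMod p) : |chs z| ≤ 1 := by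
  have := ch_sq z
  exact abs_le_one_iff_mul_self_le_one.2 (by nlinarith [sq_nonneg (chc z)])

theorem sum_chc (b : ZMod p) : ∑ θ : ZMod p, chc (θ * b) = if b = 0 then (p : ℝ) else 0 := by
  have h := AddChar.sum_mulShift b (ZMod.isPrimitive_stdAddChar p)
  have h2 := congrArg Complex.re h
  rw [Complex.re_sum] at h2
  unfold chc
  rw [h2]
  split_ifs <;> simp [ZMod.card]

theorem sum_char (b : ZMod p) : ∑ θ : ZMod p, (ZMod.stdAddChar (θ * b) : ℂ) = if b = 0 then (p : ℂ) else 0 := by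
  have h := AddChar.sum_mulShift b (ZMod.isPrimitive_stdAddChar p)
  rw [h]
  split_ifs <;> simp [ZMod.card]

theorem chc_eq (z : ZMod p) : (ZMod.stdAddChar z : ℂ) + ZMod.stdAddChar (-z) = 2 * (chc z : ℂ) := by
  have h := AddChar.map_neg_eq_conj (ZMod.stdAddChar (N := p)) z
  rw [h, Complex.add_conj]; simp [chc]

theorem char_sum_prod (s : Finset ι) (f : ι → ZMod p) :
    (ZMod.stdAddChar (∑ i ∈ s, f i) : ℂ) = ∏ i ∈ s, (ZMod.stdAddChar (f i) : ℂ) := by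
  induction s using Finset.induction_on with
  | empty => simp
  | insert a s ha ih => rw [sum_insert ha, prod_insert ha, AddChar.map_add_eq_mul, ih]

theorem prod_expand (x : ι → ℤ) :
    ∑ θ : ZMod p, ∏ i, (2 * (chc (θ * (x i : ZMod p)))) =
      p * ((univ.filter (fun w : ι → ℤˣ => ((∑ i, ((w i : ℤ)) * x i : ℤ) : ZMod p) = 0)).card : ℝ) := by
  have key : ∑ θ : ZMod p, ∏ i, (2 * (chc (θ * (x i : ZMod p)) : ℂ)) =
      p * ((univ.filter (fun w : ι → ℤˣ => ((∑ i, ((w i : ℤ)) * x i : ℤ) : ZMod p) = 0)).card : ℂ) := by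
    have h1 : ∀ θ : ZMod p, ∏ i, (2 * (chc (θ * (x i : ZMod p)) : ℂ)) =
        ∑ w : ι → ℤˣ, (ZMod.stdAddChar (θ * ((∑ i, ((w i : ℤ)) * x i : ℤ) : ZMod p)) : ℂ) := by
      intro θ
      have h2 : ∀ i, (2 * (chc (θ * (x i : ZMod p)) : ℂ)) =
          ∑ u : ℤˣ, (ZMod.stdAddChar (θ * (((u : ℤ) * x i : ℤ) : ZMod p)) : ℂ) := by
        intro i
        rw [← chc_eq]
        have : (univ : Finset ℤˣ) = {1, -1} := by decide
        rw [this, sum_pair (by decide)]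
        simp
      simp_rw [h2]
      rw [Finset.prod_univ_sum]
      simp only [Fintype.piFinset_univ]
      refine sum_congr rfl fun w _ => ?_
      rw [Int.cast_sum, mul_sum, char_sum_prod]
    simp_rw [h1]
    rw [sum_comm]
    simp_rw [sum_char]
    rw [← sum_filter, sum_const, nsmul_eq_mul, mul_comm]
  exact_mod_cast key

/-- the quadratic phase function -/
noncomputable def phF (x : ι → ℤ) (T : Finset ι) (θ : ZMod p) : ℝ :=
  ∑ i ∈ T, chs (θ * (x i : ZMod p)) ^ 2

theorem chc_exp (z : ZMod p) : |chc z| ≤ Real.exp (-(chs z ^ 2) / 2) := by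
  have h := ch_sq z
  have h1 : chc z ^ 2 ≤ Real.exp (-(chs z ^ 2)) := by
    have := Real.add_one_le_exp (-(chs z ^ 2)); linarith
  refine abs_le_of_sq_le_sq ?_ (Real.exp_pos _).le
  rw [← Real.exp_nat_mul]
  have e : ((2 : ℕ) : ℝ) * (-(chs z ^ 2) / 2) = -(chs z ^ 2) := by push_cast; ring
  rw [e]; exact h1

theorem rho_le_sum (x : ι → ℤ) (T : Finset ι) :
    rhoZ x * p ≤ ∑ θ : ZMod p, Real.exp (-(phF x T θ) / 2) := by
  have h0 := prod_expand (p := p) x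
  have hp : ∀ θ : ZMod p, ∏ i, (2 * (chc (θ * (x i : ZMod p)))) ≤
      2 ^ Fintype.card ι * Real.exp (-(phF x T θ) / 2) := by
    intro θ
    rw [prod_mul_distrib, prod_const, card_univ]
    gcongr
    refine (le_abs_self _).trans ?_
    rw [abs_prod]
    calc ∏ i, |chc (θ * (x i : ZMod p))| ≤ ∏ i ∈ T, |chc (θ * (x i : ZMod p))| := by
          rw [← prod_sdiff (subset_univ T)]
          refine mul_le_of_le_one_left (prod_nonneg fun _ _ => abs_nonneg _) ?_
          exact prod_le_one (fun _ _ => abs_nonneg _) fun _ _ => chc_abs_le _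
      _ ≤ ∏ i ∈ T, Real.exp (-(chs (θ * (x i : ZMod p)) ^ 2) / 2) :=
          prod_le_prod (fun _ _ => abs_nonneg _) fun _ _ => chc_exp _
      _ = _ := by
          rw [← Real.exp_sum, phF]; congr 1
          rw [← sum_div, sum_neg_distrib]
  have h1 : (p : ℝ) * ((univ.filter (fun w : ι → ℤˣ => ((∑ i, ((w i : ℤ)) * x i : ℤ) : ZMod p) = 0)).card : ℝ)
      ≤ 2 ^ Fintype.card ι * ∑ θ : ZMod p, Real.exp (-(phF x T θ) / 2) := by
    rw [← h0, mul_sum]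
    exact sum_le_sum fun θ _ => hp θ
  have h2 : (univ.filter (fun w : ι → ℤˣ => ∑ i, ((w i : ℤ)) * x i = 0)).card ≤
     (univ.filter (fun w : ι → ℤˣ => ((∑ i, ((w i : ℤ)) * x i : ℤ) : ZMod p) = 0)).card := by
    apply card_le_card
    intro w hw
    simp only [mem_filter, mem_univ, true_and] at hw ⊢
    rw [hw]; simp
  have h3 : ((univ.filter (fun w : ι → ℤˣ => ∑ i, ((w i : ℤ)) * x i = 0)).card : ℝ) ≤
     ((univ.filter (fun w : ι → ℤˣ => ((∑ i, ((w i : ℤ)) * x i : ℤ) : ZMod p) = 0)).card : ℝ) := by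
    exact_mod_cast h2
  unfold rhoZ
  rw [div_mul_eq_mul_div, div_le_iff₀ (by positivity)]
  calc _ = (p : ℝ) * ((univ.filter (fun w : ι → ℤˣ => ∑ i, ((w i : ℤ)) * x i = 0)).card : ℝ) := by
        rw [mul_comm]
    _ ≤ _ := by gcongr
    _ ≤ _ := h1
    _ = _ := by ring

theorem phF_add (x : ι → ℤ) (T : Finset ι) (a b : ZMod p) (k : ℝ) (hk : 0 < k) :
    phF x T (a + b) ≤ (1 + k) * phF x T a + (1 + 1 / k) * phF x T b := by
  unfold phF
  rw [mul_sum, mul_sum, ← sum_add_distrib]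
  refine sum_le_sum fun i _ => ?_
  rw [add_mul, chs_add]
  set u := a * (x i : ZMod p)
  set v := b * (x i : ZMod p)
  have h1 : (chc u * chs v + chs u * chc v) ^ 2 ≤ (|chs u| + |chs v|) ^ 2 := by
    apply sq_le_sq'
    · have := abs_le.1 (show |chc u * chs v| ≤ |chs v| by
        rw [abs_mul]; exact mul_le_of_le_one_left (abs_nonneg _) (chc_abs_le _))
      have := abs_le.1 (show |chs u * chc v| ≤ |chs u| by
        rw [abs_mul]; exact mul_le_of_le_one_right (abs_nonneg _) (chc_abs_le _))
      linarith
    · have := abs_le.1 (show |chc u * chs v| ≤ |chs v| by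
        rw [abs_mul]; exact mul_le_of_le_one_left (abs_nonneg _) (chc_abs_le _))
      have := abs_le.1 (show |chs u * chc v| ≤ |chs u| by
        rw [abs_mul]; exact mul_le_of_le_one_right (abs_nonneg _) (chc_abs_le _))
      linarith
  refine h1.trans ?_
  rw [← sq_abs (chs u), ← sq_abs (chs v)]
  have : 0 ≤ (k * |chs u| - |chs v|) ^ 2 / k := by positivity
  have e : (1 + k) * |chs u| ^ 2 + (1 + 1 / k) * |chs v| ^ 2 - (|chs u| + |chs v|) ^ 2 =
    (k * |chs u| - |chs v|) ^ 2 / k := by field_simp; ring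
  linarith

theorem phF_zero (x : ι → ℤ) (T : Finset ι) : phF x T (0 : ZMod p) = 0 := by
  simp [phF, chs]

theorem phF_nonneg (x : ι → ℤ) (T : Finset ι) (a : ZMod p) : 0 ≤ phF x T a :=
  sum_nonneg fun _ _ => sq_nonneg _

theorem cd_step (x : ι → ℤ) (T : Finset ι) (t : ℝ) (ht : 0 ≤ t) (A : Finset (ZMod p))
    (hA : ∀ a ∈ A, phF x T a ≤ t) (h0 : A.Nonempty) (k : ℕ) :
    ∃ B : Finset (ZMod p), B.Nonempty ∧ min p ((k + 1) * (A.card - 1) + 1) ≤ B.card ∧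
      ∀ b ∈ B, phF x T b ≤ ((k : ℝ) + 1) ^ 2 * t := by
  open scoped Pointwise in
  induction k with
  | zero =>
    refine ⟨A, h0, ?_, by simpa using hA⟩
    have := h0.card_pos
    simp; right; omega
  | succ k ih =>
    obtain ⟨B, hB0, hBc, hB⟩ := ih
    refine ⟨A + B, h0.add hB0, ?_, ?_⟩
    · have := ZMod.cauchy_davenport (Fact.out : p.Prime) h0 hB0
      refine le_trans ?_ this
      have h1 := h0.card_pos
      rcases min_cases p ((k + 1) * (A.card - 1) + 1) with h | h
      · rw [h.1] at hBc
        apply le_min (min_le_left _ _)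
        refine (min_le_left _ _).trans ?_
        omega
      · rw [h.1] at hBc
        apply min_le_min le_rfl
        have : (k + 1 + 1) * (A.card - 1) = (k + 1) * (A.card - 1) + (A.card - 1) := by ring
        omega
    · intro c hc
      obtain ⟨a, ha, b, hb, rfl⟩ := mem_add.1 hc
      have h := phF_add x T a b ((k : ℝ) + 1) (by positivity)
      have h1 := hA a ha
      have h2 := hB b hb
      calc _ ≤ _ := h
        _ ≤ (1 + ((k : ℝ) + 1)) * t + (1 + 1 / ((k : ℝ) + 1)) * (((k : ℝ) + 1) ^ 2 * t) := by
            gcongr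
        _ = _ := by push_cast; field_simp; ring

theorem halasz_core (x : ι → ℤ) (T : Finset ι) (t0 : ℝ) (ht : 0 ≤ t0) (k : ℕ) (hk : 0 < k)
    (q : ℝ) (hq : ((univ.filter (fun θ : ZMod p => phF x T θ ≤ t0)).card : ℝ) ≤ q * p)
    (hlt : (univ.filter (fun θ : ZMod p => phF x T θ ≤ t0)).card < p) :
    rhoZ x ≤ q / k + 1 / p + Real.exp (-(t0 / (2 * k ^ 2))) := by
  have hp : (0 : ℝ) < p := by exact_mod_cast (Fact.out : p.Prime).pos
  have hkR : (0 : ℝ) < k := by exact_mod_cast hk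
  set t : ℝ := t0 / k ^ 2 with htdef
  have ht' : 0 ≤ t := by positivity
  set A := univ.filter (fun θ : ZMod p => phF x T θ ≤ t) with hAdef
  have hA0 : A.Nonempty := ⟨0, by simp [hAdef, phF_zero, ht']⟩
  obtain ⟨B, -, hBc, hB⟩ := cd_step x T t ht' A (fun a ha => by simpa [hAdef] using ha) hA0 (k - 1)
  have hk1 : k - 1 + 1 = k := by omega
  have hk2 : ((k - 1 : ℕ) : ℝ) + 1 = k := by exact_mod_cast hk1
  rw [hk1] at hBc
  rw [hk2] at hB
  have hBD : B ⊆ univ.filter (fun θ : ZMod p => phF x T θ ≤ t0) := by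
    intro b hb
    simp only [mem_filter, mem_univ, true_and]
    refine (hB b hb).trans_eq ?_
    rw [htdef]; field_simp
  have h1 := card_le_card hBD
  have h2 : k * (A.card - 1) + 1 ≤ (univ.filter (fun θ : ZMod p => phF x T θ ≤ t0)).card := by
    rcases min_cases p (k * (A.card - 1) + 1) with h | h
    · omega
    · omega
  have h3 : (k : ℝ) * ((A.card : ℝ) - 1) ≤ q * p := by
    have hc := hA0.card_pos
    have : ((k * (A.card - 1) + 1 : ℕ) : ℝ) ≤ q * p := le_trans (by exact_mod_cast h2) hq
    rw [Nat.cast_add, Nat.cast_mul, Nat.cast_sub (by omega)] at this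
    push_cast at this; linarith
  have h4 : (A.card : ℝ) ≤ q * p / k + 1 := by
    rw [← sub_le_iff_le_add, le_div_iff₀ hkR]; linarith
  have h5 := rho_le_sum (p := p) x T
  have h6 : ∑ θ : ZMod p, Real.exp (-(phF x T θ) / 2) ≤ A.card + p * Real.exp (-(t0 / (2 * k ^ 2))) := by
    calc ∑ θ : ZMod p, Real.exp (-(phF x T θ) / 2)
        ≤ ∑ θ : ZMod p, ((if phF x T θ ≤ t then (1:ℝ) else 0) + Real.exp (-(t0 / (2 * k ^ 2)))) := by
          refine sum_le_sum fun θ _ => ?_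
          split_ifs with h
          · have : Real.exp (-(phF x T θ) / 2) ≤ 1 := by
              rw [Real.exp_le_one_iff]; have := phF_nonneg x T θ; linarith
            have := Real.exp_pos (-(t0 / (2 * (k:ℝ) ^ 2)))
            linarith
          · rw [zero_add, Real.exp_le_exp]
            push Not at h
            have : t0 / (2 * (k:ℝ) ^ 2) = t / 2 := by rw [htdef]; field_simp
            rw [this]; linarith
      _ = _ := by
          rw [sum_add_distrib, sum_boole, sum_const, nsmul_eq_mul, card_univ, ZMod.card]
  have h7 : rhoZ x * p ≤ (q / k + 1 / p + Real.exp (-(t0 / (2 * k ^ 2)))) * p := by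
    refine h5.trans (h6.trans ?_)
    calc _ ≤ q * p / k + 1 + p * Real.exp (-(t0 / (2 * k ^ 2))) := by gcongr
      _ = _ := by field_simp
  exact le_of_mul_le_mul_right h7 hp

theorem chs_sq (z : ZMod p) : chs z ^ 2 = (1 - chc (2 * z)) / 2 := by
  rw [two_mul, chc_add]
  have := ch_sq z
  nlinarith

theorem phF_eq (x : ι → ℤ) (T : Finset ι) (θ : ZMod p) :
    phF x T θ = (T.card - ∑ i ∈ T, chc (2 * (θ * (x i : ZMod p)))) / 2 := by
  unfold phF
  simp_rw [chs_sq]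
  rw [← sum_div, sum_sub_distrib]; simp

theorem sum_chc2 (hp2 : p ≠ 2) (b : ZMod p) :
    ∑ θ : ZMod p, chc (2 * (θ * b)) = if b = 0 then (p : ℝ) else 0 := by
  have h := sum_chc (p := p) (2 * b)
  have h2 : (2 : ZMod p) ≠ 0 := by
    intro h
    have h3 : ((2 : ℕ) : ZMod p) = 0 := by exact_mod_cast h
    rw [ZMod.natCast_eq_zero_iff] at h3
    exact hp2 ((Nat.prime_dvd_prime_iff_eq Fact.out Nat.prime_two).1 h3)
  have e : ∀ θ : ZMod p, 2 * (θ * b) = θ * (2 * b) := fun θ => by ring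
  simp_rw [e]
  rw [h]
  simp [h2]

theorem int_cast_zmod_eq_zero (a : ℤ) (h : |a| < p) : ((a : ZMod p) = 0) ↔ a = 0 := by
  rw [ZMod.intCast_zmod_eq_zero_iff_dvd]
  constructor
  · intro hd
    exact Int.eq_zero_of_abs_lt_dvd hd h
  · rintro rfl; simp

theorem first_moment (hp2 : p ≠ 2) (x : ι → ℤ) (T : Finset ι) (hT : T.Nonempty)
    (hx : ∀ i ∈ T, x i ≠ 0) (hxp : ∀ i, |x i| < p) :
    (univ.filter (fun θ : ZMod p => phF x T θ ≤ (T.card : ℝ) / 4)).card < p := by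
  by_contra hcon
  have hall : ∀ θ : ZMod p, phF x T θ ≤ (T.card : ℝ) / 4 := by
    have h1 : (univ.filter (fun θ : ZMod p => phF x T θ ≤ (T.card : ℝ) / 4)) = univ := by
      apply eq_univ_of_card
      apply le_antisymm (card_le_univ _)
      rw [ZMod.card]; omega
    intro θ
    have := mem_univ θ
    rw [← h1] at this
    simpa using this
  have h2 : ∀ θ : ZMod p, (T.card : ℝ) / 2 ≤ ∑ i ∈ T, chc (2 * (θ * (x i : ZMod p))) := by
    intro θ
    have := hall θ
    rw [phF_eq] at this
    linarith
  have h3 : ∑ θ : ZMod p, ∑ i ∈ T, chc (2 * (θ * (x i : ZMod p))) = 0 := by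
    rw [sum_comm]
    refine sum_eq_zero fun i hi => ?_
    rw [sum_chc2 hp2, if_neg]
    rw [int_cast_zmod_eq_zero _ (hxp i)]
    exact hx i hi
  have h4 : ∑ θ : ZMod p, (T.card : ℝ) / 2 ≤ 0 := by
    rw [← h3]; exact sum_le_sum fun θ _ => h2 θ
  rw [sum_const, card_univ, ZMod.card, nsmul_eq_mul] at h4
  have : (0 : ℝ) < p := by exact_mod_cast (Fact.out : p.Prime).pos
  have : (0 : ℝ) < T.card := by exact_mod_cast hT.card_pos
  have : (0 : ℝ) < p * ((T.card : ℝ) / 2) := by positivity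
  linarith

theorem second_moment (hp2 : p ≠ 2) (x : ι → ℤ) (T : Finset ι) (L : ℕ)
    (hL : ∀ i ∈ T, (T.filter (fun j => x j = x i ∨ x j = - x i)).card ≤ L)
    (hxp : ∀ i, 2 * |x i| < p) (hT : T.Nonempty) :
    ((univ.filter (fun θ : ZMod p => phF x T θ ≤ (T.card : ℝ) / 4)).card : ℝ) ≤
      (4 * L / T.card) * p := by
  have hp0 : (0 : ℝ) < p := by exact_mod_cast (Fact.out : p.Prime).pos
  have hT0 : (0 : ℝ) < T.card := by exact_mod_cast hT.card_pos
  have hsum : ∑ θ : ZMod p, (∑ i ∈ T, chc (2 * (θ * (x i : ZMod p)))) ^ 2 ≤ p * (T.card * L) := by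
    have e : ∀ θ : ZMod p, (∑ i ∈ T, chc (2 * (θ * (x i : ZMod p)))) ^ 2 =
        ∑ i ∈ T, ∑ j ∈ T, (chc (2 * (θ * ((x i + x j : ℤ) : ZMod p))) +
          chc (2 * (θ * ((x i - x j : ℤ) : ZMod p)))) / 2 := by
      intro θ
      rw [sq, sum_mul_sum]
      refine sum_congr rfl fun i _ => sum_congr rfl fun j _ => ?_
      have e1 : 2 * (θ * ((x i + x j : ℤ) : ZMod p)) = 2 * (θ * (x i : ZMod p)) + 2 * (θ * (x j : ZMod p)) := by
        push_cast; ring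
      have e2 : 2 * (θ * ((x i - x j : ℤ) : ZMod p)) = 2 * (θ * (x i : ZMod p)) + -(2 * (θ * (x j : ZMod p))) := by
        push_cast; ring
      rw [e1, e2, chc_add, chc_add, (ch_neg _).1, (ch_neg _).2]
      ring
    simp_rw [e]
    rw [sum_comm]
    calc ∑ i ∈ T, ∑ θ : ZMod p, ∑ j ∈ T, (chc (2 * (θ * ((x i + x j : ℤ) : ZMod p))) +
          chc (2 * (θ * ((x i - x j : ℤ) : ZMod p)))) / 2
        ≤ ∑ i ∈ T, ((p : ℝ) * L) := by
          refine sum_le_sum fun i hi => ?_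
          rw [sum_comm]
          calc ∑ j ∈ T, ∑ θ : ZMod p, (chc (2 * (θ * ((x i + x j : ℤ) : ZMod p))) +
                  chc (2 * (θ * ((x i - x j : ℤ) : ZMod p)))) / 2
              ≤ ∑ j ∈ T, (if x j = x i ∨ x j = - x i then (p : ℝ) else 0) := by
                refine sum_le_sum fun j _ => ?_
                rw [← sum_div, sum_add_distrib, sum_chc2 hp2, sum_chc2 hp2]
                have hi' := hxp i
                have hj' := hxp j
                simp only [int_cast_zmod_eq_zero _ (show |x i + x j| < p by have := abs_add_le (x i) (x j); linarith),
                  int_cast_zmod_eq_zero _ (show |x i - x j| < p by have := abs_sub (x i) (x j); linarith)]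
                split_ifs with h1 h2 h3 h3 h2 h3 h3
                · linarith
                · exfalso; apply h3; left; omega
                · linarith
                · exfalso; apply h3; right; omega
                · linarith
                · exfalso; apply h3; left; omega
                · linarith
                · linarith
            _ = (p : ℝ) * (T.filter (fun j => x j = x i ∨ x j = - x i)).card := by
                rw [← sum_filter, sum_const, nsmul_eq_mul, mul_comm]
            _ ≤ _ := by
                gcongr
                exact hL i hi
      _ = _ := by rw [sum_const, nsmul_eq_mul]; ring
  have hlow : ((univ.filter (fun θ : ZMod p => phF x T θ ≤ (T.card : ℝ) / 4)).card : ℝ) *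
      ((T.card : ℝ) / 2) ^ 2 ≤ ∑ θ : ZMod p, (∑ i ∈ T, chc (2 * (θ * (x i : ZMod p)))) ^ 2 := by
    rw [← nsmul_eq_mul, ← sum_const]
    refine (sum_le_sum (g := fun θ => (∑ i ∈ T, chc (2 * (θ * (x i : ZMod p)))) ^ 2) ?_).trans
      (sum_le_sum_of_subset_of_nonneg (filter_subset _ _) fun _ _ _ => sq_nonneg _)
    intro θ hθ
    simp only [mem_filter, mem_univ, true_and] at hθ
    rw [phF_eq] at hθ
    have : (T.card : ℝ) / 2 ≤ ∑ i ∈ T, chc (2 * (θ * (x i : ZMod p))) := by linarith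
    have h0 : (0:ℝ) ≤ (T.card : ℝ) / 2 := by positivity
    exact pow_le_pow_left₀ h0 this 2
  have h := hlow.trans hsum
  rw [div_mul_eq_mul_div, le_div_iff₀ hT0]
  have h5 : (T.card : ℝ) / 4 * (((univ.filter (fun θ : ZMod p => phF x T θ ≤ (T.card : ℝ) / 4)).card : ℝ) * T.card)
     ≤ (T.card : ℝ) / 4 * (4 * L * p) := by
    nlinarith
  exact le_of_mul_le_mul_left h5 (by positivity)

end Fourier

section Limit
variable {ι : Type*} [Fintype ι] [DecidableEq ι]

theorem le_of_primes (a b : ℝ) (M : ℕ) (h : ∀ p : ℕ, p.Prime → M < p → a ≤ b + 1 / p) : a ≤ b := by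
  refine le_of_forall_pos_le_add fun ε hε => ?_
  obtain ⟨m, hm⟩ := exists_nat_gt (1 / ε)
  obtain ⟨p, hp, hpp⟩ := Nat.exists_infinite_primes (max m M + 1)
  have h1 := h p hpp (lt_of_le_of_lt (le_max_right m M) hp)
  have h2 : (m : ℝ) < p := by exact_mod_cast lt_of_le_of_lt (le_max_left m M) hp
  have h3 : (1 : ℝ) / p ≤ ε := by
    rw [div_le_iff₀ (by have : 0 < 1/ε := by positivity
                        linarith)]
    have : 1 / ε * ε = 1 := by field_simp
    nlinarith
  linarith

theorem rhoZ_sparse (x : ι → ℤ) (T : Finset ι) (hT : T.Nonempty) (hx : ∀ i ∈ T, x i ≠ 0)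
    (k : ℕ) (hk : 0 < k) :
    rhoZ x ≤ 1 / k + Real.exp (-((T.card : ℝ) / (8 * k ^ 2))) := by
  refine le_of_primes _ _ (2 * ∑ i, (x i).natAbs + 2) fun p hp hM => ?_
  have : Fact p.Prime := ⟨hp⟩
  have hxp : ∀ i, 2 * |x i| < p := by
    intro i
    have h1 : (x i).natAbs ≤ ∑ i, (x i).natAbs :=
      single_le_sum (f := fun i => (x i).natAbs) (fun _ _ => Nat.zero_le _) (mem_univ i)
    have h2 := Int.natCast_natAbs (x i)
    omega
  have h := halasz_core (p := p) x T ((T.card : ℝ) / 4) (by positivity) k hk 1 (by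
    rw [one_mul]
    have := first_moment (p := p) (by omega) x T hT hx (fun i => by have := hxp i; have := abs_nonneg (x i); linarith)
    exact_mod_cast this.le)
    (first_moment (by omega) x T hT hx (fun i => by have := hxp i; have := abs_nonneg (x i); linarith))
  have e : (T.card : ℝ) / 4 / (2 * (k:ℝ) ^ 2) = (T.card : ℝ) / (8 * k ^ 2) := by
    rw [div_div]; ring_nf
  rw [e] at h
  linarith

theorem rhoZ_levels (x : ι → ℤ) (T : Finset ι) (L : ℕ)
    (hL : ∀ i ∈ T, (T.filter (fun j => x j = x i ∨ x j = - x i)).card ≤ L) (hLT : 4 * L < T.card)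
    (k : ℕ) (hk : 0 < k) :
    rhoZ x ≤ 4 * L / T.card / k + Real.exp (-((T.card : ℝ) / (8 * k ^ 2))) := by
  have hT : T.Nonempty := card_pos.1 (by omega)
  have hT0 : (0 : ℝ) < T.card := by exact_mod_cast hT.card_pos
  refine le_of_primes _ _ (2 * ∑ i, (x i).natAbs + 2) fun p hp hM => ?_
  have : Fact p.Prime := ⟨hp⟩
  have hp0 : (0 : ℝ) < p := by exact_mod_cast hp.pos
  have hxp : ∀ i, 2 * |x i| < p := by
    intro i
    have h1 : (x i).natAbs ≤ ∑ i, (x i).natAbs :=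
      single_le_sum (f := fun i => (x i).natAbs) (fun _ _ => Nat.zero_le _) (mem_univ i)
    have h2 := Int.natCast_natAbs (x i)
    omega
  have h2 := second_moment (p := p) (by omega) x T L hL hxp hT
  have hlt : (univ.filter (fun θ : ZMod p => phF x T θ ≤ (T.card : ℝ) / 4)).card < p := by
    have h3 : (4 * (L : ℝ) / T.card) < 1 := by
      rw [div_lt_one hT0]; exact_mod_cast hLT
    have : ((univ.filter (fun θ : ZMod p => phF x T θ ≤ (T.card : ℝ) / 4)).card : ℝ) < p :=
      h2.trans_lt (by nlinarith)
    exact_mod_cast this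
  have h := halasz_core (p := p) x T ((T.card : ℝ) / 4) (by positivity) k hk _ h2 hlt
  have e : (T.card : ℝ) / 4 / (2 * (k:ℝ) ^ 2) = (T.card : ℝ) / (8 * k ^ 2) := by
    rw [div_div]; ring_nf
  rw [e] at h
  linarith

end Limit


section Count

theorem count_split {κ S : Type*} [Fintype κ] [DecidableEq κ] [Fintype S] [DecidableEq S]
    (Q : Finset κ) (K : ({j // j ∉ Q} → S) → Finset S) (c : ℝ)
    (hc : ∀ b, ((K b).card : ℝ) ≤ c) :
    ((univ.filter (fun W : κ → S => ∀ j ∈ Q, W j ∈ K (fun j => W j.1))).card : ℝ) ≤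
      (Fintype.card S : ℝ) ^ (Fintype.card κ - Q.card) * c ^ Q.card := by
  have h1 : (univ.filter (fun W : κ → S => ∀ j ∈ Q, W j ∈ K (fun j => W j.1))).card ≤
      ((univ : Finset ({j // j ∉ Q} → S)).sigma
        (fun b => Fintype.piFinset (fun _ : {j // j ∈ Q} => K b))).card := by
    apply card_le_card_of_injOn
      (fun W => (⟨fun j => W j.1, fun j => W j.1⟩ : Σ _ : ({j // j ∉ Q} → S), ({j // j ∈ Q} → S)))
    · intro W hW
      simp only [coe_filter, mem_univ, true_and, Set.mem_ofPred_eq] at hW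
      simp only [coe_sigma, Set.mem_sigma_iff, mem_coe, mem_univ, true_and, Fintype.mem_piFinset]
      exact fun j => hW j.1 j.2
    · intro W _ W' _ h
      simp only [Sigma.mk.injEq, heq_eq_eq] at h
      funext j
      by_cases hj : j ∈ Q
      · exact congrFun h.2 ⟨j, hj⟩
      · exact congrFun h.1 ⟨j, hj⟩
  rw [card_sigma] at h1
  have h2 : (∑ b : ({j // j ∉ Q} → S),
      ((Fintype.piFinset (fun _ : {j // j ∈ Q} => K b)).card : ℝ)) ≤
      ∑ b : ({j // j ∉ Q} → S), c ^ Q.card := by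
    refine sum_le_sum fun b _ => ?_
    rw [Fintype.card_piFinset]
    simp only [prod_const, card_univ, Fintype.card_coe, Nat.cast_pow]
    exact pow_le_pow_left₀ (Nat.cast_nonneg _) (hc b) _
  refine le_trans (by exact_mod_cast h1) (h2.trans_eq ?_)
  rw [sum_const, nsmul_eq_mul, card_univ, Fintype.card_fun]
  have : Fintype.card {j // j ∉ Q} = Fintype.card κ - Q.card := by
    rw [Fintype.card_subtype_compl]; simp
  rw [this]; push_cast; rfl

end Count

section Rat

variable {n : ℕ}

/-- pairing of a sign vector with a rational vector -/
def dotq (w : Fin n → ℤˣ) (x : Fin n → ℚ) : ℚ := ∑ i, ((w i : ℤ) : ℚ) * x i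

/-- Probability that a random sign combination of a rational vector vanishes. -/
noncomputable def rhoQ (x : Fin n → ℚ) : ℝ :=
  ((univ.filter (fun w : Fin n → ℤˣ => dotq w x = 0)).card : ℝ) / 2 ^ n

theorem rhoQ_int (x : Fin n → ℚ) : ∃ D : ℚ, D ≠ 0 ∧ ∃ y : Fin n → ℤ, (∀ i, (y i : ℚ) = D * x i) ∧
    rhoQ x = rhoZ y := by
  refine ⟨∏ i, ((x i).den : ℚ), ?_, ?_⟩
  · exact prod_ne_zero_iff.2 fun i _ => by exact_mod_cast (x i).den_nz
  · refine ⟨fun i => (∏ j ∈ univ.erase i, ((x j).den : ℤ)) * (x i).num, ?_, ?_⟩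
    · intro i
      rw [← mul_prod_erase univ _ (mem_univ i)]
      push_cast
      have := Rat.mul_den_eq_num (x i)
      rw [← this]; ring
    · have hD : (∏ i, ((x i).den : ℚ)) ≠ 0 :=
        prod_ne_zero_iff.2 fun i _ => by exact_mod_cast (x i).den_nz
      have key : ∀ i, (((∏ j ∈ univ.erase i, ((x j).den : ℤ)) * (x i).num : ℤ) : ℚ) =
          (∏ i, ((x i).den : ℚ)) * x i := by
        intro i
        rw [← mul_prod_erase univ _ (mem_univ i)]
        push_cast
        have := Rat.mul_den_eq_num (x i)
        rw [← this]; ring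
      unfold rhoQ rhoZ
      rw [Fintype.card_fin]
      congr 3
      ext w
      simp only [mem_filter, mem_univ, true_and]
      have : ((∑ i, ((w i : ℤ)) * ((∏ j ∈ univ.erase i, ((x j).den : ℤ)) * (x i).num) : ℤ) : ℚ) =
          (∏ i, ((x i).den : ℚ)) * dotq w x := by
        unfold dotq
        rw [Int.cast_sum, mul_sum]
        refine sum_congr rfl fun i _ => ?_
        rw [Int.cast_mul, key]; ring
      rw [← @Int.cast_eq_zero ℚ, this]
      simp [hD]

theorem rhoQ_nonneg (x : Fin n → ℚ) : 0 ≤ rhoQ x := by unfold rhoQ; positivity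

theorem rhoQ_half (x : Fin n → ℚ) (hx : x ≠ 0) : rhoQ x ≤ 1 / 2 := by
  obtain ⟨i, hi⟩ := Function.ne_iff.1 hx
  simp only [Pi.zero_apply] at hi
  set Z := univ.filter (fun w : Fin n → ℤˣ => dotq w x = 0) with hZ
  let φ : (Fin n → ℤˣ) → (Fin n → ℤˣ) := fun w => Function.update w i (- w i)
  have hφ : Function.Injective φ := by
    intro a b h
    funext j
    have h1 := congrFun h j
    by_cases hj : j = i
    · subst hj; simpa [φ] using h1
    · simpa [φ, hj] using h1
  have hd : Disjoint Z (Z.image φ) := by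
    rw [disjoint_left]
    intro w hw hw2
    obtain ⟨v, hv, rfl⟩ := mem_image.1 hw2
    simp only [hZ, mem_filter, mem_univ, true_and] at hw hv
    simp only [dotq, φ] at hw hv
    rw [← add_sum_erase univ _ (mem_univ i)] at hw hv
    have : ∑ k ∈ univ.erase i, (((Function.update v i (-v i) k : ℤˣ) : ℤ) : ℚ) * x k =
        ∑ k ∈ univ.erase i, ((v k : ℤ) : ℚ) * x k := by
      refine sum_congr rfl fun k hk => ?_
      rw [Function.update_of_ne (ne_of_mem_erase hk)]
    rw [this] at hw
    simp only [Function.update_self] at hw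
    push_cast at hw
    have h2 : ((v i : ℤ) : ℚ) * x i = 0 := by linarith
    rcases mul_eq_zero.1 h2 with h | h
    · exact absurd (by exact_mod_cast h) (Units.ne_zero (v i))
    · exact hi h
  have h1 := card_le_univ (Z ∪ Z.image φ)
  rw [card_union_of_disjoint hd, card_image_of_injective _ hφ, Fintype.card_fun, Fintype.card_units_int,
    Fintype.card_fin] at h1
  have h2 : (Z.card : ℝ) + Z.card ≤ 2 ^ n := by exact_mod_cast h1
  unfold rhoQ
  rw [div_le_div_iff₀ (by positivity) (by norm_num)]
  linarith

theorem exists_cols {κ : Type*} [Fintype κ] [DecidableEq κ] (U : Submodule ℚ (Fin n → ℚ)) (d : ℕ)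
    (hU : Module.finrank ℚ U ≤ d) (R0 : Finset κ) (hR0 : R0.Nonempty) (W : κ → Fin n → ℤˣ) :
    ∃ J : Fin d → κ, (∀ l, J l ∈ R0) ∧
      ∀ x ∈ U, (∀ l, dotq (W (J l)) x = 0) → ∀ j ∈ R0, dotq (W j) x = 0 := by
  obtain ⟨j0, hj0⟩ := hR0
  let φ : κ → (U →ₗ[ℚ] ℚ) := fun j =>
    { toFun := fun x => dotq (W j) x.1
      map_add' := fun x y => by simp [dotq, mul_add, sum_add_distrib]
      map_smul' := fun c x => by
        simp only [dotq, SetLike.val_smul, Pi.smul_apply, smul_eq_mul, RingHom.id_apply, mul_sum]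
        exact sum_congr rfl fun i _ => by ring }
  obtain ⟨f, hf, hspan, -⟩ := Submodule.exists_fun_fin_finrank_span_eq ℚ (φ '' (R0 : Set κ))
  have hle : Module.finrank ℚ (Submodule.span ℚ (φ '' (R0 : Set κ))) ≤ d := by
    refine (Submodule.finrank_le _).trans ?_
    have : Module.finrank ℚ (U →ₗ[ℚ] ℚ) = Module.finrank ℚ U := Subspace.dual_finrank_eq
    omega
  choose g hg using hf
  refine ⟨fun l => if h : l.1 < Module.finrank ℚ (Submodule.span ℚ (φ '' (R0 : Set κ)))
    then g ⟨l.1, h⟩ else j0, ?_, ?_⟩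
  · intro l
    dsimp only
    split_ifs with h
    · exact (hg _).1
    · exact hj0
  · intro x hx hl j hj
    have h1 : φ j ∈ Submodule.span ℚ (Set.range f) := by
      rw [hspan]; exact Submodule.subset_span ⟨j, hj, rfl⟩
    have h2 : ∀ ψ ∈ Submodule.span ℚ (Set.range f), ψ ⟨x, hx⟩ = 0 := by
      intro ψ hψ
      induction hψ using Submodule.span_induction with
      | mem ψ h =>
        obtain ⟨l, rfl⟩ := h
        have := hl ⟨l.1, l.2.trans_le hle⟩
        simp only [l.2, dif_pos] at this
        rw [← (hg l).2]
        exact this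
      | zero => rfl
      | add a b _ _ ha hb => simp [ha, hb]
      | smul c a _ ha => simp [ha]
    exact h2 _ h1

open Classical in
/-- number of matrices whose rows in `R0` have a common normal vector in `U` with small `rhoQ` -/
theorem count_U {κ : Type*} [Fintype κ] (U : Submodule ℚ (Fin n → ℚ)) (d : ℕ)
    (hU : Module.finrank ℚ U ≤ d) (R0 : Finset κ) (hR0 : R0.Nonempty) (r : ℝ) (hr0 : 0 ≤ r) (hr1 : r ≤ 1) :
    ((univ.filter (fun W : κ → Fin n → ℤˣ => ∃ x ∈ U, rhoQ x ≤ r ∧ ∀ j ∈ R0, dotq (W j) x = 0)).card : ℝ)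
      ≤ (Fintype.card κ : ℝ) ^ d * (2 ^ (n * Fintype.card κ) * r ^ (R0.card - d)) := by
  -- for each J
  have hJ : ∀ J : Fin d → κ, ((univ.filter (fun W : κ → Fin n → ℤˣ =>
      (∀ l, J l ∈ R0) ∧ (∃ x ∈ U, rhoQ x ≤ r ∧ ∀ l, dotq (W (J l)) x = 0) ∧
      ∀ x ∈ U, rhoQ x ≤ r → (∀ l, dotq (W (J l)) x = 0) → ∀ j ∈ R0, dotq (W j) x = 0)).card : ℝ) ≤
      2 ^ (n * Fintype.card κ) * r ^ (R0.card - d) := by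
    intro J
    by_cases hJ0 : ∀ l, J l ∈ R0
    swap
    · simp only [hJ0, false_and, filter_false, card_empty]
      simp only [Nat.cast_zero]
      positivity
    let Q : Finset κ := R0 \ univ.image J
    have hJQ : ∀ l, J l ∉ Q := fun l => by simp [Q]
    let P : ({j // j ∉ Q} → (Fin n → ℤˣ)) → (Fin n → ℚ) → Prop := fun b x =>
      x ∈ U ∧ rhoQ x ≤ r ∧ ∀ l, dotq (b ⟨J l, hJQ l⟩) x = 0
    let K : ({j // j ∉ Q} → (Fin n → ℤˣ)) → Finset (Fin n → ℤˣ) := fun b =>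
      if h : ∃ x, P b x then univ.filter (fun w => dotq w (Classical.choose h) = 0) else ∅
    have hK : ∀ b, ((K b).card : ℝ) ≤ r * 2 ^ n := by
      intro b
      simp only [K]
      split_ifs with h
      · have h2 := (Classical.choose_spec h).2.1
        unfold rhoQ at h2
        rw [div_le_iff₀ (by positivity)] at h2
        exact h2
      · simp; positivity
    have h1 := count_split Q K _ hK
    have hQc : R0.card - d ≤ Q.card := by
      have h3 := le_card_sdiff (univ.image J) R0
      have h4 : (univ.image J).card ≤ d := by
        simpa using card_image_le (s := (univ : Finset (Fin d))) (f := J)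
      have h5 : Q.card = #(R0 \ univ.image J) := rfl
      omega
    have hQk : Q.card ≤ Fintype.card κ := card_le_univ _
    calc _ ≤ ((univ.filter (fun W : κ → Fin n → ℤˣ => ∀ j ∈ Q, W j ∈ K (fun j => W j.1))).card : ℝ) := by
          norm_cast
          apply card_le_card
          intro W hW
          simp only [mem_filter, mem_univ, true_and] at hW ⊢
          obtain ⟨-, ⟨x, hxU, hxr, hxl⟩, hW2⟩ := hW
          intro j hj
          have hex : ∃ x, P (fun j => W j.1) x := ⟨x, hxU, hxr, hxl⟩
          simp only [K]
          rw [dif_pos hex]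
          simp only [mem_filter, mem_univ, true_and]
          have hs := Classical.choose_spec hex
          exact hW2 _ hs.1 hs.2.1 hs.2.2 j (mem_sdiff.1 hj).1
      _ ≤ _ := h1
      _ = 2 ^ (n * Fintype.card κ) * r ^ Q.card := by
          rw [Fintype.card_fun, Fintype.card_units_int, Fintype.card_fin, mul_pow]
          push_cast
          rw [← pow_mul, ← pow_mul]
          have : n * Fintype.card κ = n * (Fintype.card κ - Q.card) + n * Q.card := by
            rw [← mul_add]; congr 1; omega
          rw [this, pow_add]; ring
      _ ≤ _ := by
          gcongr ?_ * ?_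
          exact pow_le_pow_of_le_one hr0 hr1 hQc
  have hsub : (univ.filter (fun W : κ → Fin n → ℤˣ => ∃ x ∈ U, rhoQ x ≤ r ∧ ∀ j ∈ R0, dotq (W j) x = 0)) ⊆
      (univ : Finset (Fin d → κ)).biUnion (fun J => univ.filter (fun W : κ → Fin n → ℤˣ =>
      (∀ l, J l ∈ R0) ∧ (∃ x ∈ U, rhoQ x ≤ r ∧ ∀ l, dotq (W (J l)) x = 0) ∧
      ∀ x ∈ U, rhoQ x ≤ r → (∀ l, dotq (W (J l)) x = 0) → ∀ j ∈ R0, dotq (W j) x = 0)) := by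
    intro W hW
    simp only [mem_filter, mem_univ, true_and] at hW
    obtain ⟨x, hxU, hxr, hx⟩ := hW
    obtain ⟨J, hJR, hJ2⟩ := exists_cols U d hU R0 hR0 W
    simp only [mem_biUnion, mem_univ, true_and, mem_filter]
    exact ⟨J, hJR, ⟨x, hxU, hxr, fun l => hx _ (hJR l)⟩, fun x hx _ => hJ2 x hx⟩
  have h1 := (card_le_card hsub).trans card_biUnion_le
  calc _ ≤ ((∑ J : Fin d → κ, (univ.filter (fun W : κ → Fin n → ℤˣ =>
      (∀ l, J l ∈ R0) ∧ (∃ x ∈ U, rhoQ x ≤ r ∧ ∀ l, dotq (W (J l)) x = 0) ∧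
      ∀ x ∈ U, rhoQ x ≤ r → (∀ l, dotq (W (J l)) x = 0) → ∀ j ∈ R0, dotq (W j) x = 0)).card : ℕ) : ℝ) := by
        exact_mod_cast h1
    _ ≤ ∑ J : Fin d → κ, (2 ^ (n * Fintype.card κ) * r ^ (R0.card - d) : ℝ) := by
        rw [Nat.cast_sum]; exact sum_le_sum fun J _ => hJ J
    _ = _ := by
        rw [sum_const, card_univ, nsmul_eq_mul, Fintype.card_fun, Fintype.card_fin]; push_cast; ring

open Classical in
theorem count_family {κ γ : Type*} [Fintype κ] [Fintype γ] (U : γ → Submodule ℚ (Fin n → ℚ)) (d : ℕ)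
    (hU : ∀ g, Module.finrank ℚ (U g) ≤ d) (R0 : Finset κ) (hR0 : R0.Nonempty) (r : ℝ) (hr0 : 0 ≤ r) (hr1 : r ≤ 1) :
    ((univ.filter (fun W : κ → Fin n → ℤˣ => ∃ g, ∃ x ∈ U g, rhoQ x ≤ r ∧ ∀ j ∈ R0, dotq (W j) x = 0)).card : ℝ)
      ≤ Fintype.card γ * ((Fintype.card κ : ℝ) ^ d * (2 ^ (n * Fintype.card κ) * r ^ (R0.card - d))) := by
  have hsub : (univ.filter (fun W : κ → Fin n → ℤˣ => ∃ g, ∃ x ∈ U g, rhoQ x ≤ r ∧ ∀ j ∈ R0, dotq (W j) x = 0)) ⊆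
    (univ : Finset γ).biUnion (fun g => univ.filter (fun W : κ → Fin n → ℤˣ => ∃ x ∈ U g, rhoQ x ≤ r ∧ ∀ j ∈ R0, dotq (W j) x = 0)) := by
    intro W hW
    simpa using hW
  have h1 := (card_le_card hsub).trans card_biUnion_le
  calc _ ≤ ((∑ g : γ, (univ.filter (fun W : κ → Fin n → ℤˣ => ∃ x ∈ U g, rhoQ x ≤ r ∧ ∀ j ∈ R0, dotq (W j) x = 0)).card : ℕ) : ℝ) := by
        exact_mod_cast h1
    _ ≤ ∑ g : γ, ((Fintype.card κ : ℝ) ^ d * (2 ^ (n * Fintype.card κ) * r ^ (R0.card - d))) := by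
        rw [Nat.cast_sum]; exact sum_le_sum fun g _ => count_U (U g) d (hU g) R0 hR0 r hr0 hr1
    _ = _ := by
        rw [sum_const, card_univ, nsmul_eq_mul]

end Rat

theorem exists_cover {α : Type*} [Nonempty α] (V : Finset α) (m : ℕ) (h : V.card ≤ m) :
    ∃ f : Fin m → α, ∀ u ∈ V, ∃ v, f v = u := by
  classical
  refine ⟨fun v => if hv : v.1 < V.card then (V.equivFin.symm ⟨v.1, hv⟩ : α) else Classical.arbitrary α, ?_⟩
  intro u hu
  refine ⟨⟨(V.equivFin ⟨u, hu⟩).1, (V.equivFin ⟨u, hu⟩).2.trans_le h⟩, ?_⟩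
  simp

section Struct

variable {n : ℕ}

/-- subspace of vectors of a given pattern -/
noncomputable def patU {s m : ℕ} (g : (Fin s → Fin n) × (Fin n → Fin m × ℤˣ)) : Submodule ℚ (Fin n → ℚ) :=
  Submodule.span ℚ (Set.range (Sum.elim (fun l : Fin s => (Pi.single (g.1 l) 1 : Fin n → ℚ))
    (fun v : Fin m => (fun i => if (g.2 i).1 = v then (((g.2 i).2 : ℤ) : ℚ) else 0))))

theorem patU_finrank {s m : ℕ} (g : (Fin s → Fin n) × (Fin n → Fin m × ℤˣ)) :
    Module.finrank ℚ (patU g) ≤ s + m := by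
  have := finrank_range_le_card (R := ℚ) (Sum.elim (fun l : Fin s => (Pi.single (g.1 l) 1 : Fin n → ℚ))
    (fun v : Fin m => (fun i => if (g.2 i).1 = v then (((g.2 i).2 : ℤ) : ℚ) else 0)))
  exact this.trans_eq (by simp)

/-- subspace of vectors supported on given coordinates -/
noncomputable def supU {s : ℕ} (g : Fin s → Fin n) : Submodule ℚ (Fin n → ℚ) :=
  Submodule.span ℚ (Set.range (fun l : Fin s => (Pi.single (g l) 1 : Fin n → ℚ)))

theorem supU_finrank {s : ℕ} (g : Fin s → Fin n) : Module.finrank ℚ (supU g) ≤ s := by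
  have := finrank_range_le_card (R := ℚ) (fun l : Fin s => (Pi.single (g l) 1 : Fin n → ℚ))
  exact this.trans_eq (by simp)

theorem mem_supU {s : ℕ} (g : Fin s → Fin n) (x : Fin n → ℚ) (h : ∀ i, x i ≠ 0 → ∃ l, g l = i) :
    x ∈ supU g := by
  have e : x = ∑ i, x i • (Pi.single i 1 : Fin n → ℚ) := by
    funext j
    simp [Finset.sum_apply, Pi.single_apply]
  rw [e]
  refine Submodule.sum_mem _ fun i _ => ?_
  by_cases hi : x i = 0
  · rw [hi, zero_smul]; exact Submodule.zero_mem _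
  · obtain ⟨l, hl⟩ := h i hi
    refine Submodule.smul_mem _ _ (Submodule.subset_span ⟨l, ?_⟩)
    simp [hl]

theorem mem_patU {s m : ℕ} (g : (Fin s → Fin n) × (Fin n → Fin m × ℤˣ)) (x : Fin n → ℚ)
    (val : Fin m → ℚ) (E : Finset (Fin n)) (hE : ∀ i ∈ E, ∃ l, g.1 l = i)
    (h : ∀ i, i ∉ E → x i = (((g.2 i).2 : ℤ) : ℚ) * val (g.2 i).1) : x ∈ patU g := by
  have hsub : supU g.1 ≤ patU g := by
    refine Submodule.span_mono ?_
    rintro _ ⟨l, rfl⟩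
    exact ⟨Sum.inl l, rfl⟩
  set z : Fin n → ℚ := ∑ v, val v • (fun i => if (g.2 i).1 = v then (((g.2 i).2 : ℤ) : ℚ) else 0) with hz
  have hzU : z ∈ patU g := by
    refine Submodule.sum_mem _ fun v _ => Submodule.smul_mem _ _ (Submodule.subset_span ⟨Sum.inr v, rfl⟩)
  have hzi : ∀ i, z i = (((g.2 i).2 : ℤ) : ℚ) * val (g.2 i).1 := by
    intro i
    simp [hz, Finset.sum_apply, mul_comm]
  have : x - z ∈ supU g.1 := by
    apply mem_supU
    intro i hi
    by_cases hiE : i ∈ E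
    · exact hE i hiE
    · exfalso; apply hi
      rw [Pi.sub_apply, hzi, h i hiE, sub_self]
  have h2 := Submodule.add_mem _ (hsub this) hzU
  simpa using h2

theorem structure_lemma (hn : 0 < n) (x : Fin n → ℚ) (s m L k : ℕ) (hk : 0 < k) (hm : 0 < m) (hLs : 4 * L < s)
    (hmL : n ≤ m * (L + 1))
    (hr : 4 * (L : ℝ) / s / k + Real.exp (-((s : ℝ) / (8 * k ^ 2))) < rhoQ x) :
    ∃ g : (Fin s → Fin n) × (Fin n → Fin m × ℤˣ), x ∈ patU g := by
  have : Nonempty (Fin n) := ⟨⟨0, hn⟩⟩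
  set E := univ.filter (fun i : Fin n => (univ.filter (fun j => |x j| = |x i|)).card ≤ L) with hE
  have hs0 : (0 : ℝ) < s := by exact_mod_cast (by omega : 0 < s)
  have hk0 : (0 : ℝ) < k := by exact_mod_cast hk
  have hEs : E.card ≤ s := by
    by_contra hcon
    push Not at hcon
    obtain ⟨D, hD, y, hy, hrho⟩ := rhoQ_int x
    have h1 := rhoZ_levels y E L (by
      intro i hi
      refine le_trans (card_le_card ?_) (mem_filter.1 hi).2
      intro j hj
      simp only [mem_filter, mem_univ, true_and] at hj ⊢
      rw [abs_eq_abs]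
      rcases hj.2 with h | h
      · left
        have : (y j : ℚ) = y i := by exact_mod_cast h
        rw [hy, hy] at this
        exact mul_left_cancel₀ hD this
      · right
        have : (y j : ℚ) = - y i := by exact_mod_cast h
        rw [hy, hy, ← mul_neg] at this
        exact mul_left_cancel₀ hD this) (by omega) k hk
    rw [← hrho] at h1
    have hsE : (s : ℝ) ≤ E.card := by exact_mod_cast hcon.le
    have h2 : 4 * (L : ℝ) / E.card / k ≤ 4 * (L : ℝ) / s / k := by gcongr
    have h3 : Real.exp (-((E.card : ℝ) / (8 * k ^ 2))) ≤ Real.exp (-((s : ℝ) / (8 * k ^ 2))) := by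
      gcongr
    linarith
  set V := (univ.filter (fun i : Fin n => i ∉ E)).image (fun i => |x i|) with hV
  have hVm : V.card ≤ m := by
    have h1 : V.card * (L + 1) ≤ n := by
      calc V.card * (L + 1) = ∑ v ∈ V, (L + 1) := by rw [sum_const, smul_eq_mul]
        _ ≤ ∑ v ∈ V, (univ.filter (fun j : Fin n => |x j| = v)).card := by
            refine sum_le_sum fun v hv => ?_
            obtain ⟨i, hi, rfl⟩ := mem_image.1 hv
            have hi2 := (mem_filter.1 hi).2
            simp only [hE, mem_filter, mem_univ, true_and, not_le] at hi2
            exact hi2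
        _ = (V.biUnion (fun v => univ.filter (fun j : Fin n => |x j| = v))).card := by
            rw [card_biUnion]
            intro a _ b _ hab
            rw [Function.onFun, disjoint_left]
            intro j hj hj2
            simp only [mem_filter, mem_univ, true_and] at hj hj2
            exact hab (hj.symm.trans hj2)
        _ ≤ n := by simpa using card_le_univ (V.biUnion (fun v => univ.filter (fun j : Fin n => |x j| = v)))
    exact Nat.le_of_mul_le_mul_right (h1.trans hmL) (by omega)
  obtain ⟨e, he⟩ := exists_cover E s hEs
  obtain ⟨val, hval⟩ := exists_cover V m hVm
  have hch : ∀ i : Fin n, ∃ a : Fin m × ℤˣ, i ∉ E → x i = ((a.2 : ℤ) : ℚ) * val a.1 := by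
    intro i
    by_cases hi : i ∈ E
    · exact ⟨(⟨0, hm⟩, 1), fun h => absurd hi h⟩
    · obtain ⟨v, hv⟩ := hval (|x i|) (mem_image.2 ⟨i, by simp [hi], rfl⟩)
      rcases abs_choice (x i) with h | h
      · exact ⟨(v, 1), fun _ => by simp [hv, h]⟩
      · exact ⟨(v, -1), fun _ => by simp [hv, h]⟩
  choose φ hφ using hch
  exact ⟨(e, φ), mem_patU _ x val E he hφ⟩

open Classical in
theorem range_count (hn : 0 < n) (s m L k : ℕ) (hk : 0 < k) (hm : 0 < m) (hLs : 4 * L < s)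
    (hmL : n ≤ m * (L + 1)) (r r' : ℝ) (hr0 : 0 ≤ r) (hr1 : r ≤ 1) (R0 : Finset (Fin n)) (hR0 : R0.Nonempty)
    (hr : 4 * (L : ℝ) / s / k + Real.exp (-((s : ℝ) / (8 * k ^ 2))) ≤ r') :
    ((univ.filter (fun W : Fin n → Fin n → ℤˣ => ∃ x, r' < rhoQ x ∧ rhoQ x ≤ r ∧ ∀ j ∈ R0, dotq (W j) x = 0)).card : ℝ)
      ≤ ((n : ℝ) ^ s * (2 * m) ^ n) * ((n : ℝ) ^ (s + m) * (2 ^ (n * n) * r ^ (R0.card - (s + m)))) := by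
  have h := count_family (κ := Fin n) (patU (n := n) (s := s) (m := m)) (s + m) patU_finrank R0 hR0 r hr0 hr1
  have e : (Fintype.card ((Fin s → Fin n) × (Fin n → Fin m × ℤˣ)) : ℝ) = (n : ℝ) ^ s * (2 * m) ^ n := by
    simp only [Fintype.card_prod, Fintype.card_fun, Fintype.card_fin, Fintype.card_units_int]
    push_cast; ring
  rw [e, Fintype.card_fin] at h
  refine le_trans ?_ h
  norm_cast
  apply card_le_card
  intro W hW
  simp only [mem_filter, mem_univ, true_and] at hW ⊢
  obtain ⟨x, h1, h2, h3⟩ := hW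
  obtain ⟨g, hg⟩ := structure_lemma hn x s m L k hk hm hLs hmL (lt_of_le_of_lt hr h1)
  exact ⟨g, x, hg, h2, h3⟩

open Classical in
theorem sparse_count (hn : 0 < n) (s : ℕ) (R0 : Finset (Fin n)) (hR0 : R0.Nonempty) :
    ((univ.filter (fun W : Fin n → Fin n → ℤˣ => ∃ x : Fin n → ℚ, x ≠ 0 ∧ (univ.filter (fun i => x i ≠ 0)).card ≤ s ∧
        ∀ j ∈ R0, dotq (W j) x = 0)).card : ℝ)
      ≤ (n : ℝ) ^ s * ((n : ℝ) ^ s * (2 ^ (n * n) * (1 / 2) ^ (R0.card - s))) := by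
  have : Nonempty (Fin n) := ⟨⟨0, hn⟩⟩
  have h := count_family (κ := Fin n) (supU (n := n) (s := s)) s supU_finrank R0 hR0 (1 / 2) (by norm_num) (by norm_num)
  have e : (Fintype.card (Fin s → Fin n) : ℝ) = (n : ℝ) ^ s := by
    simp
  rw [e, Fintype.card_fin] at h
  refine le_trans ?_ h
  norm_cast
  apply card_le_card
  intro W hW
  simp only [mem_filter, mem_univ, true_and] at hW ⊢
  obtain ⟨x, h1, h2, h3⟩ := hW
  obtain ⟨g, hg⟩ := exists_cover _ s h2
  exact ⟨g, x, mem_supU g x fun i hi => hg i (by simpa using hi), by simpa using rhoQ_half x h1, h3⟩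

theorem rhoQ_sparse (x : Fin n → ℚ) (s k : ℕ) (hk : 0 < k) (h : s < (univ.filter (fun i => x i ≠ 0)).card) :
    rhoQ x ≤ 1 / k + Real.exp (-((s : ℝ) / (8 * k ^ 2))) := by
  have hk0 : (0 : ℝ) < k := by exact_mod_cast hk
  obtain ⟨D, hD, y, hy, hrho⟩ := rhoQ_int x
  have h1 := rhoZ_sparse y (univ.filter (fun i => x i ≠ 0)) (card_pos.1 (by omega)) (by
    intro i hi h0
    simp only [mem_filter, mem_univ, true_and] at hi
    have := hy i
    rw [h0] at this
    simp [hD] at this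
    exact hi this) k hk
  rw [← hrho] at h1
  refine h1.trans ?_
  gcongr

/-- sign vector as rational vector -/
def sv (w : Fin n → ℤˣ) : Fin n → ℚ := fun i => ((w i : ℤ) : ℚ)

theorem odlyzko (V : Submodule ℚ (Fin n → ℚ)) (d : ℕ) (hd : Module.finrank ℚ V ≤ d) (hn : 0 < n)
    [DecidablePred fun w : Fin n → ℤˣ => sv w ∈ V] :
    (univ.filter (fun w : Fin n → ℤˣ => sv w ∈ V)).card ≤ 2 ^ d := by
  let φ : Fin n → (V →ₗ[ℚ] ℚ) := fun j => (LinearMap.proj j).comp V.subtype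
  obtain ⟨f, hf, hspan, -⟩ := Submodule.exists_fun_fin_finrank_span_eq ℚ (Set.range φ)
  have hle : Module.finrank ℚ (Submodule.span ℚ (Set.range φ)) ≤ d := by
    refine (Submodule.finrank_le _).trans ?_
    have : Module.finrank ℚ (V →ₗ[ℚ] ℚ) = Module.finrank ℚ V := Subspace.dual_finrank_eq
    omega
  choose g hg using hf
  have key : ∀ x (hx : x ∈ V), (∀ l, x (g l) = 0) → x = 0 := by
    intro x hx hl
    funext j
    have h1 : φ j ∈ Submodule.span ℚ (Set.range f) := by
      rw [hspan]; exact Submodule.subset_span ⟨j, rfl⟩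
    have h2 : ∀ ψ ∈ Submodule.span ℚ (Set.range f), ψ ⟨x, hx⟩ = 0 := by
      intro ψ hψ
      induction hψ using Submodule.span_induction with
      | mem ψ h =>
        obtain ⟨l, rfl⟩ := h
        rw [← hg l]
        exact hl l
      | zero => rfl
      | add a b _ _ ha hb => simp [ha, hb]
      | smul c a _ ha => simp [ha]
    exact h2 _ h1
  have h3 : (univ.filter (fun w : Fin n → ℤˣ => sv w ∈ V)).card ≤ (univ : Finset (Fin (Module.finrank ℚ (Submodule.span ℚ (Set.range φ))) → ℤˣ)).card := by
    apply card_le_card_of_injOn (fun w l => w (g l)) (fun _ _ => mem_coe.2 (mem_univ _))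
    intro w hw w' hw' h
    simp only [coe_filter, mem_univ, true_and, Set.mem_ofPred_eq] at hw hw'
    have h4 := key _ (V.sub_mem hw hw') (fun l => by
      have := congrFun h l
      simp only at this
      simp [sv, this])
    funext i
    have h5 := congrFun h4 i
    simp only [sv, Pi.sub_apply, Pi.zero_apply, sub_eq_zero] at h5
    exact Units.ext (by exact_mod_cast h5)
  refine h3.trans ?_
  simp only [card_univ, Fintype.card_fun, Fintype.card_units_int, Fintype.card_fin]
  exact Nat.pow_le_pow_right (by norm_num) hle

theorem dotq_eq (w : Fin n → ℤˣ) (x : Fin n → ℚ) : dotq w x = sv w ⬝ᵥ x := rfl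

theorem exists_normal (j : Fin n) (W : Fin n → Fin n → ℤˣ) :
    ∃ x : Fin n → ℚ, x ≠ 0 ∧ ∀ i < j, dotq (W i) x = 0 := by
  let M : Matrix (Fin n) (Fin n) ℚ := fun i => if i < j then sv (W i) else 0
  have : M.det = 0 := Matrix.det_eq_zero_of_row_eq_zero j (by simp [M])
  obtain ⟨x, hx, h⟩ := Matrix.exists_mulVec_eq_zero_iff.2 this
  refine ⟨x, hx, fun i hi => ?_⟩
  have := congrFun h i
  simpa [M, Matrix.mulVec, hi, dotq_eq] using this

theorem dep_exists (W : Fin n → Fin n → ℤˣ) (h : ¬ LinearIndependent ℚ (fun j => sv (W j))) :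
    ∃ j, sv (W j) ∈ Submodule.span ℚ ((fun i => sv (W i)) '' {i | i < j}) := by
  rw [Fintype.not_linearIndependent_iff] at h
  obtain ⟨g, hg, i, hi⟩ := h
  obtain ⟨j, hj, hmax⟩ := (univ.filter (fun i => g i ≠ 0)).exists_max_image id ⟨i, by simp [hi]⟩
  simp only [mem_filter, mem_univ, true_and, id] at hj hmax
  refine ⟨j, ?_⟩
  have h1 : sv (W j) = - ∑ i ∈ univ.erase j, ((g j)⁻¹ * g i) • sv (W i) := by
    rw [← add_sum_erase univ _ (mem_univ j)] at hg
    have h2 := congrArg (fun v => (g j)⁻¹ • v) hg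
    simp only [smul_add, smul_sum, smul_smul, smul_zero, inv_mul_cancel₀ hj, one_smul] at h2
    exact eq_neg_of_add_eq_zero_left h2
  rw [h1]
  refine Submodule.neg_mem _ (Submodule.sum_mem _ fun i hi => ?_)
  by_cases hgi : g i = 0
  · rw [hgi, mul_zero, zero_smul]; exact Submodule.zero_mem _
  · refine Submodule.smul_mem _ _ (Submodule.subset_span ⟨i, ?_, rfl⟩)
    exact lt_of_le_of_ne (hmax i hgi) (ne_of_mem_erase hi)

end Struct

section Sing
variable {n : ℕ}

open Classical in
/-- set of singular sign matrices -/
noncomputable def singS (n : ℕ) : Finset (Fin n → Fin n → ℤˣ) :=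
  univ.filter (fun W => ¬ LinearIndependent ℚ (fun j => sv (W j)))

open Classical in
noncomputable def badS (n : ℕ) (R0 : Finset (Fin n)) (r : ℝ) : Finset (Fin n → Fin n → ℤˣ) :=
  univ.filter (fun W => ∃ x : Fin n → ℚ, x ≠ 0 ∧ r < rhoQ x ∧ ∀ j ∈ R0, dotq (W j) x = 0)

open Classical in
theorem early_count (hn : 0 < n) (j : Fin n) :
    ((univ.filter (fun W : Fin n → Fin n → ℤˣ =>
      sv (W j) ∈ Submodule.span ℚ ((fun i => sv (W i)) '' {i | i < j}))).card : ℝ) ≤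
      2 ^ (n * (n - 1)) * 2 ^ j.1 := by
  let K : ({i // i ∉ ({j} : Finset (Fin n))} → (Fin n → ℤˣ)) → Finset (Fin n → ℤˣ) := fun b =>
    univ.filter (fun w => sv w ∈ Submodule.span ℚ ((fun i => sv (b i)) '' {i | i.1 < j}))
  have hK : ∀ b, ((K b).card : ℝ) ≤ 2 ^ j.1 := by
    intro b
    have h := odlyzko (Submodule.span ℚ ((fun i => sv (b i)) '' {i | i.1 < j})) j.1 (by
      have hfin : ({i : {i // i ∉ ({j} : Finset (Fin n))} | i.1 < j}).Finite := Set.toFinite _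
      have h1 := finrank_span_le_card (R := ℚ) ((fun i => sv (b i)) '' {i | i.1 < j})
      refine h1.trans ?_
      rw [← Set.ncard_eq_toFinset_card']
      refine (Set.ncard_image_le hfin).trans ?_
      rw [← Set.ncard_image_of_injective _ Subtype.val_injective]
      have h2 : (Subtype.val '' {i : {i // i ∉ ({j} : Finset (Fin n))} | i.1 < j}) ⊆ ((Finset.Iio j : Finset (Fin n)) : Set (Fin n)) := by
        rintro _ ⟨i, hi, rfl⟩
        simpa using hi
      refine (Set.ncard_le_ncard h2).trans ?_
      rw [Set.ncard_coe_finset]; simp) hn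
    exact_mod_cast h
  have h := count_split {j} K _ hK
  simp only [card_singleton, pow_one, Fintype.card_fun, Fintype.card_units_int, Fintype.card_fin] at h
  push_cast at h
  rw [← pow_mul] at h
  refine le_trans ?_ h
  norm_cast
  apply card_le_card
  intro W hW
  simp only [mem_filter, mem_univ, true_and, mem_singleton, forall_eq, K] at hW ⊢
  convert hW using 3
  ext v
  constructor
  · rintro ⟨i, hi, rfl⟩
    exact ⟨i.1, hi, rfl⟩
  · rintro ⟨i, hi, rfl⟩
    exact ⟨⟨i, by simpa using (ne_of_lt hi)⟩, hi, rfl⟩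

theorem dot_span (W : Fin n → Fin n → ℤˣ) (j : Fin n) (x : Fin n → ℚ) (hx : ∀ i < j, dotq (W i) x = 0)
    (h : sv (W j) ∈ Submodule.span ℚ ((fun i => sv (W i)) '' {i | i < j})) : dotq (W j) x = 0 := by
  rw [dotq_eq]
  generalize sv (W j) = v at h ⊢
  induction h using Submodule.span_induction with
  | mem v h => obtain ⟨i, hi, rfl⟩ := h; exact hx i hi
  | zero => simp
  | add a b _ _ ha hb => rw [add_dotProduct, ha, hb, add_zero]
  | smul c a _ ha => rw [smul_dotProduct, ha, smul_zero]

open Classical in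
theorem late_count (hn : 0 < n) (j : Fin n) (r : ℝ) (hr : 0 ≤ r) :
    ((univ.filter (fun W : Fin n → Fin n → ℤˣ =>
      sv (W j) ∈ Submodule.span ℚ ((fun i => sv (W i)) '' {i | i < j}) ∧
      ∀ x : Fin n → ℚ, x ≠ 0 → (∀ i < j, dotq (W i) x = 0) → rhoQ x ≤ r)).card : ℝ) ≤
      2 ^ (n * n) * r := by
  let P : ({i // i ∉ ({j} : Finset (Fin n))} → (Fin n → ℤˣ)) → (Fin n → ℚ) → Prop := fun b x =>
    x ≠ 0 ∧ (∀ i, i.1 < j → dotq (b i) x = 0) ∧ rhoQ x ≤ r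
  let K : ({i // i ∉ ({j} : Finset (Fin n))} → (Fin n → ℤˣ)) → Finset (Fin n → ℤˣ) := fun b =>
    if h : ∃ x, P b x then univ.filter (fun w => dotq w (Classical.choose h) = 0) else ∅
  have hK : ∀ b, ((K b).card : ℝ) ≤ r * 2 ^ n := by
    intro b
    simp only [K]
    split_ifs with h
    · have h2 := (Classical.choose_spec h).2.2
      unfold rhoQ at h2
      rw [div_le_iff₀ (by positivity)] at h2
      exact h2
    · simp; positivity
  have h := count_split {j} K _ hK
  simp only [card_singleton, pow_one, Fintype.card_fun, Fintype.card_units_int, Fintype.card_fin] at h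
  push_cast at h
  rw [← pow_mul] at h
  have e : (2 : ℝ) ^ (n * (n - 1)) * (r * 2 ^ n) = 2 ^ (n * n) * r := by
    have : n * n = n * (n - 1) + n := by
      obtain ⟨k, rfl⟩ : ∃ k, n = k + 1 := ⟨n - 1, by omega⟩
      simp; ring
    rw [this, pow_add]; ring
  rw [e] at h
  refine le_trans ?_ h
  norm_cast
  apply card_le_card
  intro W hW
  simp only [mem_filter, mem_univ, true_and, mem_singleton, forall_eq] at hW ⊢
  obtain ⟨x, hx0, hx⟩ := exists_normal j W
  have hex : ∃ x, P (fun j => W j.1) x := ⟨x, hx0, fun i hi => hx i.1 hi, hW.2 x hx0 hx⟩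
  simp only [K]
  rw [dif_pos hex]
  simp only [mem_filter, mem_univ, true_and]
  have hs := Classical.choose_spec hex
  exact dot_span W j _ (fun i hi => hs.2.1 ⟨i, by simpa using (ne_of_lt hi)⟩ hi) hW.1

theorem sing_count (hn : 0 < n) (t : ℕ) (ht : t ≤ n) (r : ℝ) (hr : 0 ≤ r) :
    ((singS n).card : ℝ) ≤ 2 ^ (n * n) * (1 / 2) ^ t + t * (2 ^ (n * n) * r) +
      (badS n (univ.filter (fun i => i.1 < n - t)) r).card := by
  classical
  let A : Fin n → Finset (Fin n → Fin n → ℤˣ) := fun j => univ.filter (fun W : Fin n → Fin n → ℤˣ =>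
      sv (W j) ∈ Submodule.span ℚ ((fun i => sv (W i)) '' {i | i < j}))
  let B : Fin n → Finset (Fin n → Fin n → ℤˣ) := fun j => univ.filter (fun W : Fin n → Fin n → ℤˣ =>
      sv (W j) ∈ Submodule.span ℚ ((fun i => sv (W i)) '' {i | i < j}) ∧
      ∀ x : Fin n → ℚ, x ≠ 0 → (∀ i < j, dotq (W i) x = 0) → rhoQ x ≤ r)
  let I1 : Finset (Fin n) := univ.filter (fun i => i.1 < n - t)
  let I2 : Finset (Fin n) := univ.filter (fun i => ¬ i.1 < n - t)
  have hsub : singS n ⊆ I1.biUnion A ∪ I2.biUnion B ∪ badS n I1 r := by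
    intro W hW
    simp only [singS, mem_filter, mem_univ, true_and] at hW
    obtain ⟨j, hj⟩ := dep_exists W hW
    by_cases h1 : j.1 < n - t
    · apply mem_union_left; apply mem_union_left
      exact mem_biUnion.2 ⟨j, by simp [I1, h1], by simpa [A] using hj⟩
    · by_cases h2 : ∀ x : Fin n → ℚ, x ≠ 0 → (∀ i < j, dotq (W i) x = 0) → rhoQ x ≤ r
      · apply mem_union_left; apply mem_union_right
        exact mem_biUnion.2 ⟨j, by simp only [I2, mem_filter, mem_univ, true_and]; exact h1, by
          simp only [B, mem_filter, mem_univ, true_and]; exact ⟨hj, h2⟩⟩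
      · push Not at h2
        obtain ⟨x, hx0, hx, hxr⟩ := h2
        apply mem_union_right
        simp only [badS, mem_filter, mem_univ, true_and]
        refine ⟨x, hx0, hxr, fun i hi => hx i ?_⟩
        simp only [I1, mem_filter, mem_univ, true_and] at hi
        exact Fin.lt_def.2 (by omega)
  have h1 := (card_le_card hsub).trans ((card_union_le _ _).trans
    (Nat.add_le_add_right ((card_union_le _ _).trans (Nat.add_le_add card_biUnion_le card_biUnion_le)) _))
  have h2 : ((singS n).card : ℝ) ≤ (∑ j ∈ I1, ((A j).card : ℝ)) + (∑ j ∈ I2, ((B j).card : ℝ)) + (badS n I1 r).card := by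
    exact_mod_cast h1
  refine h2.trans ?_
  gcongr ?_ + ?_ + _
  · calc ∑ j ∈ I1, ((A j).card : ℝ) ≤ ∑ j ∈ I1, (2 : ℝ) ^ (n * (n - 1)) * 2 ^ j.1 :=
          sum_le_sum fun j _ => early_count hn j
      _ = ∑ j ∈ I1.image (fun j : Fin n => j.1), (2 : ℝ) ^ (n * (n - 1)) * 2 ^ j := by
          rw [sum_image (fun a _ b _ h => Fin.ext h)]
      _ ≤ ∑ j ∈ range (n - t), (2 : ℝ) ^ (n * (n - 1)) * 2 ^ j := by
          refine sum_le_sum_of_subset_of_nonneg ?_ fun _ _ _ => by positivity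
          intro j hj
          obtain ⟨i, hi, rfl⟩ := mem_image.1 hj
          simpa [I1] using hi
      _ ≤ (2 : ℝ) ^ (n * (n - 1)) * 2 ^ (n - t) := by
          rw [← mul_sum, geom_sum_eq (by norm_num)]
          gcongr
          norm_num
      _ = _ := by
          have : n * n = n * (n - 1) + (n - t) + t := by
            obtain ⟨k, rfl⟩ : ∃ k, n = k + 1 := ⟨n - 1, by omega⟩
            have : (k + 1) * (k + 1) = (k + 1) * (k + 1 - 1) + (k + 1) := by simp; ring
            omega
          rw [this, pow_add _ _ t, pow_add, mul_assoc _ ((2:ℝ)^t), ← mul_pow]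
          norm_num
  · calc ∑ j ∈ I2, ((B j).card : ℝ) ≤ ∑ j ∈ I2, (2 : ℝ) ^ (n * n) * r :=
          sum_le_sum fun j _ => late_count hn j r hr
      _ = I2.card * ((2 : ℝ) ^ (n * n) * r) := by rw [sum_const, nsmul_eq_mul]
      _ ≤ _ := by
          have hc : I2.card ≤ t := by
            have : (I2.image (fun j : Fin n => j.1)) ⊆ Finset.Ico (n - t) n := by
              intro j hj
              obtain ⟨i, hi, rfl⟩ := mem_image.1 hj
              simp only [I2, mem_filter, mem_univ, true_and] at hi
              simp only [Finset.mem_Ico]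
              have := i.2
              omega
            have h3 := card_le_card this
            rw [card_image_of_injective _ Fin.val_injective, Nat.card_Ico] at h3
            omega
          gcongr

theorem bad_count (hn : 0 < n) (R0 : Finset (Fin n)) (hR0 : R0.Nonempty) (s1 k s m1 L1 m2 L2 : ℕ) (r1 r2 r3 : ℝ)
    (hk : 0 < k) (hr1 : 1 / k + Real.exp (-((s1 : ℝ) / (8 * k ^ 2))) ≤ r1)
    (h10 : 0 ≤ r1) (h11 : r1 ≤ 1) (h20 : 0 ≤ r2) (h21 : r2 ≤ 1)
    (hm1 : 0 < m1) (hLs1 : 4 * L1 < s) (hmL1 : n ≤ m1 * (L1 + 1))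
    (hr2 : 4 * (L1 : ℝ) / s / k + Real.exp (-((s : ℝ) / (8 * k ^ 2))) ≤ r2)
    (hm2 : 0 < m2) (hLs2 : 4 * L2 < s) (hmL2 : n ≤ m2 * (L2 + 1))
    (hr3 : 4 * (L2 : ℝ) / s / k + Real.exp (-((s : ℝ) / (8 * k ^ 2))) ≤ r3) :
    ((badS n R0 r3).card : ℝ) ≤
      (n : ℝ) ^ s1 * ((n : ℝ) ^ s1 * (2 ^ (n * n) * (1 / 2) ^ (R0.card - s1))) +
      ((n : ℝ) ^ s * (2 * m1) ^ n) * ((n : ℝ) ^ (s + m1) * (2 ^ (n * n) * r1 ^ (R0.card - (s + m1)))) +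
      ((n : ℝ) ^ s * (2 * m2) ^ n) * ((n : ℝ) ^ (s + m2) * (2 ^ (n * n) * r2 ^ (R0.card - (s + m2)))) := by
  classical
  have c1 := sparse_count hn s1 R0 hR0
  have c2 := range_count hn s m1 L1 k hk hm1 hLs1 hmL1 r1 r2 h10 h11 R0 hR0 hr2
  have c3 := range_count hn s m2 L2 k hk hm2 hLs2 hmL2 r2 r3 h20 h21 R0 hR0 hr3
  refine le_trans ?_ (add_le_add (add_le_add c1 c2) c3)
  norm_cast
  refine le_trans (card_le_card ?_) ((card_union_le _ _).trans (Nat.add_le_add_right (card_union_le _ _) _))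
  intro W hW
  simp only [badS, mem_filter, mem_univ, true_and] at hW
  obtain ⟨x, hx0, hxr, hx⟩ := hW
  simp only [mem_union, mem_filter, mem_univ, true_and]
  by_cases hsp : (univ.filter (fun i => x i ≠ 0)).card ≤ s1
  · exact Or.inl (Or.inl ⟨x, hx0, by convert hsp, hx⟩)
  · have h1 := (rhoQ_sparse x s1 k hk (by push Not at hsp; convert hsp)).trans hr1
    by_cases h2 : rhoQ x ≤ r2
    · exact Or.inr ⟨x, hxr, h2, hx⟩
    · exact Or.inl (Or.inr ⟨x, not_le.1 h2, h1, hx⟩)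

end Sing

theorem range_term (n K s m a t : ℕ) (X : ℝ) (hX : 0 ≤ X) (hn2 : n ≤ (2 * K) ^ 20) (hK : 6400 ≤ K) (ha2 : 2 ≤ a)
    (ha : a ≤ 15) (hm : m = 800 * K ^ (a - 2)) (h : 55 * s + 35 * m + 15 * t ≤ n) :
    ((n : ℝ) ^ s * (2 * m) ^ n) * ((n : ℝ) ^ (s + m) * (X * (1 / (K : ℝ) ^ a) ^ (n - t - (s + m)))) ≤
      X * (1 / 2) ^ n := by
  have key : n ^ s * (2 * m) ^ n * n ^ (s + m) * 2 ^ n ≤ (K ^ a) ^ (n - t - (s + m)) := by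
    calc n ^ s * (2 * m) ^ n * n ^ (s + m) * 2 ^ n = n ^ (2 * s + m) * (2 * m) ^ n * 2 ^ n := by ring
      _ ≤ ((2 * K) ^ 20) ^ (2 * s + m) * (2 * m) ^ n * 2 ^ n := by gcongr
      _ = 2 ^ (20 * (2 * s + m)) * K ^ (20 * (2 * s + m)) * (1600 ^ n * K ^ ((a - 2) * n)) * 2 ^ n := by
          rw [hm, show 2 * (800 * K ^ (a - 2)) = 1600 * K ^ (a - 2) by ring, mul_pow 1600, ← pow_mul K (a - 2),
            ← pow_mul, mul_pow 2 K]
      _ ≤ 2 ^ n * K ^ (20 * (2 * s + m)) * (1600 ^ n * K ^ ((a - 2) * n)) * 2 ^ n := by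
          gcongr
          · norm_num
          · omega
      _ = 6400 ^ n * K ^ (20 * (2 * s + m) + (a - 2) * n) := by
          rw [pow_add, show (6400 : ℕ) = 2 * 1600 * 2 by norm_num, mul_pow, mul_pow]; ring
      _ ≤ K ^ n * K ^ (20 * (2 * s + m) + (a - 2) * n) := by gcongr
      _ = K ^ (n + (20 * (2 * s + m) + (a - 2) * n)) := by rw [pow_add K n]
      _ ≤ K ^ (a * (n - t - (s + m))) := by
          apply Nat.pow_le_pow_right (by omega)
          obtain ⟨d, hd⟩ : ∃ d, n = t + (s + m) + d := ⟨n - t - (s + m), by omega⟩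
          obtain ⟨b, rfl⟩ : ∃ b, a = b + 2 := ⟨a - 2, by omega⟩
          have h1 : n - t - (s + m) = d := by omega
          rw [h1]
          simp only [Nat.add_sub_cancel]
          have h2 : b * (t + (s + m)) ≤ 13 * (t + (s + m)) := Nat.mul_le_mul_right _ (by omega)
          have h3 : b * n = b * (t + (s + m)) + b * d := by rw [hd]; ring
          have h4 : (b + 2) * d = b * d + 2 * d := by ring
          omega
      _ = _ := by rw [pow_mul]
  have key' : (n : ℝ) ^ s * (2 * m) ^ n * n ^ (s + m) * 2 ^ n ≤ ((K : ℝ) ^ a) ^ (n - t - (s + m)) := by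
    exact_mod_cast key
  have hKp : (0 : ℝ) < ((K : ℝ) ^ a) ^ (n - t - (s + m)) := by
    have : (0 : ℝ) < K := by exact_mod_cast (by omega : 0 < K)
    positivity
  rw [one_div_pow, one_div_pow]
  have : (n : ℝ) ^ s * (2 * m) ^ n * n ^ (s + m) * (1 / ((K : ℝ) ^ a) ^ (n - t - (s + m))) ≤ 1 / 2 ^ n := by
    rw [mul_one_div, div_le_div_iff₀ hKp (by positivity), one_mul]
    exact key'
  calc _ = X * ((n : ℝ) ^ s * (2 * m) ^ n * n ^ (s + m) * (1 / ((K : ℝ) ^ a) ^ (n - t - (s + m)))) := by ring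
    _ ≤ _ := by gcongr

theorem sparse_term (n K : ℕ) (X : ℝ) (hX : 0 ≤ X) (hn1 : K ^ 20 ≤ n) (hn2 : n ≤ (2 * K) ^ 20) (hK : 4 ≤ K)
    (hE : (2 * K) ^ 40 * 8 ≤ 2 ^ K) :
    (n : ℝ) ^ (K ^ 19) * ((n : ℝ) ^ (K ^ 19) * (X * (1 / 2) ^ (n - K - K ^ 19))) ≤ X * (1 / 2) ^ K := by
  have hK1 : K ≤ K ^ 19 := Nat.le_self_pow (by norm_num) K
  have hK20 : K ^ 20 = K * K ^ 19 := by ring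
  have hK4 : 4 * K ^ 19 ≤ K * K ^ 19 := Nat.mul_le_mul_right _ hK
  have key : n ^ (K ^ 19) * n ^ (K ^ 19) * 2 ^ K ≤ 2 ^ (n - K - K ^ 19) := by
    have h1 : (n ^ (K ^ 19) * n ^ (K ^ 19) * 2 ^ K) * 2 ^ (K + K ^ 19) ≤ 2 ^ (n - K - K ^ 19) * 2 ^ (K + K ^ 19) := by
      calc (n ^ (K ^ 19) * n ^ (K ^ 19) * 2 ^ K) * 2 ^ (K + K ^ 19)
          ≤ (((2 * K) ^ 20) ^ (K ^ 19) * ((2 * K) ^ 20) ^ (K ^ 19) * 2 ^ (K ^ 19)) * 2 ^ (K ^ 19 + K ^ 19) := by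
            gcongr <;> norm_num
        _ = ((2 * K) ^ 40 * 8) ^ (K ^ 19) := by
            generalize K ^ 19 = e
            rw [show (2 * K) ^ 40 * 8 = ((2 * K) ^ 20 * (2 * K) ^ 20 * 2) * (2 * 2) by ring, mul_pow _ (2 * 2) e,
              mul_pow _ 2 e, mul_pow ((2 * K) ^ 20) _ e, mul_pow 2 2 e, pow_add 2 e e]
        _ ≤ (2 ^ K) ^ (K ^ 19) := by gcongr
        _ = 2 ^ (K ^ 20) := by rw [← pow_mul, hK20]
        _ ≤ 2 ^ n := Nat.pow_le_pow_right (by norm_num) hn1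
        _ = _ := by rw [← pow_add]; congr 1; omega
    exact Nat.le_of_mul_le_mul_right h1 (by positivity)
  have key' : (n : ℝ) ^ (K ^ 19) * (n : ℝ) ^ (K ^ 19) * 2 ^ K ≤ 2 ^ (n - K - K ^ 19) := by exact_mod_cast key
  rw [one_div_pow, one_div_pow]
  have : (n : ℝ) ^ (K ^ 19) * (n : ℝ) ^ (K ^ 19) * (1 / 2 ^ (n - K - K ^ 19)) ≤ 1 / 2 ^ K := by
    rw [mul_one_div, div_le_div_iff₀ (by positivity) (by positivity), one_mul]
    exact key'
  calc _ = X * ((n : ℝ) ^ (K ^ 19) * (n : ℝ) ^ (K ^ 19) * (1 / 2 ^ (n - K - K ^ 19))) := by ring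
    _ ≤ _ := by gcongr

theorem level_bound (n K s L b : ℕ) (hK : 0 < K) (hn : K ^ 20 ≤ n) (hs : s = n / 100 + 1)
    (hK2 : 100 ≤ K) (hb9 : 9 ≤ b) (hb : b ≤ 22)
    (hL : L = s / (8 * K ^ (b - 9))) (hexp : 2 * (K : ℝ) ^ 22 ≤ Real.exp (K / 8)) :
    4 * (L : ℝ) / s / (K ^ 9 : ℕ) + Real.exp (-((s : ℝ) / (8 * ((K ^ 9 : ℕ) : ℝ) ^ 2))) ≤ 1 / (K : ℝ) ^ b := by
  have hKr : (1 : ℝ) ≤ K := by exact_mod_cast hK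
  have hsr : (0 : ℝ) < s := by rw [hs]; positivity
  have hL' : (L : ℝ) ≤ s / (8 * (K : ℝ) ^ (b - 9)) := by
    rw [hL]
    refine (Nat.cast_div_le).trans ?_
    push_cast
    exact le_rfl
  have hb' : (K : ℝ) ^ b = (K : ℝ) ^ (b - 9) * (K : ℝ) ^ 9 := by rw [← pow_add]; congr 1; omega
  have h1 : 4 * (L : ℝ) / s / (K ^ 9 : ℕ) ≤ 1 / (K : ℝ) ^ b / 2 := by
    calc 4 * (L : ℝ) / s / (K ^ 9 : ℕ) ≤ 4 * (s / (8 * (K : ℝ) ^ (b - 9))) / s / (K ^ 9 : ℕ) := by gcongr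
      _ = _ := by
        rw [hb']
        push_cast
        field_simp
        norm_num
  have h2 : Real.exp (-((s : ℝ) / (8 * ((K ^ 9 : ℕ) : ℝ) ^ 2))) ≤ 1 / (K : ℝ) ^ b / 2 := by
    have h3 : (K : ℝ) / 8 ≤ (s : ℝ) / (8 * ((K ^ 9 : ℕ) : ℝ) ^ 2) := by
      have h4 : K ^ 19 ≤ s := by
        have : 100 * K ^ 19 ≤ n := by
          calc 100 * K ^ 19 ≤ K * K ^ 19 := Nat.mul_le_mul_right _ hK2
            _ = K ^ 20 := by ring
            _ ≤ n := hn
        omega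
      have h4' : (K : ℝ) ^ 19 ≤ s := by exact_mod_cast h4
      rw [div_le_div_iff₀ (by norm_num) (by positivity)]
      push_cast
      calc (K : ℝ) * (8 * (K ^ 9) ^ 2) = K ^ 19 * 8 := by ring
        _ ≤ _ := by gcongr
    calc Real.exp (-((s : ℝ) / (8 * ((K ^ 9 : ℕ) : ℝ) ^ 2))) ≤ Real.exp (-((K : ℝ) / 8)) := by gcongr
      _ = 1 / Real.exp (K / 8) := by rw [Real.exp_neg, one_div]
      _ ≤ 1 / (2 * (K : ℝ) ^ 22) := by gcongr
      _ ≤ 1 / (2 * (K : ℝ) ^ b) := by gcongr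
      _ = _ := by rw [div_div, mul_comm]
  linarith

theorem sing_bound (n K : ℕ) (hn1 : K ^ 20 ≤ n) (hn2 : n ≤ (2 * K) ^ 20) (hK : 10000 ≤ K)
    (hE : (2 * K) ^ 40 * 8 ≤ 2 ^ K) (hexp : 2 * (K : ℝ) ^ 22 ≤ Real.exp (K / 8)) :
    ((singS n).card : ℝ) ≤ 2 ^ (n * n) * (4 * (1 / 2) ^ K + 1 / (K : ℝ) ^ 21) := by
  have hK0 : 0 < K := by omega
  have hKr : (1 : ℝ) ≤ K := by exact_mod_cast hK0
  have hKn : K ≤ n := (Nat.le_self_pow (by norm_num) K).trans hn1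
  have hn : 0 < n := by omega
  have hK14 : K ^ 14 * 10000 ≤ K ^ 20 := by
    calc K ^ 14 * 10000 ≤ K ^ 14 * K ^ 6 := Nat.mul_le_mul_left _ (hK.trans (Nat.le_self_pow (by norm_num) K))
      _ = _ := by ring
  have hK13 : K ^ 13 * 10000 ≤ K ^ 14 := by
    calc K ^ 13 * 10000 ≤ K ^ 13 * K := Nat.mul_le_mul_left _ hK
      _ = _ := by ring
  have hK6 : K ^ 6 ≤ K ^ 13 := Nat.pow_le_pow_right hK0 (by norm_num)
  have hK1 : K ≤ K ^ 13 := Nat.le_self_pow (by norm_num) K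
  set R0 : Finset (Fin n) := univ.filter (fun i => i.1 < n - K) with hR0
  have hcard : R0.card = n - K := by
    have : R0.image (fun i : Fin n => i.1) = range (n - K) := by
      ext j
      simp only [hR0, mem_image, mem_filter, mem_univ, true_and, mem_range]
      constructor
      · rintro ⟨i, hi, rfl⟩; exact hi
      · intro hj; exact ⟨⟨j, by omega⟩, hj, rfl⟩
    rw [← card_image_of_injective R0 Fin.val_injective]
    rw [this, card_range]
  have hne : R0.Nonempty := by rw [← card_pos, hcard]; omega
  obtain ⟨s, hs⟩ : ∃ s, s = n / 100 + 1 := ⟨_, rfl⟩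
  have hr1 : 1 / ((K ^ 9 : ℕ) : ℝ) + Real.exp (-(((K ^ 19 : ℕ) : ℝ) / (8 * ((K ^ 9 : ℕ) : ℝ) ^ 2))) ≤ 1 / (K : ℝ) ^ 8 := by
    have e1 : ((K ^ 19 : ℕ) : ℝ) / (8 * ((K ^ 9 : ℕ) : ℝ) ^ 2) = K / 8 := by
      push_cast
      field_simp
    rw [e1, Real.exp_neg]
    have e2 : (Real.exp (K / 8))⁻¹ ≤ 1 / (K : ℝ) ^ 9 := by
      rw [← one_div]
      gcongr
      refine le_trans ?_ hexp
      have : (K : ℝ) ^ 9 ≤ K ^ 22 := pow_le_pow_right₀ hKr (by norm_num)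
      have : (0 : ℝ) ≤ (K : ℝ) ^ 22 := by positivity
      linarith
    have e3 : 1 / ((K : ℝ) ^ 8) = K * (1 / (K : ℝ) ^ 9) := by field_simp
    have e4 : (2 : ℝ) ≤ K := by exact_mod_cast (by omega : 2 ≤ K)
    have e5 : (0 : ℝ) < 1 / (K : ℝ) ^ 9 := by positivity
    push_cast
    nlinarith
  have hle1 : ∀ a : ℕ, 1 / (K : ℝ) ^ a ≤ 1 := fun a => by
    rw [div_le_one (by positivity)]; exact one_le_pow₀ hKr
  have hLs : ∀ c : ℕ, 4 * (s / (8 * K ^ c)) < s := by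
    intro c
    have : s / (8 * K ^ c) ≤ s / 8 := by
      apply Nat.div_le_div_left _ (by norm_num)
      have : 0 < K ^ c := by positivity
      omega
    omega
  have hmL : ∀ c : ℕ, n ≤ 800 * K ^ c * (s / (8 * K ^ c) + 1) := by
    intro c
    have h1 : s < 8 * K ^ c * (s / (8 * K ^ c) + 1) := Nat.lt_mul_div_succ s (by positivity)
    have h2 : 800 * K ^ c * (s / (8 * K ^ c) + 1) = 100 * (8 * K ^ c * (s / (8 * K ^ c) + 1)) := by ring
    rw [h2]
    omega
  have hbad := bad_count hn R0 hne (K ^ 19) (K ^ 9) s (800 * K ^ 6) (s / (8 * K ^ 6)) (800 * K ^ 13) (s / (8 * K ^ 13))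
    (1 / (K : ℝ) ^ 8) (1 / (K : ℝ) ^ 15) (1 / (K : ℝ) ^ 22) (by positivity) hr1 (by positivity) (hle1 _) (by positivity)
    (hle1 _) (by positivity) (hLs 6) (hmL 6) (level_bound n K s _ 15 hK0 hn1 hs (by omega) (by norm_num) (by norm_num) rfl hexp)
    (by positivity) (hLs 13) (hmL 13) (level_bound n K s _ 22 hK0 hn1 hs (by omega) (by norm_num) (by norm_num) rfl hexp)
  have hsing := sing_count hn K hKn (1 / (K : ℝ) ^ 22) (by positivity)
  rw [hcard] at hbad
  have hX : (0 : ℝ) ≤ 2 ^ (n * n) := by positivity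
  have t1 := sparse_term n K (2 ^ (n * n)) hX hn1 hn2 (by omega) hE
  have t2 := range_term n K s (800 * K ^ 6) 8 K (2 ^ (n * n)) hX hn2 (by omega) (by norm_num) (by norm_num) rfl (by omega)
  have t3 := range_term n K s (800 * K ^ 13) 15 K (2 ^ (n * n)) hX hn2 (by omega) (by norm_num) (by norm_num) rfl (by omega)
  have t4 : (2 : ℝ) ^ (n * n) * (1 / 2) ^ n ≤ 2 ^ (n * n) * (1 / 2) ^ K := by
    apply mul_le_mul_of_nonneg_left _ hX
    exact pow_le_pow_of_le_one (by norm_num) (by norm_num) hKn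
  have t5 : (K : ℝ) * (2 ^ (n * n) * (1 / (K : ℝ) ^ 22)) = 2 ^ (n * n) * (1 / (K : ℝ) ^ 21) := by
    field_simp
  rw [t5] at hsing
  have e : (2 : ℝ) ^ (n * n) * (4 * (1 / 2) ^ K + 1 / (K : ℝ) ^ 21) =
    4 * (2 ^ (n * n) * (1 / 2) ^ K) + 2 ^ (n * n) * (1 / (K : ℝ) ^ 21) := by ring
  rw [e]
  have hsum := add_le_add (add_le_add t1 t2) t3
  have hb2 := hbad.trans hsum
  linarith

theorem sing_tendsto : Filter.Tendsto (fun n : ℕ => ((n : ℝ) * (singS n).card) / 2 ^ (n * n)) Filter.atTop (nhds 0) := by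
  have hg : Filter.Tendsto (fun K : ℕ => (2 : ℝ) ^ 20 * (4 * ((K : ℝ) ^ 20 / 2 ^ K) + 1 / (K : ℝ))) Filter.atTop (nhds 0) := by
    have h1 := tendsto_pow_const_div_const_pow_of_one_lt 20 (by norm_num : (1 : ℝ) < 2)
    have h2 := tendsto_one_div_atTop_nhds_zero_nat (𝕜 := ℝ)
    have := ((h1.const_mul 4).add h2).const_mul ((2 : ℝ) ^ 20)
    simpa using this
  have hE : ∀ᶠ K : ℕ in Filter.atTop, (2 * K) ^ 40 * 8 ≤ 2 ^ K := by
    have h1 := tendsto_pow_const_div_const_pow_of_one_lt 40 (by norm_num : (1 : ℝ) < 2)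
    have h2 : ∀ᶠ K : ℕ in Filter.atTop, (K : ℝ) ^ 40 / 2 ^ K < 1 / 2 ^ 43 := h1.eventually_lt_const (by positivity)
    filter_upwards [h2] with K hK
    rw [div_lt_div_iff₀ (by positivity) (by positivity)] at hK
    have : ((2 * K : ℕ) : ℝ) ^ 40 * 8 ≤ 2 ^ K := by
      push_cast
      rw [mul_pow]
      linarith
    exact_mod_cast this
  have hexp : ∀ᶠ K : ℕ in Filter.atTop, 2 * (K : ℝ) ^ 22 ≤ Real.exp (K / 8) := by
    have h1 := (Real.tendsto_pow_mul_exp_neg_atTop_nhds_zero 22).comp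
      (tendsto_natCast_atTop_atTop (R := ℝ) |>.atTop_div_const (by norm_num : (0 : ℝ) < 8))
    have h2 : ∀ᶠ K : ℕ in Filter.atTop, ((K : ℝ) / 8) ^ 22 * Real.exp (-((K : ℝ) / 8)) < 1 / (2 * 8 ^ 22) :=
      h1.eventually_lt_const (by positivity)
    filter_upwards [h2] with K hK
    rw [Real.exp_neg, ← div_eq_mul_inv, div_lt_div_iff₀ (Real.exp_pos _) (by positivity), div_pow] at hK
    have e : (K : ℝ) ^ 22 / 8 ^ 22 * (2 * 8 ^ 22) = 2 * (K : ℝ) ^ 22 := by field_simp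
    rw [e] at hK
    linarith
  rw [Metric.tendsto_atTop]
  intro ε hε
  have hgε := hg.eventually_lt_const hε
  obtain ⟨K0, hK0⟩ := Filter.eventually_atTop.1 (((hgε.and hE).and hexp).and (Filter.eventually_ge_atTop 10000))
  refine ⟨(K0 + 1) ^ 20, fun n hn => ?_⟩
  set K := Nat.findGreatest (fun k => k ^ 20 ≤ n) n with hKdef
  have hself : K0 + 1 ≤ n := (Nat.le_self_pow (by norm_num) _).trans hn
  have hK1 : K ^ 20 ≤ n := Nat.findGreatest_spec (P := fun k => k ^ 20 ≤ n) hself hn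
  have hKK : K0 + 1 ≤ K := Nat.le_findGreatest hself hn
  obtain ⟨⟨⟨c1, c2⟩, c3⟩, c4⟩ := hK0 K (by omega)
  have hK2 : n ≤ (2 * K) ^ 20 := by
    by_contra hc
    push Not at hc
    have h3 : 2 * K ≤ n := (Nat.le_self_pow (by norm_num) _).trans hc.le
    have := Nat.le_findGreatest (P := fun k => k ^ 20 ≤ n) h3 hc.le
    rw [← hKdef] at this
    omega
  have hb := sing_bound n K hK1 hK2 c4 c2 c3
  rw [Real.dist_eq, sub_zero, abs_of_nonneg (by positivity)]
  refine lt_of_le_of_lt ?_ c1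
  have hKr : (0 : ℝ) < K := by exact_mod_cast (by omega : 0 < K)
  rw [div_le_iff₀ (by positivity)]
  have hn' : (n : ℝ) ≤ (2 * K) ^ 20 := by exact_mod_cast hK2
  calc (n : ℝ) * (singS n).card ≤ (2 * K) ^ 20 * (2 ^ (n * n) * (4 * (1 / 2) ^ K + 1 / (K : ℝ) ^ 21)) := by gcongr
    _ = _ := by
      rw [one_div_pow]
      field_simp

section Comb
variable {n m : ℕ}

/-- the set of coordinates where a sign vector is positive -/
def posS (w : Fin n → ℤˣ) : Finset (Fin n) := univ.filter (fun i => w i = 1)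

theorem mem_posS (w : Fin n → ℤˣ) (i : Fin n) : i ∈ posS w ↔ w i = 1 := by simp [posS]

/-- sign vectors correspond to subsets -/
def posE : (Fin n → ℤˣ) ≃ Finset (Fin n) where
  toFun := posS
  invFun S := fun i => if i ∈ S then 1 else -1
  left_inv w := by
    ext i
    rcases Int.units_eq_one_or (w i) with h | h <;> simp [mem_posS, h]
  right_inv S := by
    ext i
    simp only [mem_posS]
    by_cases h : i ∈ S <;> simp [h]

theorem posS_inj : Function.Injective (posS (n := n)) := posE.injective

/-- real sign vector -/
def svR (w : Fin n → ℤˣ) : Fin n → ℝ := fun i => ((w i : ℤ) : ℝ)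

theorem ite_posS (w : Fin n → ℤˣ) (i : Fin n) (c : ℝ) :
    (if i ∈ posS w then c else 0) = c * ((svR w i + 1) / 2) := by
  rcases Int.units_eq_one_or (w i) with h | h <;> simp [mem_posS, h, svR]

/-- the collection of subsets of a tuple of sign vectors -/
def coll (W : Fin m → Fin n → ℤˣ) : Finset (Finset (Fin n)) := univ.image (fun j => posS (W j))

theorem sum_coll (W : Fin m → Fin n → ℤˣ) (hW : Function.Injective W) (lam : Finset (Fin n) → ℝ) (i : Fin n) :
    ∑ S ∈ (coll W).filter (fun S => i ∈ S), lam S = ∑ j, lam (posS (W j)) * ((svR (W j) i + 1) / 2) := by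
  rw [sum_filter, coll, sum_image (fun a _ b _ h => hW (posS_inj h))]
  exact sum_congr rfl fun j _ => ite_posS _ _ _

open Classical in
/-- all minimal balanced collections different from the trivial one -/
noncomputable def MB (n : ℕ) : Finset (Finset (Finset (Fin n))) :=
  univ.filter (fun B => IsMinimalBalancedCollection B ∧ B ≠ {Finset.univ})

theorem Btot_eq (n : ℕ) : Btot n = (MB n).card := by
  classical
  unfold Btot MB
  rw [Nat.card_eq_fintype_card, Fintype.card_subtype]

open Classical in
/-- ordered versions of minimal balanced collections -/
noncomputable def TT (n m : ℕ) : Finset (Fin m → Fin n → ℤˣ) :=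
  univ.filter (fun W => Function.Injective W ∧ coll W ∈ MB n)

theorem coll_card (W : Fin m → Fin n → ℤˣ) (hW : Function.Injective W) : (coll W).card = m := by
  rw [coll, card_image_of_injective _ (fun a b h => hW (posS_inj h)), card_univ, Fintype.card_fin]

theorem TT_card (n m : ℕ) : (TT n m).card = m.factorial * ((MB n).filter (fun B => B.card = m)).card := by
  classical
  have h1 : ∀ W ∈ TT n m, coll W ∈ (MB n).filter (fun B => B.card = m) := by
    intro W hW
    simp only [TT, mem_filter, mem_univ, true_and] at hW
    exact mem_filter.2 ⟨hW.2, coll_card W hW.1⟩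
  rw [card_eq_sum_card_fiberwise h1, mul_comm, ← smul_eq_mul, ← sum_const]
  refine sum_congr rfl fun B hB => ?_
  obtain ⟨hB1, hB2⟩ := mem_filter.1 hB
  have hc : Fintype.card (Fin m ≃ B) = m.factorial := by
    rw [Fintype.card_equiv (Fintype.equivOfCardEq (by simp [hB2]))]
    simp
  rw [← hc, ← card_univ]
  symm
  have hinj : ∀ e : Fin m ≃ B, Function.Injective (fun j => posE.symm (e j : Finset (Fin n))) := fun e a b h => by
    have := posE.symm.injective h
    exact e.injective (Subtype.ext this)
  have hpos : ∀ S : Finset (Fin n), posS (posE.symm S) = S := fun S => posE.apply_symm_apply S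
  have hcoll : ∀ e : Fin m ≃ B, coll (fun j => posE.symm (e j : Finset (Fin n))) = B := fun e => by
    ext S
    simp only [coll, mem_image, mem_univ, true_and, hpos]
    constructor
    · rintro ⟨j, rfl⟩; exact (e j).2
    · intro hS; exact ⟨e.symm ⟨S, hS⟩, by simp⟩
  refine card_bij (fun e _ j => posE.symm (e j : Finset (Fin n))) ?_ ?_ ?_
  · intro e _
    simp only [TT, mem_filter, mem_univ, true_and]
    exact ⟨⟨hinj e, by rw [hcoll e]; exact hB1⟩, hcoll e⟩
  · intro e _ e' _ h
    ext j : 2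
    exact posE.symm.injective (congrFun h j)
  · intro W hW
    simp only [TT, mem_filter, mem_univ, true_and] at hW
    obtain ⟨⟨hW1, hW2⟩, rfl⟩ := hW
    refine ⟨Equiv.ofBijective (fun j => ⟨posS (W j), mem_image_of_mem _ (mem_univ j)⟩) ⟨?_, ?_⟩, mem_univ _, ?_⟩
    · intro a b h
      exact hW1 (posS_inj (Subtype.ext_iff.1 h))
    · rintro ⟨S, hS⟩
      obtain ⟨j, -, rfl⟩ := mem_image.1 hS
      exact ⟨j, rfl⟩
    · funext j
      exact posE.symm_apply_apply (W j)

/-- flipping rows -/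
def rflip (e : Fin m → ℤˣ) (W : Fin m → Fin n → ℤˣ) : Fin m → Fin n → ℤˣ := fun j i => e j * W j i

theorem rflip_rflip (e : Fin m → ℤˣ) (W : Fin m → Fin n → ℤˣ) : rflip e (rflip e W) = W := by
  funext j i
  rcases Int.units_eq_one_or (e j) with h | h <;> simp [rflip, h]

theorem card_flip (T : Finset (Fin m → Fin n → ℤˣ)) :
    ∑ W : Fin m → Fin n → ℤˣ, (univ.filter (fun e => rflip e W ∈ T)).card = 2 ^ m * T.card := by
  have h := sum_card_bipartiteAbove_eq_sum_card_bipartiteBelow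
    (s := (univ : Finset (Fin m → Fin n → ℤˣ))) (t := (univ : Finset (Fin m → ℤˣ))) (fun W e => rflip e W ∈ T)
  simp only [bipartiteAbove, bipartiteBelow] at h
  rw [h]
  have : ∀ e : Fin m → ℤˣ, (univ.filter (fun W => rflip e W ∈ T)).card = T.card := by
    intro e
    refine card_bij (fun W _ => rflip e W) (fun W hW => (mem_filter.1 hW).2) ?_ ?_
    · intro W _ W' _ h
      have := congrArg (rflip e) h
      rwa [rflip_rflip, rflip_rflip] at this
    · intro W hW
      exact ⟨rflip e W, by simp [rflip_rflip, hW], rflip_rflip e W⟩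
  rw [sum_congr rfl fun e _ => this e, sum_const, card_univ]
  simp [Fintype.card_pi]

theorem minbal_unique (B : Finset (Finset (Fin n))) (hB : IsMinimalBalancedCollection B) (mu : Finset (Fin n) → ℝ)
    (hmu : ∀ i, ∑ S ∈ B.filter (fun S => i ∈ S), mu S = 0) : ∀ S ∈ B, mu S = 0 := by
  classical
  have main : ∀ mu : Finset (Fin n) → ℝ, (∀ i, ∑ S ∈ B.filter (fun S => i ∈ S), mu S = 0) → ∀ S ∈ B, mu S ≤ 0 := by
    intro mu hmu
    by_contra hc
    push Not at hc
    obtain ⟨S0, hS0, hpos⟩ := hc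
    obtain ⟨⟨hne, lam, hl1, hl2⟩, hmin⟩ := hB
    have hP : (B.filter (fun S => 0 < mu S)).Nonempty := ⟨S0, by simp [hS0, hpos]⟩
    obtain ⟨S1, hS1, hmin1⟩ := exists_min_image _ (fun S => lam S / mu S) hP
    obtain ⟨hS1B, hS1p⟩ := mem_filter.1 hS1
    set al := lam S1 / mu S1 with hal
    have hal0 : 0 < al := div_pos (hl1 _ hS1B) hS1p
    have hnn : ∀ S ∈ B, 0 ≤ lam S - al * mu S := by
      intro S hS
      by_cases h : 0 < mu S
      · have := hmin1 S (by simp [hS, h])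
        rw [le_div_iff₀ h] at this
        linarith
      · have h1 := hl1 S hS
        have : al * mu S ≤ 0 := mul_nonpos_of_nonneg_of_nonpos hal0.le (not_lt.1 h)
        linarith
    refine hmin (B.filter (fun S => 0 < lam S - al * mu S)) ?_ ⟨fun S hS => hne S (mem_filter.1 hS).1,
      fun S => lam S - al * mu S, fun S hS => (mem_filter.1 hS).2, fun i => ?_⟩
    · refine filter_ssubset.2 ⟨S1, hS1B, ?_⟩
      rw [hal, div_mul_cancel₀ _ hS1p.ne']
      simp
    · have : ∑ S ∈ B.filter (fun S => i ∈ S), (lam S - al * mu S) = 1 := by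
        rw [sum_sub_distrib, ← mul_sum, hmu, hl2]; simp
      rw [← this, filter_filter]
      refine sum_subset ?_ ?_
      · intro S hS
        simp only [mem_filter] at hS ⊢
        exact ⟨hS.1, hS.2.2⟩
      · intro S hS hS'
        simp only [mem_filter, not_and] at hS hS'
        have h1 := hnn S hS.1
        by_contra h2
        exact hS' hS.1 (lt_of_le_of_ne h1 (Ne.symm h2)) hS.2
  intro S hS
  refine le_antisymm (main mu hmu S hS) ?_
  have := main (fun S => - mu S) (fun i => by rw [sum_neg_distrib, hmu, neg_zero]) S hS
  linarith

theorem minbal_card (B : Finset (Finset (Fin n))) (hB : IsMinimalBalancedCollection B) : B.card ≤ n := by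
  classical
  have hli : LinearIndependent ℝ (fun S : B => (fun i : Fin n => if i ∈ S.1 then (1 : ℝ) else 0)) := by
    rw [Fintype.linearIndependent_iff]
    intro g hg S
    have := minbal_unique B hB (fun S => if h : S ∈ B then g ⟨S, h⟩ else 0) (fun i => ?_) S.1 S.2
    · simpa using this
    · rw [sum_filter, ← sum_coe_sort B]
      have h2 := congrFun hg i
      simp only [Finset.sum_apply, Pi.smul_apply, smul_eq_mul, mul_ite, mul_one, mul_zero, Pi.zero_apply] at h2
      refine Eq.trans (sum_congr rfl fun S _ => ?_) h2
      simp
  have := hli.fintype_card_le_finrank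
  simpa using this

theorem flip_const (W : Fin m → Fin n → ℤˣ) (e : Fin m → ℤˣ) (h1 : W ∈ TT n m) (h2 : rflip e W ∈ TT n m) :
    e = 1 ∨ e = -1 := by
  classical
  simp only [TT, MB, mem_filter, mem_univ, true_and] at h1 h2
  obtain ⟨hi1, hb1, -⟩ := h1
  obtain ⟨hi2, hb2, -⟩ := h2
  obtain ⟨⟨-, l1, hp1, hs1⟩, -⟩ := id hb1
  obtain ⟨⟨-, l2, hp2, hs2⟩, -⟩ := hb2
  have hp1' : ∀ j, 0 < l1 (posS (W j)) := fun j => hp1 _ (mem_image_of_mem _ (mem_univ j))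
  have hp2' : ∀ j, 0 < l2 (posS (rflip e W j)) := fun j => hp2 _ (mem_image_of_mem _ (mem_univ j))
  simp only [sum_coll W hi1] at hs1
  simp only [sum_coll (rflip e W) hi2] at hs2
  set a : Fin m → ℝ := fun j => l2 (posS (rflip e W j)) with ha
  have hsv : ∀ j i, svR (rflip e W j) i = ((e j : ℤ) : ℝ) * svR (W j) i := by
    intro j i; simp [svR, rflip]
  -- relation
  obtain ⟨t, ht⟩ : ∃ t : ℝ, ∀ i, ∑ j, (a j * ((e j : ℤ) : ℝ)) * ((svR (W j) i + 1) / 2) = t := by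
    refine ⟨1 - (∑ j, a j * (1 - ((e j : ℤ) : ℝ)) / 2), fun i => ?_⟩
    rw [eq_sub_iff_add_eq, ← sum_add_distrib]
    refine Eq.trans (sum_congr rfl fun j _ => ?_) (hs2 i)
    rw [hsv]
    simp only [ha]
    ring
  have hu := minbal_unique (coll W) hb1 (fun S => (∑ j, if posS (W j) = S then a j * ((e j : ℤ) : ℝ) else 0) - t * l1 S) ?_
  · have hj : ∀ j, a j * ((e j : ℤ) : ℝ) = t * l1 (posS (W j)) := by
      intro j
      have := hu _ (mem_image_of_mem _ (mem_univ j))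
      simp only [posS_inj.eq_iff, hi1.eq_iff, sum_ite_eq', mem_univ, if_true] at this
      linarith
    rcases le_or_gt 0 t with h | h
    · left
      funext j
      rcases Int.units_eq_one_or (e j) with h' | h'
      · exact h'
      · exfalso
        have h3 := hj j
        rw [h'] at h3
        have := mul_nonneg h (hp1' j).le
        have := hp2' j
        simp at h3
        linarith
    · right
      funext j
      rcases Int.units_eq_one_or (e j) with h' | h'
      · exfalso
        have h3 := hj j
        rw [h'] at h3
        have := mul_neg_of_neg_of_pos h (hp1' j)
        have := hp2' j
        simp at h3
        linarith
      · exact h'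
  · intro i
    rw [sum_coll W hi1]
    simp only [posS_inj.eq_iff, hi1.eq_iff, sum_ite_eq', mem_univ, if_true, sub_mul, sum_sub_distrib]
    rw [ht i]
    simp only [mul_assoc]
    rw [← mul_sum, hs1 i]
    ring

theorem TT_upper (n m : ℕ) : 2 ^ m * (TT n m).card ≤ 2 * 2 ^ (n * m) := by
  classical
  rw [← card_flip]
  have : ∀ W : Fin m → Fin n → ℤˣ, (univ.filter (fun e => rflip e W ∈ TT n m)).card ≤ 2 := by
    intro W
    rcases (univ.filter (fun e => rflip e W ∈ TT n m)).eq_empty_or_nonempty with h | ⟨e0, h⟩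
    · rw [h]; simp
    · have h0 := (mem_filter.1 h).2
      refine (card_le_card (t := {e0, -e0}) ?_).trans (card_le_two)
      intro e he
      have he := (mem_filter.1 he).2
      have h3 : rflip (e * e0) (rflip e0 W) = rflip e W := by
        funext j i
        rcases Int.units_eq_one_or (e0 j) with h | h <;> simp [rflip, h]
      have := flip_const (rflip e0 W) (e * e0) h0 (by rw [h3]; exact he)
      have h4 : e = (e * e0) * e0 := by
        funext j
        rcases Int.units_eq_one_or (e0 j) with h | h <;> simp [h]
      rw [mem_insert, mem_singleton]
      rcases this with h | h
      · left; rw [h4, h, one_mul]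
      · right; rw [h4, h, neg_one_mul]
  refine (sum_le_sum fun W _ => this W).trans ?_
  rw [sum_const, card_univ]
  simp [Fintype.card_pi, mul_comm, ← pow_mul]

end Comb

section Lower
variable {n : ℕ}

theorem li_real (W : Fin n → Fin n → ℤˣ) (h : LinearIndependent ℚ (fun j => sv (W j))) :
    LinearIndependent ℝ (fun j => svR (W j)) := by
  have h1 : IsUnit (Matrix.of (fun j => sv (W j))) := Matrix.linearIndependent_rows_iff_isUnit.1 h
  have h2 := h1.map (Rat.castHom ℝ).mapMatrix
  have h3 : (Rat.castHom ℝ).mapMatrix (Matrix.of (fun j => sv (W j))) = Matrix.of (fun j => svR (W j)) := by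
    ext i j
    simp [sv, svR]
  rw [h3] at h2
  exact Matrix.linearIndependent_rows_iff_isUnit.2 h2

theorem li_zero (W : Fin n → Fin n → ℤˣ) (h : LinearIndependent ℝ (fun j => svR (W j))) (g : Fin n → ℝ)
    (hg : ∀ i, ∑ j, g j * svR (W j) i = 0) : ∀ j, g j = 0 := by
  rw [Fintype.linearIndependent_iff] at h
  refine h g ?_
  funext i
  simpa using hg i

theorem mem_TT_of (hn : 2 ≤ n) (W : Fin n → Fin n → ℤˣ) (hli : LinearIndependent ℝ (fun j => svR (W j)))
    (c : Fin n → ℝ) (hc : ∀ i, ∑ j, c j * svR (W j) i = 1) (hs : (∀ j, 0 < c j) ∨ (∀ j, c j < 0)) :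
    W ∈ TT n n := by
  classical
  have hinj : Function.Injective W := fun a b h => hli.injective (by simp [h])
  have hc0 : ∀ j, c j ≠ 0 := fun j => by
    rcases hs with h | h
    · exact (h j).ne'
    · exact (h j).ne
  have hcard := coll_card W hinj
  have hne : ∀ j, (posS (W j)).Nonempty := by
    intro j
    by_contra hc'
    rw [not_nonempty_iff_eq_empty] at hc'
    have hm : ∀ i, svR (W j) i = -1 := by
      intro i
      have : i ∉ posS (W j) := by rw [hc']; simp
      rw [mem_posS] at this
      rcases Int.units_eq_one_or (W j i) with h | h
      · exact absurd h this
      · simp [svR, h]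
    have hz := li_zero W hli (fun k => c k + if k = j then 1 else 0) (fun i => by
      simp only [add_mul, sum_add_distrib, hc, ite_mul, one_mul, zero_mul, sum_ite_eq', mem_univ, if_true, hm]
      norm_num)
    have : Nontrivial (Fin n) := Fin.nontrivial_iff_two_le.2 hn
    obtain ⟨k, hk⟩ := exists_ne j
    have := hz k
    simp only [hk, if_false, add_zero] at this
    exact hc0 k this
  set C := ∑ j, c j with hC
  have hsum : ∀ i, ∑ j, c j * ((svR (W j) i + 1) / 2) = (1 + C) / 2 := by
    intro i
    have h1 : ∑ j, c j * ((svR (W j) i + 1) / 2) = (∑ j, c j * svR (W j) i + C) / 2 := by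
      rw [hC, ← sum_add_distrib, sum_div]
      exact sum_congr rfl fun j _ => by ring
    rw [h1, hc i]
  let j0 : Fin n := ⟨0, by omega⟩
  obtain ⟨i0, hi0⟩ := hne j0
  have hind : ∀ j i, 0 ≤ (svR (W j) i + 1) / 2 := by
    intro j i
    rw [← one_mul ((svR (W j) i + 1) / 2), ← ite_posS]
    split_ifs <;> norm_num
  have hind0 : 0 < (svR (W j0) i0 + 1) / 2 := by
    rw [← one_mul ((svR (W j0) i0 + 1) / 2), ← ite_posS, if_pos hi0]
    norm_num
  have hpos : ∀ j, 0 < 2 * c j / (1 + C) := by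
    intro j
    rcases hs with h | h
    · have : 0 < (1 + C) / 2 := by
        rw [← hsum i0]
        exact sum_pos' (fun j _ => mul_nonneg (h j).le (hind j i0)) ⟨j0, mem_univ _, mul_pos (h j0) hind0⟩
      have := h j
      apply div_pos <;> linarith
    · have : (1 + C) / 2 < 0 := by
        rw [← hsum i0]
        rw [← neg_pos, ← sum_neg_distrib]
        refine sum_pos' (fun j _ => ?_) ⟨j0, mem_univ _, ?_⟩
        · rw [← neg_mul]; exact mul_nonneg (by linarith [h j]) (hind j i0)
        · rw [← neg_mul]; exact mul_pos (by linarith [h j0]) hind0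
      have := h j
      apply div_pos_of_neg_of_neg <;> linarith
  have hCne : 1 + C ≠ 0 := by
    intro h
    have := hpos j0
    rw [h] at this
    simp at this
  have hmem : ∀ S ∈ coll W, ∃ j, posS (W j) = S := fun S hS => by
    obtain ⟨j, -, hj⟩ := mem_image.1 hS
    exact ⟨j, hj⟩
  let lam : Finset (Fin n) → ℝ := fun S => ∑ j, if posS (W j) = S then 2 * c j / (1 + C) else 0
  have hlam : ∀ j, lam (posS (W j)) = 2 * c j / (1 + C) := by
    intro j
    simp only [lam, posS_inj.eq_iff, hinj.eq_iff, sum_ite_eq', mem_univ, if_true]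
  simp only [TT, MB, mem_filter, mem_univ, true_and]
  refine ⟨hinj, ⟨⟨?_, lam, ?_, ?_⟩, ?_⟩, ?_⟩
  · intro S hS
    obtain ⟨j, rfl⟩ := hmem S hS
    exact (hne j).ne_empty
  · intro S hS
    obtain ⟨j, rfl⟩ := hmem S hS
    rw [hlam]; exact hpos j
  · intro i
    rw [sum_coll W hinj]
    simp only [hlam]
    have : ∑ j, 2 * c j / (1 + C) * ((svR (W j) i + 1) / 2) = 2 / (1 + C) * ∑ j, c j * ((svR (W j) i + 1) / 2) := by
      rw [mul_sum]
      exact sum_congr rfl fun j _ => by ring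
    rw [this, hsum]
    field_simp
  · rintro B' hB' ⟨-, l, hl1, hl2⟩
    obtain ⟨hsub, S, hS, hSn⟩ := Finset.ssubset_iff_exists_subset_erase.1 hB' |> fun ⟨a, ha, hb⟩ =>
      (⟨hB'.1, a, ha, fun h => by simpa using hb h⟩ : B' ⊆ coll W ∧ ∃ S, S ∈ coll W ∧ S ∉ B')
    obtain ⟨j1, rfl⟩ := hmem S hS
    let l' : Finset (Fin n) → ℝ := fun S => if S ∈ B' then l S else 0
    have hl' : ∀ i, ∑ j, l' (posS (W j)) * ((svR (W j) i + 1) / 2) = 1 := by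
      intro i
      rw [← sum_coll W hinj, ← hl2 i, sum_filter, sum_filter]
      symm
      rw [← sum_subset hsub]
      · refine sum_congr rfl fun S hS => ?_
        simp [l', hS]
      · intro S _ hS
        simp [l', hS]
    set Lm := ∑ j, l' (posS (W j)) with hLm
    have hz := li_zero W hli (fun j => l' (posS (W j)) - (2 - Lm) * c j) (fun i => by
      simp only [sub_mul, sum_sub_distrib]
      have e1 : ∑ j, l' (posS (W j)) * svR (W j) i = 2 - Lm := by
        have := hl' i
        have e : ∑ j, l' (posS (W j)) * ((svR (W j) i + 1) / 2) = (∑ j, l' (posS (W j)) * svR (W j) i + Lm) / 2 := by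
          rw [hLm, ← sum_add_distrib, sum_div]
          exact sum_congr rfl fun j _ => by ring
        rw [e] at this
        linarith
      have e2 : ∀ d : ℝ, ∑ j, d * c j * svR (W j) i = d := by
        intro d
        simp only [mul_assoc]
        rw [← mul_sum, hc i, mul_one]
      have e3 := e2 2
      have e4 := e2 Lm
      rw [e1, e3, e4]; ring)
    have h1 := hz j1
    have h2 : l' (posS (W j1)) = 0 := by simp [l', hSn]
    simp only [h2, zero_sub, neg_eq_zero, mul_eq_zero, hc0 j1, or_false] at h1
    have h3 : ∀ j, l' (posS (W j)) = 0 := fun j => by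
      have := hz j
      simpa [h1] using this
    have := hl' i0
    simp [h3] at this
  · intro h
    rw [h] at hcard
    simp at hcard
    omega

open Classical in
/-- generic sign matrices -/
noncomputable def good (n : ℕ) : Finset (Fin n → Fin n → ℤˣ) :=
  univ.filter (fun W => W ∉ singS n ∧ ∀ i, Function.update W i 1 ∉ singS n)

theorem good_two (hn : 2 ≤ n) (W : Fin n → Fin n → ℤˣ) (hW : W ∈ good n) :
    2 ≤ (univ.filter (fun e => rflip e W ∈ TT n n)).card := by
  classical
  simp only [good, singS, mem_filter, mem_univ, true_and, not_not] at hW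
  have hli := li_real W hW.1
  have hli' := fun i => li_real _ (hW.2 i)
  have hspan := hli.span_eq_top_of_card_eq_finrank' (by simp)
  have h1 : (fun _ => 1 : Fin n → ℝ) ∈ Submodule.span ℝ (Set.range fun j => svR (W j)) := by rw [hspan]; trivial
  obtain ⟨c, hc⟩ := (Submodule.mem_span_range_iff_exists_fun ℝ).1 h1
  have hc : ∀ i, ∑ j, c j * svR (W j) i = 1 := fun i => by
    have := congrFun hc i
    simpa using this
  have hc0 : ∀ j, c j ≠ 0 := by
    intro j hj
    have hz := li_zero _ (hli' j) (fun k => c k + if k = j then -1 else 0) (fun i => by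
      have : ∀ k, (c k + if k = j then -1 else 0) * svR (Function.update W j 1 k) i =
          c k * svR (W k) i + if k = j then -1 else 0 := by
        intro k
        by_cases hk : k = j
        · subst hk
          simp [hj, svR]
        · simp [hk, Function.update_of_ne hk]
      rw [sum_congr rfl fun k _ => this k, sum_add_distrib, hc]
      simp) j
    simp [hj] at hz
  have key : ∀ e : Fin n → ℤˣ, ((∀ j, 0 < c j * ((e j : ℤ) : ℝ)) ∨ (∀ j, c j * ((e j : ℤ) : ℝ) < 0)) →
      rflip e W ∈ TT n n := by
    intro e he
    have hsq : ∀ j, ((e j : ℤ) : ℝ) * ((e j : ℤ) : ℝ) = 1 := fun j => by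
      rcases Int.units_eq_one_or (e j) with h | h <;> simp [h]
    have hsv : ∀ j i, svR (rflip e W j) i = ((e j : ℤ) : ℝ) * svR (W j) i := by
      intro j i; simp [svR, rflip]
    refine mem_TT_of hn _ ?_ (fun j => c j * ((e j : ℤ) : ℝ)) ?_ he
    · rw [Fintype.linearIndependent_iff]
      intro g hg j
      have := li_zero W hli (fun j => g j * ((e j : ℤ) : ℝ)) (fun i => by
        have h := congrFun hg i
        simp only [Finset.sum_apply, Pi.smul_apply, smul_eq_mul, Pi.zero_apply, hsv] at h
        rw [← h]
        exact sum_congr rfl fun j _ => by ring) j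
      have h3 := hsq j
      have h4 : g j * ((e j : ℤ) : ℝ) = 0 := this
      have h5 : g j = (g j * ((e j : ℤ) : ℝ)) * ((e j : ℤ) : ℝ) := by rw [mul_assoc, h3, mul_one]
      rw [h5, h4, zero_mul]
    · intro i
      rw [← hc i]
      refine sum_congr rfl fun j _ => ?_
      rw [hsv, mul_assoc, ← mul_assoc ((e j : ℤ) : ℝ), hsq, one_mul]
  let e : Fin n → ℤˣ := fun j => if 0 < c j then 1 else -1
  have he : ∀ j, 0 < c j * ((e j : ℤ) : ℝ) := by
    intro j
    by_cases h : 0 < c j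
    · simp [e, h]
    · have := lt_of_le_of_ne (not_lt.1 h) (hc0 j)
      simp [e, h, this]
  have m1 := key e (Or.inl he)
  have m2 := key (-e) (Or.inr fun j => by have := he j; simpa using this)
  have hne : e ≠ -e := by
    intro h
    have h2 := congrFun h ⟨0, by omega⟩
    rcases Int.units_eq_one_or (e ⟨0, by omega⟩) with h' | h' <;> simp [h'] at h2
  rw [← card_pair hne]
  apply card_le_card
  intro x hx
  rw [mem_insert, mem_singleton] at hx
  rcases hx with rfl | rfl
  · simpa using m1
  · simpa using m2

theorem TT_lower (hn : 2 ≤ n) : 2 * (good n).card ≤ 2 ^ n * (TT n n).card := by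
  classical
  rw [← card_flip, mul_comm, ← smul_eq_mul, ← sum_const]
  refine (sum_le_sum fun W hW => good_two hn W hW).trans ?_
  exact sum_le_sum_of_subset (subset_univ _)

theorem update_count (i : Fin n) [DecidablePred fun W : Fin n → Fin n → ℤˣ => Function.update W i 1 ∈ singS n] :
    (univ.filter (fun W : Fin n → Fin n → ℤˣ => Function.update W i 1 ∈ singS n)).card ≤
    (singS n).card := by
  classical
  let Ph : (Fin n → Fin n → ℤˣ) → (Fin n → Fin n → ℤˣ) := fun W k => Function.update W i 1 k * W i
  have hinv : ∀ W, Ph (Ph W) = W := by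
    intro W
    funext k l
    by_cases hk : k = i
    · subst hk
      simp [Ph]
    · simp [Ph, Function.update_of_ne hk, mul_assoc]
  refine card_le_card_of_injOn Ph ?_ ?_
  · intro W hW
    have hW := (mem_filter.1 hW).2
    simp only [singS, mem_filter, mem_univ, true_and] at hW
    simp only [singS, coe_filter, mem_univ, true_and]
    intro hli
    apply hW
    let D : (Fin n → ℚ) →ₗ[ℚ] (Fin n → ℚ) := LinearMap.mulRight ℚ (sv (W i))
    have hsq : ∀ l, sv (W i) l * sv (W i) l = 1 := fun l => by
      rcases Int.units_eq_one_or (W i l) with h | h <;> simp [sv, h]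
    have hD : ∀ x l, D x l = x l * sv (W i) l := fun x l => rfl
    have hker : LinearMap.ker D = ⊥ := by
      rw [LinearMap.ker_eq_bot]
      intro x y h
      funext l
      have h2 := congrFun h l
      rw [hD, hD] at h2
      have := congrArg (· * sv (W i) l) h2
      simpa [mul_assoc, hsq] using this
    have := hli.map' D hker
    suffices heq : (fun j => sv (Function.update W i 1 j)) = (D ∘ fun j => sv (Ph W j)) by
      rw [heq]; exact this
    funext k l
    simp only [Function.comp, hD, Ph]
    have e : sv (Function.update W i 1 k * W i) l = sv (Function.update W i 1 k) l * sv (W i) l := by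
      simp [sv]
    rw [e, mul_assoc, hsq, mul_one]
  · intro W _ W' _ h
    have := congrArg Ph h
    rwa [hinv, hinv] at this

theorem good_count (n : ℕ) : 2 ^ (n * n) ≤ (good n).card + (n + 1) * (singS n).card := by
  classical
  have hsub : (univ : Finset (Fin n → Fin n → ℤˣ)) ⊆ good n ∪ (singS n ∪
      (univ : Finset (Fin n)).biUnion (fun i => univ.filter (fun W => Function.update W i 1 ∈ singS n))) := by
    intro W _
    by_cases h : W ∈ good n
    · exact mem_union_left _ h
    · apply mem_union_right
      by_cases h2 : W ∈ singS n
      · exact mem_union_left _ h2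
      · apply mem_union_right
        simp only [good, mem_filter, mem_univ, true_and, not_and, not_forall, not_not] at h
        obtain ⟨i, hi⟩ := h h2
        exact mem_biUnion.2 ⟨i, mem_univ _, by simpa using hi⟩
  have h1 := (card_le_card hsub).trans ((card_union_le _ _).trans
    (Nat.add_le_add_left ((card_union_le _ _).trans (Nat.add_le_add_left
      (card_biUnion_le.trans (sum_le_sum fun i _ => update_count i)) _)) _))
  have h2 : (univ : Finset (Fin n → Fin n → ℤˣ)).card = 2 ^ (n * n) := by
    rw [card_univ]
    simp [Fintype.card_pi, ← pow_mul]
  rw [h2, sum_const, card_univ, Fintype.card_fin, smul_eq_mul] at h1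
  linarith

end Lower

theorem ratio_lower (n : ℕ) (hn : 2 ≤ n) :
    1 - 2 * ((n : ℝ) * (singS n).card / 2 ^ (n * n)) ≤
      (Btot n : ℝ) * (n.factorial : ℝ) / 2 ^ (n ^ 2 - n + 1) := by
  have h1 : (TT n n).card ≤ n.factorial * Btot n := by
    rw [TT_card, Btot_eq]
    exact Nat.mul_le_mul_left _ (card_filter_le _ _)
  have h2 := TT_lower hn
  have h3 := good_count n
  have h4 : 2 * 2 ^ (n * n) ≤ 2 ^ n * (n.factorial * Btot n) + 2 * ((2 * n) * (singS n).card) := by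
    have a1 : 2 ^ n * (TT n n).card ≤ 2 ^ n * (n.factorial * Btot n) := Nat.mul_le_mul_left _ h1
    have a2 : (n + 1) * (singS n).card ≤ (2 * n) * (singS n).card := Nat.mul_le_mul_right _ (by omega)
    omega
  have h5 : 2 * (2 : ℝ) ^ (n * n) ≤ 2 ^ n * (n.factorial * Btot n) + 2 * ((2 * n) * (singS n).card) := by
    exact_mod_cast h4
  have h6 : (2 : ℝ) ^ (n ^ 2 - n + 1) * 2 ^ n = 2 * 2 ^ (n * n) := by
    rw [← pow_add, ← pow_succ']
    congr 1
    have : n ≤ n ^ 2 := Nat.le_self_pow (by norm_num) n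
    have : n ^ 2 = n * n := by ring
    omega
  rw [le_div_iff₀ (by positivity)]
  have hp : (0 : ℝ) < 2 ^ n := by positivity
  refine le_of_mul_le_mul_right ?_ hp
  rw [mul_assoc, h6]
  have h7 : (1 - 2 * ((n : ℝ) * (singS n).card / 2 ^ (n * n))) * (2 * 2 ^ (n * n)) =
      2 * 2 ^ (n * n) - 2 * ((2 * n) * (singS n).card) := by
    field_simp
  rw [h7]
  linarith

theorem ratio_upper (n : ℕ) (hn : 1 ≤ n) (hq : (n : ℝ) / 2 ^ (n - 1) < 1) :
    (Btot n : ℝ) * (n.factorial : ℝ) / 2 ^ (n ^ 2 - n + 1) ≤ (1 - (n : ℝ) / 2 ^ (n - 1))⁻¹ := by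
  classical
  have hsum : Btot n = ∑ m ∈ range (n + 1), ((MB n).filter (fun B => B.card = m)).card := by
    rw [Btot_eq]
    refine card_eq_sum_card_fiberwise fun B hB => ?_
    have hB : B ∈ MB n := hB
    simp only [MB, mem_filter, mem_univ, true_and] at hB
    have := minbal_card B hB.1
    simp only [coe_range, Set.mem_Iio]
    omega
  set q := (n : ℝ) / 2 ^ (n - 1) with hqd
  have hterm : ∀ m ∈ range (n + 1), (((MB n).filter (fun B => B.card = m)).card : ℝ) * n.factorial / 2 ^ (n ^ 2 - n + 1) ≤
      q ^ (n - m) := by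
    intro m hm
    rw [mem_range] at hm
    set b := ((MB n).filter (fun B => B.card = m)).card with hb
    have h1 := TT_upper n m
    rw [TT_card, ← hb] at h1
    obtain ⟨j, hj⟩ : ∃ j, n = m + j := ⟨n - m, by omega⟩
    have hfac : n.factorial ≤ m.factorial * n ^ j := by
      have := Nat.factorial_mul_descFactorial (n := n) (k := j) (by omega)
      rw [← this, show n - j = m by omega]
      exact Nat.mul_le_mul_left _ (Nat.descFactorial_le_pow n j)
    have hexp : 2 * 2 ^ (n * m) * (2 ^ (n - 1)) ^ j = 2 ^ (n ^ 2 - n + 1) * 2 ^ m := by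
      rw [← pow_mul, ← pow_succ', ← pow_add, ← pow_add]
      congr 1
      obtain ⟨d, rfl⟩ : ∃ d, n = d + 1 := ⟨n - 1, by omega⟩
      have e1 : (d + 1) ^ 2 - (d + 1) = (d + 1) * d := by
        rw [pow_two, Nat.mul_add_one, Nat.add_sub_cancel]
      rw [e1, Nat.add_sub_cancel]
      have : (d + 1) * d = m * d + j * d := by rw [hj]; ring
      have e2 : (d + 1) * m = m * d + m := by ring
      rw [this, e2]
      ring
    have key : b * n.factorial * (2 ^ (n - 1)) ^ j ≤ n ^ j * 2 ^ (n ^ 2 - n + 1) := by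
      refine Nat.le_of_mul_le_mul_right ?_ (show 0 < 2 ^ m by positivity)
      calc b * n.factorial * (2 ^ (n - 1)) ^ j * 2 ^ m ≤ b * (m.factorial * n ^ j) * (2 ^ (n - 1)) ^ j * 2 ^ m := by gcongr
        _ = (2 ^ m * (m.factorial * b)) * (n ^ j * (2 ^ (n - 1)) ^ j) := by ring
        _ ≤ (2 * 2 ^ (n * m)) * (n ^ j * (2 ^ (n - 1)) ^ j) := by gcongr
        _ = n ^ j * (2 * 2 ^ (n * m) * (2 ^ (n - 1)) ^ j) := by ring
        _ = _ := by rw [hexp]; ring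
    have key' : (b : ℝ) * n.factorial * (2 ^ (n - 1)) ^ j ≤ n ^ j * 2 ^ (n ^ 2 - n + 1) := by exact_mod_cast key
    rw [show n - m = j by omega, hqd, div_pow, div_le_div_iff₀ (by positivity) (by positivity)]
    exact key'
  have hq0 : 0 ≤ q := by positivity
  calc (Btot n : ℝ) * (n.factorial : ℝ) / 2 ^ (n ^ 2 - n + 1)
      = ∑ m ∈ range (n + 1), (((MB n).filter (fun B => B.card = m)).card : ℝ) * n.factorial / 2 ^ (n ^ 2 - n + 1) := by
        rw [hsum]; push_cast; rw [sum_mul, sum_div]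
    _ ≤ ∑ m ∈ range (n + 1), q ^ (n - m) := sum_le_sum hterm
    _ = ∑ m ∈ range (n + 1), q ^ m := by
        have := sum_range_reflect (fun m => q ^ m) (n + 1)
        rw [← this]
        refine sum_congr rfl fun m hm => ?_
        congr 1
    _ ≤ (1 - q)⁻¹ := by
        rw [← one_div, le_div_iff₀ (by linarith), mul_comm, mul_neg_geom_sum]
        have : 0 ≤ q ^ (n + 1) := by positivity
        linarith

/-- Theorem (Theorem `theo3`): `B_n ∼ 2^{n²−n+1}/n!`, i.e.
`lim_{n→∞} B_n · n! / 2^{n²−n+1} = 1`. -/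
theorem Btot_asymptotic :
    Filter.Tendsto
      (fun n : ℕ => (Btot n : ℝ) * (n.factorial : ℝ) / 2 ^ (n ^ 2 - n + 1))
      Filter.atTop (nhds 1) := by
  have hq : Filter.Tendsto (fun n : ℕ => (n : ℝ) / 2 ^ (n - 1)) Filter.atTop (nhds 0) := by
    have h1 := (tendsto_pow_const_div_const_pow_of_one_lt 1 (by norm_num : (1 : ℝ) < 2)).const_mul 2
    rw [mul_zero] at h1
    refine h1.congr' ?_
    filter_upwards [Filter.eventually_ge_atTop 1] with n hn
    obtain ⟨d, rfl⟩ : ∃ d, n = d + 1 := ⟨n - 1, by omega⟩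
    rw [Nat.add_sub_cancel, pow_succ (2 : ℝ)]
    field_simp
  have hlow : Filter.Tendsto (fun n : ℕ => 1 - 2 * ((n : ℝ) * (singS n).card / 2 ^ (n * n))) Filter.atTop (nhds 1) := by
    have := (sing_tendsto.const_mul 2).const_sub 1
    simpa using this
  have hup : Filter.Tendsto (fun n : ℕ => (1 - (n : ℝ) / 2 ^ (n - 1))⁻¹) Filter.atTop (nhds 1) := by
    have := (hq.const_sub 1).inv₀ (by norm_num)
    simpa using this
  refine tendsto_of_tendsto_of_tendsto_of_le_of_le' hlow hup ?_ ?_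
  · filter_upwards [Filter.eventually_ge_atTop 2] with n hn using ratio_lower n hn
  · filter_upwards [Filter.eventually_ge_atTop 1, hq.eventually_lt_const (by norm_num : (0 : ℝ) < 1)] with n hn h
    exact ratio_upper n hn h
end

section
/- Let φ_n = (B_n − B_n^n)/B_n be the proportion of minimal balanced collections on a set of n elements (excluding {N}) whose cardinality is strictly less than n. Then lim_{n→∞} φ_n = 0. (Equivalently, the proportion of facets of the polyhedron of balanced games containing games with a non-singleton core tends to 0 as n tends to infinity.) -/
open Finset

/-- `B_n^n`: the number of minimal balanced collections on `N = {1,…,n}` (other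
than `{N}`) consisting of exactly `n` subsets. -/
noncomputable def Bnn (n : ℕ) : ℕ :=
  Nat.card {B : Finset (Finset (Fin n)) //
    IsMinimalBalancedCollection B ∧ B ≠ {Finset.univ} ∧ B.card = n}

/-- A family of nonempty sets with positive weights of constant nonzero-family sum is balanced. -/
lemma balanced_of_const {n : ℕ} (B : Finset (Finset (Fin n))) (hB : B.Nonempty)
    (hne : ∀ S ∈ B, S ≠ ∅) (lam : Finset (Fin n) → ℝ) (hpos : ∀ S ∈ B, 0 < lam S) (c : ℝ)
    (hc : ∀ i : Fin n, ∑ S ∈ B.filter (fun S => i ∈ S), lam S = c) :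
    IsBalancedCollection B := by
  obtain ⟨S0, hS0⟩ := hB
  obtain ⟨i0, hi0⟩ := Finset.nonempty_iff_ne_empty.2 (hne S0 hS0)
  have hcpos : 0 < c := by
    rw [← hc i0]
    apply Finset.sum_pos
    · intro S hS
      exact hpos S (Finset.mem_filter.1 hS).1
    · exact ⟨S0, Finset.mem_filter.2 ⟨hS0, hi0⟩⟩
  refine ⟨hne, fun S => lam S / c, fun S hS => div_pos (hpos S hS) hcpos, fun i => ?_⟩
  rw [← Finset.sum_div, hc i, div_self hcpos.ne']

lemma balanced_nonempty {n : ℕ} (hn : 0 < n) {B : Finset (Finset (Fin n))}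
    (h : IsBalancedCollection B) : B.Nonempty := by
  obtain ⟨_, lam, _, h2⟩ := h
  rw [Finset.nonempty_iff_ne_empty]
  rintro rfl
  simpa using h2 ⟨0, hn⟩

/-- Uniqueness of weights modulo the all-ones vector. -/
lemma min_unique {n : ℕ} (hn : 0 < n) {B : Finset (Finset (Fin n))}
    (hB : IsMinimalBalancedCollection B) (lam : Finset (Fin n) → ℝ)
    (hl : IsBalancingWeights B lam) (z : Finset (Fin n) → ℝ) (c : ℝ)
    (hz : ∀ i : Fin n, ∑ S ∈ B.filter (fun S => i ∈ S), z S = c) :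
    ∃ t : ℝ, ∀ S ∈ B, z S = t * lam S := by
  obtain ⟨S0, hS0, hmin⟩ := Finset.exists_min_image B (fun S => z S / lam S)
    (balanced_nonempty hn hB.1)
  set t := z S0 / lam S0 with ht
  refine ⟨t, ?_⟩
  have hy : ∀ S ∈ B, 0 ≤ z S - t * lam S := by
    intro S hS
    have h1 := hmin S hS
    have h2 := hl.1 S hS
    rw [le_div_iff₀ h2] at h1
    linarith
  have hy0 : z S0 - t * lam S0 = 0 := by
    have h2 := hl.1 S0 hS0
    rw [ht]; field_simp; ring
  by_contra hcon
  push Not at hcon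
  obtain ⟨S1, hS1, hne1⟩ := hcon
  set B' := B.filter (fun S => 0 < z S - t * lam S) with hB'
  refine hB.2 B' ?_ ?_
  · refine Finset.filter_ssubset.2 ⟨S0, hS0, ?_⟩
    rw [hy0]; exact lt_irrefl _
  · refine balanced_of_const B' ⟨S1, ?_⟩ ?_ (fun S => z S - t * lam S) ?_ (c - t) ?_
    · refine Finset.mem_filter.2 ⟨hS1, lt_of_le_of_ne (hy S1 hS1) ?_⟩
      intro h; apply hne1; linarith
    · intro S hS
      exact hB.1.1 S (Finset.mem_filter.1 hS).1
    · intro S hS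
      exact (Finset.mem_filter.1 hS).2
    · intro i
      have h1 : ∑ S ∈ B'.filter (fun S => i ∈ S), (z S - t * lam S)
          = ∑ S ∈ B.filter (fun S => i ∈ S), (z S - t * lam S) := by
        apply Finset.sum_subset
        · exact Finset.filter_subset_filter _ (Finset.filter_subset _ _)
        · intro S hS hS'
          simp only [Finset.mem_filter, hB', not_and] at hS hS'
          have h3 := hy S hS.1
          by_contra h4
          exact hS' ⟨hS.1, lt_of_le_of_ne h3 (Ne.symm h4)⟩ hS.2
      rw [h1, Finset.sum_sub_distrib, ← Finset.mul_sum, hz i, hl.2 i, mul_one]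

lemma min_card_le {n : ℕ} (hn : 0 < n) {B : Finset (Finset (Fin n))}
    (hB : IsMinimalBalancedCollection B) : B.card ≤ n := by
  classical
  obtain ⟨lam, hl⟩ := hB.1.2
  have hli : LinearIndependent ℝ (fun (S : B) => (fun i : Fin n => if i ∈ S.1 then (1 : ℝ) else 0)) := by
    rw [Fintype.linearIndependent_iff]
    intro g hg
    let z : Finset (Fin n) → ℝ := fun S => if h : S ∈ B then g ⟨S, h⟩ else 0
    have hz : ∀ i : Fin n, ∑ S ∈ B.filter (fun S => i ∈ S), z S = 0 := by
      intro i
      have h1 := congrFun hg i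
      simp only [Finset.sum_apply, Pi.smul_apply, smul_eq_mul, mul_ite, mul_one, mul_zero,
        Pi.zero_apply] at h1
      rw [Finset.sum_filter, ← Finset.sum_coe_sort B]
      refine Eq.trans ?_ h1
      apply Finset.sum_congr rfl
      intro S _
      simp [z]
    obtain ⟨t, ht⟩ := min_unique hn hB lam hl z 0 hz
    have ht0 : t = 0 := by
      have h1 := hz ⟨0, hn⟩
      rw [Finset.sum_congr rfl (fun S hS => ht S (Finset.mem_filter.1 hS).1), ← Finset.mul_sum,
        hl.2, mul_one] at h1
      exact h1
    intro S
    have := ht S.1 S.2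
    simpa [z, ht0] using this
  have := hli.fintype_card_le_finrank
  simpa using this

/-- The unsigned trace of a coalition. -/
def tr {d : ℕ} (S : Finset (Fin (d + 1))) : Finset (Fin d) :=
  Finset.univ.filter (fun r => ¬ (r.castSucc ∈ S ↔ Fin.last d ∈ S))

lemma tr_eq {d : ℕ} {S T : Finset (Fin (d + 1))} (h : tr S = tr T) : S = T ∨ S = Tᶜ := by
  have h1 : ∀ r : Fin d, (¬ (r.castSucc ∈ S ↔ Fin.last d ∈ S)) ↔
      ¬ (r.castSucc ∈ T ↔ Fin.last d ∈ T) := by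
    intro r
    have := congrArg (fun U => r ∈ U) h
    simpa [tr] using this
  by_cases h2 : (Fin.last d ∈ S ↔ Fin.last d ∈ T)
  · left
    ext i
    refine Fin.lastCases h2 (fun r => ?_) i
    have := h1 r
    tauto
  · right
    ext i
    rw [Finset.mem_compl]
    refine Fin.lastCases (by tauto) (fun r => ?_) i
    have := h1 r
    tauto

lemma tr_compl {d : ℕ} (S : Finset (Fin (d + 1))) : tr Sᶜ = tr S := by
  ext r
  simp only [tr, Finset.mem_filter, Finset.mem_univ, true_and, Finset.mem_compl]
  tauto

/-- Lift a subset of `Fin d` to `Fin (d + 1)`. -/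
def up {d : ℕ} (v : Finset (Fin d)) : Finset (Fin (d + 1)) :=
  Finset.univ.filter (fun i => ∃ r ∈ v, r.castSucc = i)

lemma mem_up {d : ℕ} (v : Finset (Fin d)) (r : Fin d) : r.castSucc ∈ up v ↔ r ∈ v := by
  simp [up]

lemma last_mem_up {d : ℕ} (v : Finset (Fin d)) : Fin.last d ∉ up v := by
  simp [up, Fin.castSucc_ne_last]

lemma tr_up {d : ℕ} (v : Finset (Fin d)) : tr (up v) = v := by
  ext r
  simp [tr, mem_up, last_mem_up]

lemma pair_balanced {n : ℕ} (S : Finset (Fin n)) (h0 : S ≠ ∅) (h1 : Sᶜ ≠ ∅) :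
    IsBalancedCollection ({S, Sᶜ} : Finset (Finset (Fin n))) := by
  refine balanced_of_const _ ⟨S, by simp⟩ ?_ (fun _ => 1) (fun _ _ => one_pos) 1 ?_
  · intro T hT
    simp only [Finset.mem_insert, Finset.mem_singleton] at hT
    rcases hT with rfl | rfl <;> assumption
  · intro i
    by_cases h : i ∈ S
    · have : ({S, Sᶜ} : Finset (Finset (Fin n))).filter (fun S => i ∈ S) = {S} := by
        rw [Finset.filter_insert, Finset.filter_singleton]; simp [h]
      rw [this]; simp
    · have : ({S, Sᶜ} : Finset (Finset (Fin n))).filter (fun S => i ∈ S) = {Sᶜ} := by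
        rw [Finset.filter_insert, Finset.filter_singleton]; simp [h]
      rw [this]; simp

lemma min_eq_pair {n : ℕ} {B : Finset (Finset (Fin n))}
    (hB : IsMinimalBalancedCollection B) {S : Finset (Fin n)} (hS : S ∈ B) (hS' : Sᶜ ∈ B) :
    B = {S, Sᶜ} := by
  by_contra hne
  refine hB.2 {S, Sᶜ} ?_ (pair_balanced S (hB.1.1 _ hS) (hB.1.1 _ hS'))
  refine lt_of_le_of_ne ?_ (Ne.symm hne)
  intro T hT
  simp only [Finset.mem_insert, Finset.mem_singleton] at hT
  rcases hT with rfl | rfl <;> assumption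

lemma min_eq_of_subset {n : ℕ} {B B' : Finset (Finset (Fin n))}
    (hB : IsMinimalBalancedCollection B) (hB' : IsBalancedCollection B') (h : B' ⊆ B) :
    B' = B := by
  by_contra hne
  exact hB.2 B' (lt_of_le_of_ne h hne) hB'

lemma pair_case {d : ℕ} {B B' : Finset (Finset (Fin (d + 1)))}
    (hB : IsMinimalBalancedCollection B) (hB' : IsMinimalBalancedCollection B')
    (him : B.image tr = B'.image tr) {S : Finset (Fin (d + 1))} (hS : S ∈ B) (hS' : Sᶜ ∈ B) :
    B' = B := by
  refine min_eq_of_subset hB hB'.1 ?_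
  have hp := min_eq_pair hB hS hS'
  intro T hT
  have h1 : tr T ∈ B.image tr := him ▸ Finset.mem_image_of_mem tr hT
  rw [hp] at h1
  have h2 : tr T = tr S := by
    simp only [Finset.image_insert, Finset.image_singleton, tr_compl, Finset.mem_insert,
      Finset.mem_singleton, or_self] at h1
    exact h1
  rcases tr_eq h2 with rfl | rfl <;> assumption

lemma fiber_aux {d : ℕ} {B B' : Finset (Finset (Fin (d + 1)))}
    (hB : IsMinimalBalancedCollection B) (hB' : IsMinimalBalancedCollection B')
    (him : B.image tr = B'.image tr) {S0 : Finset (Fin (d + 1))} (h0 : S0 ∈ B) (h0' : S0 ∈ B') :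
    B = B' := by
  by_cases hp : ∃ S ∈ B, Sᶜ ∈ B
  · obtain ⟨S, hS, hS'⟩ := hp
    exact (pair_case hB hB' him hS hS').symm
  by_cases hp' : ∃ S ∈ B', Sᶜ ∈ B'
  · obtain ⟨S, hS, hS'⟩ := hp'
    exact pair_case hB' hB him.symm hS hS'
  push Not at hp hp'
  obtain ⟨lam, hl⟩ := hB.1.2
  obtain ⟨mu, hm⟩ := hB'.1.2
  have key : ∀ T ∈ B', T ∉ B → Tᶜ ∈ B := by
    intro T hT hTB
    have h1 : tr T ∈ B.image tr := him ▸ Finset.mem_image_of_mem tr hT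
    obtain ⟨S, hS, hST⟩ := Finset.mem_image.1 h1
    rcases tr_eq hST with rfl | rfl
    · exact absurd hS hTB
    · exact hS
  have key' : ∀ T ∈ B, T ∉ B' → Tᶜ ∈ B' := by
    intro T hT hTB
    have h1 : tr T ∈ B'.image tr := him ▸ Finset.mem_image_of_mem tr hT
    obtain ⟨S, hS, hST⟩ := Finset.mem_image.1 h1
    rcases tr_eq hST with rfl | rfl
    · exact absurd hS hTB
    · exact hS
  let z : Finset (Fin (d + 1)) → ℝ := fun S => if S ∈ B' then mu S else - mu Sᶜ
  -- reindex sums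
  have hz : ∀ i, ∑ S ∈ B.filter (fun S => i ∈ S), z S
      = 1 - ∑ T ∈ B', if T ∈ B then 0 else mu T := by
    intro i
    have h1 : ∑ S ∈ B, (if i ∈ S then z S else 0)
        = ∑ T ∈ B', ((if i ∈ T then mu T else 0) - if T ∈ B then 0 else mu T) := by
      refine Finset.sum_bij' (fun S _ => if S ∈ B' then S else Sᶜ)
        (fun T _ => if T ∈ B then T else Tᶜ) ?_ ?_ ?_ ?_ ?_
      · intro S hS
        split_ifs with h
        · exact h
        · exact key' S hS h
      · intro S hS
        split_ifs with h
        · exact h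
        · exact key S hS h
      · intro S hS
        by_cases h : S ∈ B'
        · simp [h, hS]
        · simp [h, hp S hS]
      · intro S hS
        by_cases h : S ∈ B
        · simp [h, hS]
        · simp [h, hp' S hS]
      · intro S hS
        by_cases h : S ∈ B'
        · simp [h, hS, z]
        · simp only [h, if_false, z, hp S hS, Finset.mem_compl]
          by_cases hi : i ∈ S <;> simp [hi]
    rw [Finset.sum_filter, h1, Finset.sum_sub_distrib, ← Finset.sum_filter, hm.2 i]
  obtain ⟨t, ht⟩ := min_unique (Nat.succ_pos d) hB lam hl z _ hz
  have ht0 : 0 < t := by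
    have h1 := ht S0 h0
    have h2 := hm.1 S0 h0'
    have h3 := hl.1 S0 h0
    simp only [z, h0', if_true] at h1
    rw [h1] at h2
    exact pos_of_mul_pos_left h2 h3.le
  refine min_eq_of_subset hB' hB.1 ?_
  intro S hS
  by_contra hSB
  have h1 := ht S hS
  have h2 := hm.1 _ (key' S hS hSB)
  have h3 := mul_pos ht0 (hl.1 S hS)
  simp only [z, hSB, if_false] at h1
  linarith

/-- Coding of minimal balanced collections by their traces and one bit. -/
lemma small_card (d : ℕ) (P : Finset (Finset (Finset (Fin (d + 1)))))
    (hP : ∀ B ∈ P, IsMinimalBalancedCollection B ∧ B.card ≤ d) :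
    P.card * d.factorial ≤ 2 * ((d + 1) * 2 ^ (d * d)) := by
  classical
  let Q : Finset (Finset (Finset (Fin d))) := Finset.univ.filter (fun U => U.card ≤ d)
  have h1 : P.card ≤ (Q ×ˢ (Finset.univ : Finset Bool)).card := by
    let ch : Finset (Finset (Fin d)) → Finset (Fin d) := fun U =>
      if h : U.Nonempty then h.choose else ∅
    have hch : ∀ U : Finset (Finset (Fin d)), U.Nonempty → ch U ∈ U := by
      intro U hU
      simp only [ch, hU, dif_pos]
      exact hU.choose_spec
    have htrup := @tr_up d
    refine Finset.card_le_card_of_injOn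
      (fun B => (B.image tr, decide (up (ch (B.image tr)) ∈ B))) ?_ ?_
    · intro B hB
      simp only [Finset.coe_product, Set.mem_prod, Finset.mem_coe, Finset.mem_univ, and_true, Q,
        Finset.mem_filter, true_and]
      exact Finset.card_image_le.trans (hP B hB).2
    · intro B hB B' hB' heq
      have hB1 := (hP B hB).1
      have hB1' := (hP B' hB').1
      simp only [Prod.mk.injEq, decide_eq_decide] at heq
      obtain ⟨him, hbit⟩ := heq
      rw [← him] at hbit
      have hne : (B.image tr).Nonempty := (balanced_nonempty (Nat.succ_pos d) hB1.1).image tr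
      have hmem := hch _ hne
      have hmem' := hmem
      rw [him] at hmem'
      rw [← him] at hmem'
      set u := ch (B.image tr) with hu
      have hmem2 : u ∈ B'.image tr := him ▸ hmem
      obtain ⟨S, hS, hSu⟩ := Finset.mem_image.1 hmem
      obtain ⟨T, hT, hTu⟩ := Finset.mem_image.1 hmem2
      by_cases hb : up u ∈ B
      · exact fiber_aux hB1 hB1' him hb (hbit.1 hb)
      · have hb' : up u ∉ B' := fun h => hb (hbit.2 h)
        have e1 : S = (up u)ᶜ := by
          rcases tr_eq (hSu.trans (htrup u).symm) with h | h
          · exact absurd (h ▸ hS) hb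
          · exact h
        have e2 : T = (up u)ᶜ := by
          rcases tr_eq (hTu.trans (htrup u).symm) with h | h
          · exact absurd (h ▸ hT) hb'
          · exact h
        exact fiber_aux hB1 hB1' him (e1 ▸ hS) (e2 ▸ hT)
  have h2 : Q ⊆ (Finset.range (d + 1)).biUnion
      (fun m => (Finset.univ : Finset (Finset (Fin d))).powersetCard m) := by
    intro U hU
    simp only [Q, Finset.mem_filter, Finset.mem_univ, true_and] at hU
    simp only [Finset.mem_biUnion, Finset.mem_range, Finset.mem_powersetCard, Finset.subset_univ,
      true_and]
    exact ⟨U.card, Nat.lt_succ_of_le hU, rfl⟩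
  have h3 : Q.card * d.factorial ≤ (d + 1) * 2 ^ (d * d) := by
    calc Q.card * d.factorial
        ≤ (∑ m ∈ Finset.range (d + 1), Nat.choose (2 ^ d) m) * d.factorial := by
          gcongr
          refine (Finset.card_le_card h2).trans (Finset.card_biUnion_le.trans ?_)
          simp [Finset.card_powersetCard]
      _ ≤ ∑ m ∈ Finset.range (d + 1), 2 ^ (d * d) := by
          rw [Finset.sum_mul]
          apply Finset.sum_le_sum
          intro m hm
          have hmd : m ≤ d := Nat.lt_succ_iff.1 (Finset.mem_range.1 hm)
          have e1 := Nat.factorial_mul_descFactorial (Nat.sub_le d m)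
          rw [Nat.sub_sub_self hmd] at e1
          rw [← e1]
          calc Nat.choose (2 ^ d) m * (m.factorial * d.descFactorial (d - m))
              = (2 ^ d).descFactorial m * d.descFactorial (d - m) := by
                rw [Nat.descFactorial_eq_factorial_mul_choose (2 ^ d) m]; ring
            _ ≤ (2 ^ d) ^ m * (2 ^ d) ^ (d - m) := by
                gcongr
                · exact Nat.descFactorial_le_pow _ _
                · refine (Nat.descFactorial_le_pow _ _).trans ?_
                  gcongr
                  exact Nat.lt_two_pow_self.le
            _ = 2 ^ (d * d) := by
                rw [← pow_add, Nat.add_sub_cancel' hmd, ← pow_mul]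
      _ = (d + 1) * 2 ^ (d * d) := by simp
  have h4 : P.card ≤ Q.card * 2 := by simpa using h1
  calc P.card * d.factorial ≤ (Q.card * 2) * d.factorial := by gcongr
    _ = 2 * (Q.card * d.factorial) := by ring
    _ ≤ _ := by gcongr

/-- The indicator vector modulo 3. -/
def ind3 {n : ℕ} (a : Finset (Fin n)) : Fin n → ZMod 3 := fun i => if i ∈ a then 1 else 0

lemma ind3_inj {n : ℕ} {a b : Finset (Fin n)} (h : ind3 a = ind3 b) : a = b := by
  ext i
  have := congrFun h i
  simp only [ind3] at this
  by_cases h1 : i ∈ a <;> by_cases h2 : i ∈ b <;> simp_all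

/-- The Odlyzko bound. -/
lemma odlyzko_s19 {n k : ℕ} (v : Fin k → (Fin n → ZMod 3)) :
    haveI := Classical.decPred fun a : Finset (Fin n) => ind3 a ∈ Submodule.span (ZMod 3) (Set.range v)
    ((Finset.univ : Finset (Finset (Fin n))).filter
      (fun a => ind3 a ∈ Submodule.span (ZMod 3) (Set.range v))).card ≤ 2 ^ k := by
  classical
  have : Fact (Nat.Prime 3) := ⟨Nat.prime_three⟩
  set W := Submodule.span (ZMod 3) (Set.range v) with hW
  let φ : Fin n → Module.Dual (ZMod 3) W := fun i => (LinearMap.proj i).domRestrict W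
  obtain ⟨b, hbt, hspan, hli⟩ := exists_linearIndependent (ZMod 3) (Set.range φ)
  have hfin : b.Finite := (Set.finite_range φ).subset hbt
  haveI := hfin.fintype
  have hWk : Module.finrank (ZMod 3) W ≤ k := by
    have := finrank_range_le_card (R := ZMod 3) v
    simpa [Set.finrank] using this
  have hcard : Fintype.card b ≤ k := by
    have h1 := hli.fintype_card_le_finrank
    rw [Subspace.dual_finrank_eq] at h1
    exact h1.trans hWk
  have hch : ∀ x : b, ∃ i, φ i = x.1 := fun x => hbt x.2
  choose g hg using hch
  have hinj : ∀ x y : W, (∀ j : b, φ (g j) x = φ (g j) y) → x = y := by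
    intro x y hxy
    have h2 : ∀ f ∈ Submodule.span (ZMod 3) b, f x = f y := by
      intro f hf
      induction hf using Submodule.span_induction with
      | mem f hf => have := hxy ⟨f, hf⟩; rwa [hg] at this
      | zero => rfl
      | add f1 f2 _ _ h1 h2 => simp [h1, h2]
      | smul c f _ h => simp [h]
    rw [hspan] at h2
    ext i
    exact h2 (φ i) (Submodule.subset_span ⟨i, rfl⟩)
  calc _ ≤ (Finset.univ : Finset (b → Bool)).card := by
        refine Finset.card_le_card_of_injOn (fun a j => decide (g j ∈ a)) (fun _ _ => by simp) ?_
        intro a ha a' ha' heq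
        simp only [Finset.coe_filter, Finset.mem_univ, true_and, Set.mem_ofPred_eq] at ha ha'
        apply ind3_inj
        have := hinj ⟨ind3 a, ha⟩ ⟨ind3 a', ha'⟩ ?_
        · exact congrArg Subtype.val this
        · intro j
          have h3 := congrFun heq j
          simp only [decide_eq_decide] at h3
          simp [φ, ind3, h3]
    _ = 2 ^ Fintype.card b := by simp
    _ ≤ 2 ^ k := Nat.pow_le_pow_right (by norm_num) hcard

open Classical in
/-- Linearly independent (mod 3) sequences of rows from `R`. -/
noncomputable def liSeq {n : ℕ} (R : Finset (Finset (Fin n))) (k : ℕ) :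
    Finset (Fin k → Finset (Fin n)) :=
  Finset.univ.filter (fun ρ => (∀ j, ρ j ∈ R) ∧ LinearIndependent (ZMod 3) (fun j => ind3 (ρ j)))

lemma liSeq_succ {n : ℕ} (R : Finset (Finset (Fin n))) (k : ℕ) :
    (liSeq R k).card * (R.card - 2 ^ k) ≤ (liSeq R (k + 1)).card := by
  classical
  have : Fact (Nat.Prime 3) := ⟨Nat.prime_three⟩
  let E : (Fin k → Finset (Fin n)) → Finset (Finset (Fin n)) := fun ρ =>
    R.filter (fun a => ind3 a ∉ Submodule.span (ZMod 3) (Set.range (fun j => ind3 (ρ j))))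
  have hE : ∀ ρ, R.card - 2 ^ k ≤ (E ρ).card := by
    intro ρ
    have h1 := odlyzko_s19 (fun j => ind3 (ρ j))
    have h2 := Finset.card_filter_add_card_filter_not (s := R)
      (fun a => ind3 a ∈ Submodule.span (ZMod 3) (Set.range (fun j => ind3 (ρ j))))
    have h3 : (R.filter (fun a => ind3 a ∈ Submodule.span (ZMod 3)
        (Set.range (fun j => ind3 (ρ j))))).card ≤ 2 ^ k := by
      refine le_trans (Finset.card_le_card ?_) h1
      intro a ha
      simp only [Finset.mem_filter, Finset.mem_univ, true_and] at ha ⊢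
      exact ha.2
    simp only [E]
    omega
  calc (liSeq R k).card * (R.card - 2 ^ k) ≤ ((liSeq R k).sigma E).card := by
        rw [Finset.card_sigma, ← smul_eq_mul, ← Finset.sum_const]
        exact Finset.sum_le_sum (fun ρ _ => hE ρ)
    _ ≤ _ := by
        refine Finset.card_le_card_of_injOn
          (fun x => (Fin.cons x.2 x.1 : Fin (k + 1) → Finset (Fin n))) ?_ ?_
        · rintro ⟨ρ, a⟩ hx
          simp only [Finset.coe_sigma, Set.mem_sigma_iff, Finset.mem_coe, liSeq,
            Finset.mem_filter, Finset.mem_univ, true_and, E] at hx ⊢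
          obtain ⟨⟨h1, h2⟩, h3, h4⟩ := hx
          refine ⟨fun j => Fin.cases h3 h1 j, ?_⟩
          have : (fun j => ind3 ((Fin.cons a ρ : Fin (k + 1) → Finset (Fin n)) j))
              = (Fin.cons (ind3 a) (fun j => ind3 (ρ j)) : Fin (k + 1) → (Fin n → ZMod 3)) := by
            funext j
            refine Fin.cases ?_ (fun j => ?_) j <;> simp
          rw [this, linearIndependent_finCons]
          exact ⟨h2, h4⟩
        · rintro ⟨ρ, a⟩ _ ⟨ρ', a'⟩ _ heq
          have := Fin.cons_injective2 heq
          obtain ⟨rfl, rfl⟩ := this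
          rfl

lemma liSeq_zero {n : ℕ} (R : Finset (Finset (Fin n))) : (liSeq R 0).card = 1 := by
  classical
  have : liSeq R 0 = Finset.univ := by
    ext ρ
    simp [liSeq]
  rw [this]; simp

/-- Equidistribution modulo 3. -/
lemma equi {n : ℕ} (c : Fin n → ZMod 3) (hc : ∀ i, c i ≠ 0) (s : Finset (Fin n)) :
    ∀ r r' : ZMod 3, (s.powerset.filter (fun a => ∑ i ∈ a, c i = r)).card ≤
      (s.powerset.filter (fun a => ∑ i ∈ a, c i = r')).card + 1 := by
  induction s using Finset.induction_on with
  | empty =>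
    intro r r'
    refine le_trans (Finset.card_filter_le _ _) ?_
    simp
  | insert i s hi ih =>
    have hstep : ∀ r : ZMod 3, ((insert i s).powerset.filter (fun a => ∑ i ∈ a, c i = r)).card =
        (s.powerset.filter (fun a => ∑ i ∈ a, c i = r)).card +
        (s.powerset.filter (fun a => ∑ i ∈ a, c i = r - c i)).card := by
      intro r
      rw [Finset.powerset_insert, Finset.filter_union, Finset.card_union_of_disjoint]
      · congr 1
        rw [Finset.filter_image, Finset.card_image_of_injOn]
        · congr 1
          apply Finset.filter_congr
          intro a ha
          have : i ∉ a := fun h => hi (Finset.mem_powerset.1 ha h)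
          rw [Finset.sum_insert this, eq_sub_iff_add_eq, add_comm]
        · intro a ha b hb hab
          simp only [Finset.coe_filter, Finset.mem_powerset, Set.mem_ofPred_eq] at ha hb
          have h1 : i ∉ a := fun h => hi (ha.1 h)
          have h2 : i ∉ b := fun h => hi (hb.1 h)
          have h3 := congrArg (fun t => Finset.erase t i) hab
          simpa [h1, h2] using h3
      · rw [Finset.disjoint_left]
        intro a ha hb
        simp only [Finset.mem_filter, Finset.mem_powerset, Finset.mem_image] at ha hb
        obtain ⟨⟨b, _, rfl⟩, _⟩ := hb
        exact hi (ha.1 (Finset.mem_insert_self i b))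
    intro r r'
    rw [hstep, hstep]
    have h1 : ∀ (x r r' : ZMod 3), x ≠ 0 → r = r' ∨ r = r' - x ∨ r - x = r' := by decide
    have h0 := ih r r'
    rcases h1 (c i) r r' (hc i) with h | h | h
    · subst h; omega
    · have := ih (r - c i) r'
      rw [← h]; omega
    · have := ih r (r' - c i)
      rw [h]; omega

lemma card_R {n : ℕ} (c : Fin n → ZMod 3) (hc : ∀ i, c i ≠ 0) :
    2 ^ n ≤ 3 * ((Finset.univ : Finset (Finset (Fin n))).filter
      (fun a => ∑ i ∈ a, c i = 0)).card + 2 := by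
  have h := equi c hc Finset.univ
  rw [Finset.powerset_univ] at h
  have h1 := Finset.card_eq_sum_card_fiberwise (s := (Finset.univ : Finset (Finset (Fin n))))
    (t := (Finset.univ : Finset (ZMod 3))) (f := fun a => ∑ i ∈ a, c i) (by simp [Set.MapsTo])
  have h2 : (Finset.univ : Finset (ZMod 3)) = {0, 1, 2} := by decide
  rw [h2, Finset.sum_insert (by decide), Finset.sum_insert (by decide), Finset.sum_singleton] at h1
  simp only [Finset.card_univ, Fintype.card_finset, Fintype.card_fin] at h1
  have h3 := h 1 0
  have h4 := h 2 0
  omega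

/-- The rows are independent modulo 3 and orthogonal to a nowhere-zero vector. -/
def GoodRows {d : ℕ} (ρ : Fin d → Finset (Fin (d + 1))) (c : Fin (d + 1) → ZMod 3) : Prop :=
  (∀ i, c i ≠ 0) ∧ (∀ r, ∑ j ∈ ρ r, c j = 0) ∧
    LinearIndependent (ZMod 3) (fun r => ind3 (ρ r))

/-- The incidence matrix augmented by a unit row. -/
def augMat (K : Type) [CommRing K] {d : ℕ} (ρ : Fin d → Finset (Fin (d + 1))) (i : Fin (d + 1)) :
    Matrix (Fin (d + 1)) (Fin (d + 1)) K :=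
  Matrix.of (Fin.cons (fun j => if j = i then 1 else 0) (fun r j => if j ∈ ρ r then 1 else 0))

lemma augMat_det (K : Type) [CommRing K] {d : ℕ} (ρ : Fin d → Finset (Fin (d + 1)))
    (i : Fin (d + 1)) : (augMat K ρ i).det = (((augMat ℤ ρ i).det : ℤ) : K) := by
  have h := RingHom.map_det (Int.castRingHom K) (augMat ℤ ρ i)
  rw [eq_intCast] at h
  rw [h]
  congr 1
  ext a j
  refine Fin.cases ?_ (fun r => ?_) a
  · simp [augMat]
  · simp [augMat]

lemma augMat_det3 {d : ℕ} {ρ : Fin d → Finset (Fin (d + 1))} {c : Fin (d + 1) → ZMod 3}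
    (h : GoodRows ρ c) (i : Fin (d + 1)) : (augMat (ZMod 3) ρ i).det ≠ 0 := by
  have : Fact (Nat.Prime 3) := ⟨Nat.prime_three⟩
  have h1 : LinearIndependent (ZMod 3) (augMat (ZMod 3) ρ i).row := by
    have e : (augMat (ZMod 3) ρ i).row
        = (Fin.cons (fun j => if j = i then 1 else 0) (fun r => ind3 (ρ r)) :
          Fin (d + 1) → (Fin (d + 1) → ZMod 3)) := rfl
    rw [e, linearIndependent_finCons]
    refine ⟨h.2.2, fun hmem => ?_⟩
    have h2 : ∀ x ∈ Submodule.span (ZMod 3) (Set.range (fun r => ind3 (ρ r))),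
        ∑ j, x j * c j = 0 := by
      intro x hx
      induction hx using Submodule.span_induction with
      | mem x hx =>
        obtain ⟨r, rfl⟩ := hx
        simpa [ind3] using h.2.1 r
      | zero => simp
      | add x y _ _ hx hy => simp [add_mul, Finset.sum_add_distrib, hx, hy]
      | smul t x _ hx => simp [mul_assoc, ← Finset.mul_sum, hx]
    have h3 := h2 _ hmem
    simp at h3
    exact h.1 i h3
  rw [Matrix.linearIndependent_rows_iff_isUnit, Matrix.isUnit_iff_isUnit_det] at h1
  exact h1.ne_zero

lemma ker_zero {K : Type} [Field K] {d : ℕ} {ρ : Fin d → Finset (Fin (d + 1))} {i : Fin (d + 1)}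
    (hdet : (augMat K ρ i).det ≠ 0) (y : Fin (d + 1) → K)
    (hy : ∀ r, ∑ j ∈ ρ r, y j = 0) (hi : y i = 0) : y = 0 := by
  by_contra hne
  apply hdet
  rw [← Matrix.exists_mulVec_eq_zero_iff]
  refine ⟨y, hne, ?_⟩
  ext a
  refine Fin.cases ?_ (fun r => ?_) a
  · simpa [augMat, Matrix.mulVec, dotProduct] using hi
  · simpa [augMat, Matrix.mulVec, dotProduct] using hy r

lemma ker_real {d : ℕ} {ρ : Fin d → Finset (Fin (d + 1))} {c : Fin (d + 1) → ZMod 3}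
    (h : GoodRows ρ c) (y : Fin (d + 1) → ℝ)
    (hy : ∀ r, ∑ j ∈ ρ r, y j = 0) (i : Fin (d + 1)) (hi : y i = 0) : y = 0 := by
  refine ker_zero ?_ y hy hi
  have h1 := augMat_det3 h i
  rw [augMat_det] at h1 ⊢
  intro h2
  apply h1
  have h3 : (augMat ℤ ρ i).det = 0 := by exact_mod_cast h2
  rw [h3]; simp

lemma good_unique {d : ℕ} {ρ : Fin d → Finset (Fin (d + 1))} {c c' : Fin (d + 1) → ZMod 3}
    (h : GoodRows ρ c) (h' : GoodRows ρ c') (h0 : c 0 = c' 0) : c = c' := by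
  have : Fact (Nat.Prime 3) := ⟨Nat.prime_three⟩
  have := ker_zero (augMat_det3 h 0) (c - c')
    (fun r => by simp [Finset.sum_sub_distrib, h.2.1 r, h'.2.1 r]) (by simp [h0])
  exact sub_eq_zero.1 this

/-- Columns of the incidence matrix. -/
def cols {d : ℕ} (ρ : Fin d → Finset (Fin (d + 1))) (i : Fin (d + 1)) : Finset (Fin d) :=
  Finset.univ.filter (fun r => i ∈ ρ r)

lemma build {d : ℕ} (hd : 2 ≤ d) {ρ : Fin d → Finset (Fin (d + 1))} {c : Fin (d + 1) → ZMod 3}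
    (h : GoodRows ρ c) : Function.Injective (cols ρ) ∧
    ∃ B : Finset (Finset (Fin (d + 1))), IsMinimalBalancedCollection B ∧ B.card = d + 1 ∧
      B.image tr = Finset.univ.image (cols ρ) := by
  classical
  have hcol : Function.Injective (cols ρ) := by
    intro i j hij
    by_contra hne
    have h1 : ∀ r, i ∈ ρ r ↔ j ∈ ρ r := by
      intro r
      have := congrArg (fun U => r ∈ U) hij
      simpa [cols] using this
    obtain ⟨k, hk⟩ : ∃ k : Fin (d + 1), k ∉ ({i, j} : Finset (Fin (d + 1))) := by
      by_contra hcon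
      push Not at hcon
      have h2 : (Finset.univ : Finset (Fin (d + 1))) ⊆ {i, j} := fun x _ => hcon x
      have h3 := (Finset.card_le_card h2).trans Finset.card_le_two
      simp at h3
      omega
    simp only [Finset.mem_insert, Finset.mem_singleton, not_or] at hk
    have h4 := ker_real h (fun x => (if x = i then 1 else 0) - (if x = j then 1 else 0))
      (fun r => by simp [Finset.sum_sub_distrib, h1 r]) k (by simp [hk.1, hk.2])
    have h5 := congrFun h4 i
    simp [hne] at h5
  refine ⟨hcol, ?_⟩
  have hcolne : ∀ i, cols ρ i ≠ ∅ := by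
    intro i hi
    have h1 : ∀ r, i ∉ ρ r := by
      intro r hr
      have : r ∈ cols ρ i := by simp [cols, hr]
      rw [hi] at this
      simp at this
    have : Nontrivial (Fin (d + 1)) := Fin.nontrivial_iff_two_le.2 (by omega)
    obtain ⟨k, hk⟩ := exists_ne i
    have h4 := ker_real h (fun x => if x = i then 1 else 0)
      (fun r => by simp [h1 r]) k (by simp [hk])
    have h5 := congrFun h4 i
    simp at h5
  -- kernel vector
  obtain ⟨l, hl0, hl⟩ : ∃ l : Fin (d + 1) → ℝ, l ≠ 0 ∧ ∀ r, ∑ j ∈ ρ r, l j = 0 := by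
    let f : (Fin (d + 1) → ℝ) →ₗ[ℝ] (Fin d → ℝ) :=
      LinearMap.pi (fun r => ∑ j ∈ ρ r, LinearMap.proj j)
    have hker : LinearMap.ker f ≠ ⊥ := LinearMap.ker_ne_bot_of_finrank_lt (by simp)
    obtain ⟨l, hlm, hl0⟩ := (Submodule.ne_bot_iff _).1 hker
    refine ⟨l, hl0, fun r => ?_⟩
    have := congrFun (LinearMap.mem_ker.1 hlm) r
    simpa [f] using this
  have hlne : ∀ i, l i ≠ 0 := fun i hi => hl0 (ker_real h l hl i hi)
  let S : Fin (d + 1) → Finset (Fin (d + 1)) := fun i =>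
    if 0 < l i then up (cols ρ i) else (up (cols ρ i))ᶜ
  have htrS : ∀ i, tr (S i) = cols ρ i := by
    intro i
    simp only [S]
    split_ifs
    · exact tr_up _
    · rw [tr_compl, tr_up]
  have hSinj : Function.Injective S := by
    intro i j hij
    apply hcol
    rw [← htrS, ← htrS, hij]
  have hSne : ∀ i, S i ≠ ∅ := by
    intro i hi
    have h1 := htrS i
    rw [hi] at h1
    apply hcolne i
    rw [← h1]
    simp [tr]
  -- signed sums
  have hsum : ∀ (y : Fin (d + 1) → ℝ) (x : Fin (d + 1)),
      ∑ i, (if x ∈ S i then y i else 0)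
        = (∑ i, if x ∈ up (cols ρ i) then (if 0 < l i then y i else - y i) else 0)
          + ∑ i, if 0 < l i then 0 else y i := by
    intro y x
    rw [← Finset.sum_add_distrib]
    apply Finset.sum_congr rfl
    intro i _
    by_cases h1 : 0 < l i <;> by_cases h2 : x ∈ up (cols ρ i) <;> simp [S, h1, h2]
  have hsumr : ∀ (y : Fin (d + 1) → ℝ) (r : Fin d),
      (∑ i, if r.castSucc ∈ up (cols ρ i) then y i else 0) = ∑ i ∈ ρ r, y i := by
    intro y r
    simp [mem_up, cols]
  have hsuml : ∀ (y : Fin (d + 1) → ℝ),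
      (∑ i, if Fin.last d ∈ up (cols ρ i) then y i else 0) = 0 := by
    intro y
    simp [last_mem_up]
  have habs : (fun i => if 0 < l i then |l i| else -|l i|) = l := by
    funext i
    split_ifs with h1
    · exact abs_of_pos h1
    · rw [abs_of_nonpos (not_lt.1 h1), neg_neg]
  have himg : ∀ (f : Finset (Fin (d + 1)) → ℝ) (x : Fin (d + 1)),
      ∑ T ∈ (Finset.univ.image S).filter (fun T => x ∈ T), f T
        = ∑ i, if x ∈ S i then f (S i) else 0 := by
    intro f x
    rw [Finset.sum_filter, Finset.sum_image (fun i _ j _ hij => hSinj hij)]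
  refine ⟨Finset.univ.image S, ⟨?_, ?_⟩, ?_, ?_⟩
  · refine balanced_of_const _ (Finset.univ_nonempty.image S) ?_
      (Function.extend S (fun i => |l i|) 0) ?_ (∑ i, if 0 < l i then 0 else |l i|) ?_
    · intro T hT
      obtain ⟨i, _, rfl⟩ := Finset.mem_image.1 hT
      exact hSne i
    · intro T hT
      obtain ⟨i, _, rfl⟩ := Finset.mem_image.1 hT
      rw [hSinj.extend_apply]
      exact abs_pos.2 (hlne i)
    · intro x
      rw [himg]
      simp only [hSinj.extend_apply]
      rw [hsum (fun i => |l i|) x]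
      have e : (∑ i, if x ∈ up (cols ρ i) then (if 0 < l i then |l i| else - |l i|) else 0) = 0 := by
        have e1 : ∀ i, (if 0 < l i then |l i| else -|l i|) = l i := fun i => congrFun habs i
        simp only [e1]
        refine Fin.lastCases ?_ (fun r => ?_) x
        · exact hsuml l
        · rw [hsumr, hl]
      rw [e, zero_add]
  · intro B' hB' hbal
    have hne' := balanced_nonempty (Nat.succ_pos d) hbal
    obtain ⟨_, mu, hmu1, hmu2⟩ := hbal
    obtain ⟨hsub, T0, hT0, hT0'⟩ := Finset.ssubset_iff_subset_ne.1 hB' |>.1 |> fun hs =>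
      (⟨hs, Finset.exists_of_ssubset hB'⟩ : B' ⊆ _ ∧ ∃ T ∈ Finset.univ.image S, T ∉ B')
    obtain ⟨i0, _, rfl⟩ := Finset.mem_image.1 hT0
    let y : Fin (d + 1) → ℝ := fun i => if S i ∈ B' then mu (S i) else 0
    have hy : ∀ x, ∑ i, (if x ∈ S i then y i else 0) = 1 := by
      intro x
      rw [← hmu2 x]
      have e : B'.filter (fun T => x ∈ T)
          = ((Finset.univ.image S).filter (fun T => x ∈ T)).filter (fun T => T ∈ B') := by
        ext T
        simp only [Finset.mem_filter]
        constructor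
        · rintro ⟨h1, h2⟩
          exact ⟨⟨hsub h1, h2⟩, h1⟩
        · rintro ⟨⟨_, h2⟩, h1⟩
          exact ⟨h1, h2⟩
      rw [e, Finset.sum_filter, himg]
    have hlast := hy (Fin.last d)
    rw [hsum y, hsuml, zero_add] at hlast
    have hzero := ker_real h (fun i => if 0 < l i then y i else - y i) (fun r => by
      have h1 := hy r.castSucc
      rw [hsum y, hsumr, hlast] at h1
      linarith) i0 (by simp [y, hT0'])
    obtain ⟨T1, hT1⟩ := hne'
    obtain ⟨i1, _, rfl⟩ := Finset.mem_image.1 (hsub hT1)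
    have h2 := congrFun hzero i1
    have h3 := hmu1 _ hT1
    simp only [y, hT1, if_true, Pi.zero_apply] at h2
    split_ifs at h2 <;> linarith
  · rw [Finset.card_image_of_injective _ hSinj]; simp
  · rw [Finset.image_image]
    apply Finset.image_congr
    intro i _
    exact htrS i

lemma cols_inj {d : ℕ} {ρ ρ' : Fin d → Finset (Fin (d + 1))} (h : cols ρ = cols ρ') : ρ = ρ' := by
  funext r
  ext i
  have := congrArg (fun U => r ∈ U) (congrFun h i)
  simpa [cols] using this

lemma good_card_le (d : ℕ) (hd : 2 ≤ d) (G : Finset (Fin d → Finset (Fin (d + 1))))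
    (hG : ∀ ρ ∈ G, ∃ c, GoodRows ρ c) (P : Finset (Finset (Finset (Fin (d + 1)))))
    (hP : ∀ B, IsMinimalBalancedCollection B → B.card = d + 1 → B ∈ P) :
    G.card ≤ (d + 1).factorial * P.card := by
  classical
  have hex : ∀ ρ : Fin d → Finset (Fin (d + 1)), ∃ B : Finset (Finset (Fin (d + 1))), ρ ∈ G →
      IsMinimalBalancedCollection B ∧ B.card = d + 1 ∧
      B.image tr = Finset.univ.image (cols ρ) := by
    intro ρ
    by_cases hρ : ρ ∈ G
    · obtain ⟨c, hc⟩ := hG ρ hρ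
      obtain ⟨B, hB⟩ := (build hd hc).2
      exact ⟨B, fun _ => hB⟩
    · exact ⟨∅, fun h => absurd h hρ⟩
  choose f hf using hex
  refine Finset.card_le_mul_card_image_of_maps_to (f := f) (t := P) ?_ _ ?_
  · intro ρ hρ
    exact hP _ (hf ρ hρ).1 (hf ρ hρ).2.1
  · intro B _
    rcases (G.filter (fun ρ => f ρ = B)).eq_empty_or_nonempty with he | ⟨ρ0, hρ0⟩
    · rw [he]; simp
    have hBc : (B.image tr).card ≤ d + 1 := by
      obtain ⟨h1, h2⟩ := Finset.mem_filter.1 hρ0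
      have := (hf ρ0 h1).2.1
      rw [h2] at this
      exact Finset.card_image_le.trans this.le
    have hmem : ∀ ρ ∈ G.filter (fun ρ => f ρ = B), Function.Injective (cols ρ) ∧
        ∀ i, cols ρ i ∈ B.image tr := by
      intro ρ hρ
      obtain ⟨h1, h2⟩ := Finset.mem_filter.1 hρ
      obtain ⟨c, hc⟩ := hG ρ h1
      refine ⟨(build hd hc).1, fun i => ?_⟩
      rw [← h2, (hf ρ h1).2.2]
      exact Finset.mem_image_of_mem _ (Finset.mem_univ i)
    calc (G.filter (fun ρ => f ρ = B)).card
        = Fintype.card (G.filter (fun ρ => f ρ = B)) := (Fintype.card_coe _).symm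
      _ ≤ Fintype.card (Fin (d + 1) ↪ (B.image tr)) := by
          refine Fintype.card_le_of_injective (fun ρ => ⟨fun i => ⟨cols ρ.1 i, (hmem ρ.1 ρ.2).2 i⟩,
            fun i j hij => (hmem ρ.1 ρ.2).1 (congrArg Subtype.val hij)⟩) ?_
          intro ρ ρ' heq
          apply Subtype.ext
          apply cols_inj
          funext i
          have := DFunLike.congr_fun heq i
          exact congrArg Subtype.val this
      _ = (B.image tr).card.descFactorial (d + 1) := by
          rw [Fintype.card_embedding_eq, Fintype.card_coe, Fintype.card_fin]
      _ ≤ (d + 1).descFactorial (d + 1) := Nat.descFactorial_le _ hBc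
      _ = (d + 1).factorial := Nat.descFactorial_self _

lemma liSeq_lower (d a : ℕ) (hd : 5 ≤ d) (R : Finset (Finset (Fin (d + 1)))) (ha : a = R.card)
    (hR : 2 ^ (d + 1) ≤ 3 * a + 2) :
    (2 : ℝ) ^ (d * d) * (3 / 5) ^ d / 4096 ≤ ((liSeq R d).card : ℝ) := by
  have hRr : (2 : ℝ) ^ d * 2 ≤ 3 * a + 2 := by
    have : ((2 ^ (d + 1) : ℕ) : ℝ) ≤ ((3 * a + 2 : ℕ) : ℝ) := by exact_mod_cast hR
    push_cast at this
    rwa [pow_succ] at this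
  have h32 : (32 : ℝ) ≤ 2 ^ d := by
    calc (32 : ℝ) = 2 ^ 5 := by norm_num
      _ ≤ 2 ^ d := pow_le_pow_right₀ (by norm_num) hd
  have hsub : ∀ k, (a : ℝ) - 2 ^ k ≤ ((R.card - 2 ^ k : ℕ) : ℝ) := by
    intro k
    rw [← ha]
    have : a ≤ (a - 2 ^ k) + 2 ^ k := by omega
    have h2 : (a : ℝ) ≤ ((a - 2 ^ k : ℕ) : ℝ) + 2 ^ k := by exact_mod_cast this
    linarith
  have hstep : ∀ k (x : ℝ), 0 ≤ x → x ≤ (a : ℝ) - 2 ^ k →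
      ((liSeq R k).card : ℝ) * x ≤ ((liSeq R (k + 1)).card : ℝ) := by
    intro k x hx hxa
    have h1 : (((liSeq R k).card * (R.card - 2 ^ k) : ℕ) : ℝ) ≤ ((liSeq R (k + 1)).card : ℝ) := by
      exact_mod_cast liSeq_succ R k
    rw [Nat.cast_mul] at h1
    refine le_trans ?_ h1
    exact mul_le_mul_of_nonneg_left (hxa.trans (hsub k)) (Nat.cast_nonneg _)
  have hA : ∀ k, k + 4 ≤ d → (3 / 5 * (2 : ℝ) ^ d) ^ k ≤ ((liSeq R k).card : ℝ) := by
    intro k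
    induction k with
    | zero => intro _; simp [liSeq_zero]
    | succ k ih =>
      intro hk
      have h1 := ih (by omega)
      have h2 : (2 : ℝ) ^ k * 32 ≤ 2 ^ d := by
        calc (2 : ℝ) ^ k * 32 = 2 ^ (k + 5) := by rw [pow_add]; norm_num
          _ ≤ 2 ^ d := pow_le_pow_right₀ (by norm_num) (by omega)
      refine le_trans ?_ (hstep k (3 / 5 * (2 : ℝ) ^ d) (by positivity) (by linarith))
      rw [pow_succ]
      gcongr
  have hB : ∀ k, k + 1 ≤ d →
      ((liSeq R k).card : ℝ) * ((2 : ℝ) ^ d / 8) ≤ ((liSeq R (k + 1)).card : ℝ) := by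
    intro k hk
    have h2 : (2 : ℝ) ^ k * 2 ≤ 2 ^ d := by
      rw [← pow_succ]
      exact pow_le_pow_right₀ (by norm_num) hk
    exact hstep k _ (by positivity) (by linarith)
  obtain ⟨e, rfl⟩ : ∃ e, d = e + 4 := ⟨d - 4, by omega⟩
  set X : ℝ := (2 : ℝ) ^ (e + 4) with hX
  have h0 := hA e le_rfl
  have h1 := hB e (by omega)
  have h2 := hB (e + 1) (by omega)
  have h3 := hB (e + 2) (by omega)
  have h4 := hB (e + 3) (by omega)
  have hXp : 0 < X / 8 := by positivity
  have key : (3 / 5 * X) ^ e * (X / 8) * (X / 8) * (X / 8) * (X / 8) ≤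
      ((liSeq R (e + 4)).card : ℝ) := by
    refine le_trans ?_ h4
    gcongr
    refine le_trans ?_ h3
    gcongr
    refine le_trans ?_ h2
    gcongr
    refine le_trans ?_ h1
    gcongr
  refine le_trans ?_ key
  have e1 : (2 : ℝ) ^ ((e + 4) * (e + 4)) = X ^ (e + 4) := by rw [pow_mul]
  rw [e1]
  have e2 : (3 / 5 * X) ^ e * (X / 8) * (X / 8) * (X / 8) * (X / 8)
      = X ^ (e + 4) * (3 / 5) ^ e / 4096 := by
    rw [mul_pow, pow_add]; ring
  rw [e2]
  have : (3 / 5 : ℝ) ^ (e + 4) ≤ (3 / 5) ^ e :=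
    pow_le_pow_of_le_one (by norm_num) (by norm_num) (by omega)
  gcongr

lemma exists_good (d : ℕ) (hd : 5 ≤ d) : ∃ G : Finset (Fin d → Finset (Fin (d + 1))),
    (∀ ρ ∈ G, ∃ c, GoodRows ρ c) ∧ (2 : ℝ) ^ (d * d) * (6 / 5) ^ d / 4096 ≤ (G.card : ℝ) := by
  classical
  let C : (Fin d → Bool) → (Fin (d + 1) → ZMod 3) := fun σ =>
    Fin.cons 1 (fun r => if σ r then 1 else -1)
  have hC : ∀ σ i, C σ i ≠ 0 := by
    intro σ i
    refine Fin.cases ?_ (fun r => ?_) i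
    · simp only [C, Fin.cons_zero]; decide
    · simp only [C, Fin.cons_succ]
      split_ifs <;> decide
  let R : (Fin d → Bool) → Finset (Finset (Fin (d + 1))) := fun σ =>
    Finset.univ.filter (fun a => ∑ i ∈ a, C σ i = 0)
  have hgood : ∀ σ, ∀ ρ ∈ liSeq (R σ) d, GoodRows ρ (C σ) := by
    intro σ ρ hρ
    simp only [liSeq, Finset.mem_filter, Finset.mem_univ, true_and, R] at hρ
    exact ⟨hC σ, hρ.1, hρ.2⟩
  refine ⟨Finset.univ.biUnion (fun σ => liSeq (R σ) d), ?_, ?_⟩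
  · intro ρ hρ
    obtain ⟨σ, _, hσ⟩ := Finset.mem_biUnion.1 hρ
    exact ⟨C σ, hgood σ ρ hσ⟩
  · rw [Finset.card_biUnion]
    · push_cast
      calc (2 : ℝ) ^ (d * d) * (6 / 5) ^ d / 4096
          = ∑ σ : Fin d → Bool, (2 : ℝ) ^ (d * d) * (3 / 5) ^ d / 4096 := by
            rw [Finset.sum_const, Finset.card_univ]
            simp only [Fintype.card_fun, Fintype.card_bool, Fintype.card_fin, nsmul_eq_mul]
            push_cast
            rw [show (6 / 5 : ℝ) = 2 * (3 / 5) by norm_num, mul_pow]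
            ring
        _ ≤ _ := Finset.sum_le_sum (fun σ _ =>
            liSeq_lower d _ hd (R σ) rfl (card_R (C σ) (hC σ)))
    · intro σ _ τ _ hne
      refine Finset.disjoint_left.2 ?_
      intro ρ h1 h2
      apply hne
      have h3 := good_unique (hgood σ ρ h1) (hgood τ ρ h2) (by simp [C])
      funext r
      have h4 := congrFun h3 r.succ
      simp only [C, Fin.cons_succ] at h4
      have h5 : (1 : ZMod 3) ≠ -1 := by decide
      by_cases ha : σ r = true <;> by_cases hb : τ r = true <;> simp_all

lemma phi_bound (d : ℕ) (hd : 5 ≤ d) :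
    0 ≤ ((Btot (d + 1) : ℝ) - (Bnn (d + 1) : ℝ)) / (Btot (d + 1) : ℝ) ∧
    ((Btot (d + 1) : ℝ) - (Bnn (d + 1) : ℝ)) / (Btot (d + 1) : ℝ)
      ≤ 8192 * (((d + 1 : ℕ) : ℝ) ^ 2 * (5 / 6) ^ d) := by
  classical
  let A : Finset (Finset (Finset (Fin (d + 1)))) :=
    Finset.univ.filter (fun B => IsMinimalBalancedCollection B ∧ B ≠ {Finset.univ})
  have hA : Btot (d + 1) = A.card := by
    rw [Btot, Nat.card_eq_fintype_card, Fintype.card_subtype]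
  have hN : Bnn (d + 1) = (A.filter (fun B => B.card = d + 1)).card := by
    rw [Bnn, Nat.card_eq_fintype_card, Fintype.card_subtype, Finset.filter_filter]
    congr 1
    ext B
    simp [and_assoc]
  have hsplit := Finset.card_filter_add_card_filter_not (s := A) (fun B => B.card = d + 1)
  set s := (A.filter (fun B => ¬ B.card = d + 1)).card with hs
  have hsm : s * d.factorial ≤ 2 * ((d + 1) * 2 ^ (d * d)) := by
    apply small_card
    intro B hB
    simp only [A, Finset.mem_filter, Finset.mem_univ, true_and] at hB
    have := min_card_le (Nat.succ_pos d) hB.1.1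
    exact ⟨hB.1.1, by omega⟩
  obtain ⟨G, hG, hGc⟩ := exists_good d hd
  have hGle := good_card_le d (by omega) G hG (A.filter (fun B => B.card = d + 1)) (by
    intro B hB hBc
    simp only [A, Finset.mem_filter, Finset.mem_univ, true_and]
    refine ⟨⟨hB, ?_⟩, hBc⟩
    rintro rfl
    simp at hBc
    omega)
  rw [← hN] at hGle hsplit
  rw [← hA] at hsplit
  have hsr : (Btot (d + 1) : ℝ) = Bnn (d + 1) + s := by exact_mod_cast hsplit.symm
  have e1 : (Btot (d + 1) : ℝ) - (Bnn (d + 1) : ℝ) = s := by rw [hsr]; ring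
  rw [e1]
  refine ⟨by positivity, ?_⟩
  have hGr : (G.card : ℝ) ≤ ((d + 1) * d.factorial) * Bnn (d + 1) := by
    have : (G.card : ℝ) ≤ (((d + 1).factorial * Bnn (d + 1) : ℕ) : ℝ) := by exact_mod_cast hGle
    rw [Nat.factorial_succ] at this
    push_cast at this
    exact this
  have hsmr : (s : ℝ) * d.factorial ≤ 2 * ((d + 1) * 2 ^ (d * d)) := by exact_mod_cast hsm
  have hf : (0 : ℝ) < d.factorial := by exact_mod_cast Nat.factorial_pos d
  have hlow := hGc.trans hGr
  have hbpos : (0 : ℝ) < Bnn (d + 1) := by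
    have h1 : (0 : ℝ) < (2 : ℝ) ^ (d * d) * (6 / 5) ^ d / 4096 := by positivity
    exact pos_of_mul_pos_right (h1.trans_le hlow) (by positivity)
  have hs0 : (0 : ℝ) ≤ s := by positivity
  rw [div_le_iff₀ (by linarith)]
  refine le_trans ?_ (mul_le_mul_of_nonneg_left (by linarith : (Bnn (d + 1) : ℝ) ≤ Btot (d + 1))
    (by positivity))
  have h56 : (6 / 5 : ℝ) ^ d * (5 / 6) ^ d = 1 := by
    rw [← mul_pow]; norm_num
  have h2 : (2 : ℝ) ^ (d * d) ≤
      4096 * (5 / 6) ^ d * (((d + 1) * d.factorial) * Bnn (d + 1)) := by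
    have h3 := mul_le_mul_of_nonneg_left hlow (by positivity : (0 : ℝ) ≤ 4096 * (5 / 6) ^ d)
    calc (2 : ℝ) ^ (d * d) = 2 ^ (d * d) * ((6 / 5 : ℝ) ^ d * (5 / 6) ^ d) := by rw [h56, mul_one]
      _ = 4096 * (5 / 6) ^ d * ((2 : ℝ) ^ (d * d) * (6 / 5) ^ d / 4096) := by ring
      _ ≤ _ := h3
  refine le_of_mul_le_mul_right ?_ hf
  calc (s : ℝ) * d.factorial ≤ 2 * ((d + 1) * 2 ^ (d * d)) := hsmr
    _ ≤ 2 * ((d + 1) * (4096 * (5 / 6) ^ d * (((d + 1) * d.factorial) * Bnn (d + 1)))) := by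
      gcongr
    _ = _ := by push_cast; ring

/-- Corollary (Corollary `cor2`): the proportion
`φ_n = (B_n − B_n^n)/B_n` of minimal balanced collections of cardinality strictly
less than `n` (equivalently, of facets of the polyhedron of balanced games
containing games with a non-singleton core) tends to `0` as `n → ∞`. -/
theorem phi_tendsto_zero :
    Filter.Tendsto
      (fun n : ℕ => ((Btot n : ℝ) - (Bnn n : ℝ)) / (Btot n : ℝ))
      Filter.atTop (nhds 0) := by
  rw [← Filter.tendsto_add_atTop_iff_nat 1]
  have hlim : Filter.Tendsto (fun d : ℕ => 8192 * (((d + 1 : ℕ) : ℝ) ^ 2 * (5 / 6) ^ d))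
      Filter.atTop (nhds 0) := by
    have h1 := tendsto_pow_const_mul_const_pow_of_abs_lt_one 2
      (r := (5 / 6 : ℝ)) (by rw [abs_of_pos] <;> norm_num)
    have h2 := ((Filter.tendsto_add_atTop_iff_nat 1).2 h1).const_mul (8192 * (6 / 5))
    rw [mul_zero] at h2
    refine h2.congr (fun d => ?_)
    rw [pow_succ (5 / 6 : ℝ) d]
    ring
  refine tendsto_of_tendsto_of_tendsto_of_le_of_le' tendsto_const_nhds hlim ?_ ?_
  · filter_upwards [Filter.eventually_ge_atTop 5] with d hd using (phi_bound d hd).1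
  · filter_upwards [Filter.eventually_ge_atTop 5] with d hd using (phi_bound d hd).2
end
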